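/- Suppose there exist finite-alphabet auxiliary random variables (U0,U1,U2) and a conditional pmf p(u0,u1,u2,x|s1,s2) such that, under the joint distribution p(s1,s2)·p(u0,u1,u2,x|s1,s2)·p(y1,y2|x), the following five strict inequalities hold: H(S1) < I(U0,U1,S1;Y1) − I(U0,U1;S2|S1); H(S2) < I(U0,U2,S2;Y2) − I(U0,U2;S1|S2); H(S1,S2) < I(U0,U1,S1;Y1) + I(U2,S2;Y2|U0) − I(U1,S1;U2,S2|U0); H(S1,S2) < I(U1,S1;Y1|U0) + I(U0,U2,S2;Y2) − I(U1,S1;U2,S2|U0); H(S1,S2) < I(U0,U1,S1;Y1) + I(U0,U2,S2;Y2) − I(U1,S1;U2,S2|U0) − I(S1,S2;U0). Then the sources (S1,S2) can be reliably transmitted over the DM-BC p(y1,y2|x): there exists a sequence of encoders f_n and decoders g1_n, g2_n whose average probability of error tends to 0 as n → ∞. -/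

import Mathlib

/-!
The theorem is proved by random coding with a superposition code, analysed without types or strong
typicality.

*Code.* Each source block `s1`, `s2` is hashed uniformly at random (rates `ρ1`, `ρ2`). Cloud
codewords of law `p(u0)` are indexed by a pair of hash values and a free index of rate `R0`. On top
of each cloud codeword and for each source block there are satellite codewords of law `p(u1|s1,u0)`
with an index of rate `R1`, and of law `p(u2|s2,u0)` with an index of rate `R2`. The sender may use
any codeword triple attached to its source blocks whose cloud index carries the two hash values.
A receiver looks for a source block for which some cloud codeword labelled by its hash and some
satellite codeword pass a likelihood test with the received word (`decode`, `recvTest`).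

*Encoding.* The encoder sends the channel input with the smallest conditional error probability.
This is at most the error probability of an input drawn from the available codewords in proportion
to the density `dens` of the target law `p(u0,u1,u2,x|s1,s2)` with respect to the law of the random
code (`mul_avgCode_le`). A second moment computation shows that the average of this density over the
available codewords concentrates around its mean (`Ex_avgCode_sq`), and that mean is close to one.
Hence the codewords behave as if they had the target law (`select_le`), as soon as `R0`, `R0 + R1`,
`R0 + R2` and `R0 + R1 + R2` exceed the exponents `cov0`, `cov1`, `cov1` and `cov3`.

*Decoding.* By the union bound `decode_err`, a wrong source block with the true cloud codeword must
collide with the true hash, which is unlikely if `R1 - ρ1` is below the exponent `dec`; another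
cloud codeword passes with small probability if `R0 + R1 + ρ2` is below `dec'`; similarly for the
second receiver. The theorem `oneShot` collects all these terms for arbitrary finite sets.

*Rates.* Rewritten through the exponents (`MKfive_exponents`), the five inequalities and the
nonnegativity of conditional mutual information are what Fourier-Motzkin elimination requires for
the existence of `R0, R1, R2, ρ1, ρ2` (`exists_rates`). The probability that a test fails under the
target law tends to zero by the weak law of large numbers (`lln`, `send_typical`, `recv_typical`),
and the remaining terms of `oneShot` decay exponentially (`code_terms_le`), which gives
`reliable_of_MKfive`.
-/


open Real Filter

attribute [local instance] Classical.propDecidable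

noncomputable section

namespace CSBC

/-- A probability mass function on a finite type. -/
def IsPMF {Ω : Type*} [Fintype Ω] (p : Ω → ℝ) : Prop :=
  (∀ ω, 0 ≤ p ω) ∧ ∑ ω, p ω = 1

/-- Distribution (pushforward pmf) of a random variable `X` under pmf `p`. -/
def dist {Ω A : Type*} [Fintype Ω] [Fintype A] (p : Ω → ℝ) (X : Ω → A) : A → ℝ :=
  fun a => ∑ ω, if X ω = a then p ω else 0

/-- Shannon entropy of the random variable `X` under the pmf `p`. -/
def H {Ω A : Type*} [Fintype Ω] [Fintype A] (p : Ω → ℝ) (X : Ω → A) : ℝ :=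
  -∑ a, dist p X a * Real.log (dist p X a)

/-- Mutual information `I(X;Y)` under the pmf `p`. -/
def I2 {Ω A B : Type*} [Fintype Ω] [Fintype A] [Fintype B]
    (p : Ω → ℝ) (X : Ω → A) (Y : Ω → B) : ℝ :=
  H p X + H p Y - H p (fun ω => (X ω, Y ω))

/-- Conditional mutual information `I(X;Y|Z)` under the pmf `p`. -/
def CI {Ω A B C : Type*} [Fintype Ω] [Fintype A] [Fintype B] [Fintype C]
    (p : Ω → ℝ) (X : Ω → A) (Y : Ω → B) (Z : Ω → C) : ℝ :=
  H p (fun ω => (X ω, Z ω)) + H p (fun ω => (Y ω, Z ω))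
    - H p (fun ω => (X ω, Y ω, Z ω)) - H p Z

end CSBC

open CSBC
namespace CSBC

/-- The five inequalities of Theorem 2 (Minero–Kim form) for sources `S1, S2`,
auxiliary triple `V0, V1, V2` and channel outputs `Y1, Y2`. -/
def MKfive {Ω A1 A2 B0 B1 B2 C1 C2 : Type*} [Fintype Ω] [Fintype A1] [Fintype A2]
    [Fintype B0] [Fintype B1] [Fintype B2] [Fintype C1] [Fintype C2]
    (p : Ω → ℝ) (S1 : Ω → A1) (S2 : Ω → A2) (V0 : Ω → B0) (V1 : Ω → B1) (V2 : Ω → B2)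
    (Y1 : Ω → C1) (Y2 : Ω → C2) : Prop :=
  H p S1 < I2 p (fun ω => (V0 ω, V1 ω, S1 ω)) Y1
      - CI p (fun ω => (V0 ω, V1 ω)) S2 S1 ∧
  H p S2 < I2 p (fun ω => (V0 ω, V2 ω, S2 ω)) Y2
      - CI p (fun ω => (V0 ω, V2 ω)) S1 S2 ∧
  H p (fun ω => (S1 ω, S2 ω)) < I2 p (fun ω => (V0 ω, V1 ω, S1 ω)) Y1
      + CI p (fun ω => (V2 ω, S2 ω)) Y2 V0
      - CI p (fun ω => (V1 ω, S1 ω)) (fun ω => (V2 ω, S2 ω)) V0 ∧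
  H p (fun ω => (S1 ω, S2 ω)) < CI p (fun ω => (V1 ω, S1 ω)) Y1 V0
      + I2 p (fun ω => (V0 ω, V2 ω, S2 ω)) Y2
      - CI p (fun ω => (V1 ω, S1 ω)) (fun ω => (V2 ω, S2 ω)) V0 ∧
  H p (fun ω => (S1 ω, S2 ω)) < I2 p (fun ω => (V0 ω, V1 ω, S1 ω)) Y1
      + I2 p (fun ω => (V0 ω, V2 ω, S2 ω)) Y2
      - CI p (fun ω => (V1 ω, S1 ω)) (fun ω => (V2 ω, S2 ω)) V0
      - I2 p (fun ω => (S1 ω, S2 ω)) V0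

end CSBC
namespace CSBC

/-- Joint law `p(s1,s2) · p(u0,u1,u2,x|s1,s2) · p(y1,y2|x)` on the product space. -/
def jointLaw {σ1 σ2 𝒰0 𝒰1 𝒰2 𝒳 𝒴1 𝒴2 : Type*}
    (q : σ1 × σ2 → ℝ) (r : σ1 × σ2 → 𝒰0 × 𝒰1 × 𝒰2 × 𝒳 → ℝ) (W : 𝒳 → 𝒴1 × 𝒴2 → ℝ) :
    σ1 × σ2 × 𝒰0 × 𝒰1 × 𝒰2 × 𝒳 × 𝒴1 × 𝒴2 → ℝ :=
  fun ω => q (ω.1, ω.2.1) * r (ω.1, ω.2.1) (ω.2.2.1, ω.2.2.2.1, ω.2.2.2.2.1, ω.2.2.2.2.2.1)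
    * W ω.2.2.2.2.2.1 (ω.2.2.2.2.2.2.1, ω.2.2.2.2.2.2.2)

/-- Average probability of error of a length-`n` code `(enc, dec1, dec2)` for transmitting
the i.i.d. source with per-letter pmf `q` over the DM-BC with per-letter law `W`. -/
def errProb {σ1 σ2 𝒳 𝒴1 𝒴2 : Type*} [Fintype σ1] [Fintype σ2] [Fintype 𝒳]
    [Fintype 𝒴1] [Fintype 𝒴2]
    (q : σ1 × σ2 → ℝ) (W : 𝒳 → 𝒴1 × 𝒴2 → ℝ) (n : ℕ)
    (enc : (Fin n → σ1 × σ2) → Fin n → 𝒳)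
    (dec1 : (Fin n → 𝒴1) → Fin n → σ1)
    (dec2 : (Fin n → 𝒴2) → Fin n → σ2) : ℝ :=
  ∑ s : Fin n → σ1 × σ2, ∑ y : Fin n → 𝒴1 × 𝒴2,
    (∏ i, q (s i)) * (∏ i, W (enc s i) (y i)) *
      (if dec1 (fun i => (y i).1) = (fun i => (s i).1) ∧
          dec2 (fun i => (y i).2) = (fun i => (s i).2) then 0 else 1)

/-- The sources with joint pmf `q` can be reliably transmitted over the DM-BC `W`:
there is a sequence of codes whose average probability of error tends to `0`. -/
def Reliable {σ1 σ2 𝒳 𝒴1 𝒴2 : Type*} [Fintype σ1] [Fintype σ2] [Fintype 𝒳]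
    [Fintype 𝒴1] [Fintype 𝒴2]
    (q : σ1 × σ2 → ℝ) (W : 𝒳 → 𝒴1 × 𝒴2 → ℝ) : Prop :=
  ∃ (enc : (n : ℕ) → (Fin n → σ1 × σ2) → Fin n → 𝒳)
    (dec1 : (n : ℕ) → (Fin n → 𝒴1) → Fin n → σ1)
    (dec2 : (n : ℕ) → (Fin n → 𝒴2) → Fin n → σ2),
    Tendsto (fun n => errProb q W n (enc n) (dec1 n) (dec2 n)) atTop (nhds 0)

end CSBC

/-! ### Finite expectations and product weights -/

namespace CSBC

/-- Expectation of `f` under the weights `w`. -/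
def Ex {C : Type*} [Fintype C] (w f : C → ℝ) : ℝ := ∑ c, w c * f c

/-- Product weights on `K → A`: the coordinates are independent, the `k`-th one has law `P k`. -/
def pw {K A : Type*} [Fintype K] (P : K → A → ℝ) : (K → A) → ℝ := fun c => ∏ k, P k (c k)

lemma pw_nonneg {K A : Type*} [Fintype K] [Fintype A] {P : K → A → ℝ}
    (hP : ∀ k, IsPMF (P k)) (c : K → A) : 0 ≤ pw P c :=
  Finset.prod_nonneg fun k _ => (hP k).1 _

section Expectation

variable {C D K A : Type*} [Fintype C] [Fintype D] [Fintype K] [DecidableEq K] [Fintype A]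

lemma Ex_mono {w f g : C → ℝ} (hw : ∀ c, 0 ≤ w c) (h : ∀ c, f c ≤ g c) : Ex w f ≤ Ex w g :=
  Finset.sum_le_sum fun c _ => mul_le_mul_of_nonneg_left (h c) (hw c)

lemma Ex_nonneg {w f : C → ℝ} (hw : ∀ c, 0 ≤ w c) (h : ∀ c, 0 ≤ f c) : 0 ≤ Ex w f :=
  Finset.sum_nonneg fun c _ => mul_nonneg (hw c) (h c)

lemma Ex_const {w : C → ℝ} (hw : IsPMF w) (a : ℝ) : Ex w (fun _ => a) = a := by
  simp [Ex, ← Finset.sum_mul, hw.2]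

lemma Ex_add (w f g : C → ℝ) : Ex w (fun c => f c + g c) = Ex w f + Ex w g := by
  simp [Ex, mul_add, Finset.sum_add_distrib]

lemma Ex_mul_left (w f : C → ℝ) (a : ℝ) : Ex w (fun c => a * f c) = a * Ex w f := by
  simp only [Ex, Finset.mul_sum]
  exact Finset.sum_congr rfl fun _ _ => by ring

lemma Ex_mul_right (w f : C → ℝ) (a : ℝ) : Ex w (fun c => f c * a) = Ex w f * a := by
  simp only [Ex, Finset.sum_mul]
  exact Finset.sum_congr rfl fun _ _ => by ring

lemma Ex_sum {ι : Type*} (w : C → ℝ) (s : Finset ι) (f : ι → C → ℝ) :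
    Ex w (fun c => ∑ i ∈ s, f i c) = ∑ i ∈ s, Ex w (f i) := by
  simp only [Ex, Finset.mul_sum]
  exact Finset.sum_comm

lemma Ex_comm (w : C → ℝ) (v : D → ℝ) (f : C → D → ℝ) :
    Ex w (fun c => Ex v (f c)) = Ex v (fun d => Ex w (fun c => f c d)) := by
  simp only [Ex, Finset.mul_sum]
  rw [Finset.sum_comm]
  exact Finset.sum_congr rfl fun _ _ => Finset.sum_congr rfl fun _ _ => by ring

/-- Some outcome is at most the expectation. -/
lemma exists_le_Ex {w : C → ℝ} (hw : IsPMF w) (f : C → ℝ) : ∃ c, f c ≤ Ex w f := by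
  by_contra! h
  have h1 : ∀ c, w c * Ex w f ≤ w c * f c := fun c =>
    mul_le_mul_of_nonneg_left (h c).le (hw.1 c)
  obtain ⟨c, hc⟩ : ∃ c, 0 < w c := by
    by_contra! h0
    have : ∑ c, w c ≤ 0 := Finset.sum_nonpos fun c _ => h0 c
    linarith [hw.2]
  have h2 : ∑ c, w c * Ex w f < ∑ c, w c * f c :=
    Finset.sum_lt_sum (fun c _ => h1 c) ⟨c, Finset.mem_univ _, mul_lt_mul_of_pos_left (h c) hc⟩
  rw [← Finset.sum_mul, hw.2, one_mul] at h2
  exact lt_irrefl _ h2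

lemma sum_prod_eq (F : K → A → ℝ) : ∑ c : K → A, ∏ k, F k (c k) = ∏ k, ∑ a, F k a := by
  rw [Finset.prod_univ_sum, Fintype.piFinset_univ]

lemma isPMF_pw {P : K → A → ℝ} (hP : ∀ k, IsPMF (P k)) : IsPMF (pw P) := by
  refine ⟨pw_nonneg hP, ?_⟩
  unfold pw
  rw [sum_prod_eq]
  exact Finset.prod_eq_one fun k _ => (hP k).2

/-- Resampling one coordinate independently does not change an expectation. -/
lemma Ex_resample {P : K → A → ℝ} (hP : ∀ k, IsPMF (P k)) (k : K) (F : (K → A) → ℝ) :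
    Ex (pw P) F = Ex (P k) (fun a => Ex (pw P) (fun c => F (Function.update c k a))) := by
  -- the involution `(a, c) ↦ (c k, update c k a)` preserves the weight `P k a * pw P c`
  have hw : ∀ (a : A) (c : K → A),
      P k (c k) * pw P (Function.update c k a) = P k a * pw P c := by
    intro a c
    unfold pw
    rw [← Finset.mul_prod_erase Finset.univ (fun j => P j (c j)) (Finset.mem_univ k),
      ← Finset.mul_prod_erase Finset.univ (fun j => P j (Function.update c k a j))
        (Finset.mem_univ k), Function.update_self]
    have : ∏ j ∈ Finset.univ.erase k, P j (Function.update c k a j)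
        = ∏ j ∈ Finset.univ.erase k, P j (c j) :=
      Finset.prod_congr rfl fun j hj => by
        rw [Function.update_of_ne (Finset.ne_of_mem_erase hj)]
    rw [this]; ring
  let e : A × (K → A) ≃ A × (K → A) :=
    { toFun := fun x => (x.2 k, Function.update x.2 k x.1)
      invFun := fun x => (x.2 k, Function.update x.2 k x.1)
      left_inv := fun x => by simp
      right_inv := fun x => by simp }
  have h1 : ∑ x : A × (K → A), P k x.1 * (pw P x.2 * F (Function.update x.2 k x.1))
      = ∑ x : A × (K → A), P k x.1 * (pw P x.2 * F x.2) := by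
    rw [← Equiv.sum_comp e (fun x => P k x.1 * (pw P x.2 * F x.2))]
    refine Finset.sum_congr rfl fun x _ => ?_
    simp only [e, Equiv.coe_fn_mk]
    rw [← mul_assoc, ← mul_assoc, hw]
  rw [Fintype.sum_prod_type, Fintype.sum_prod_type] at h1
  have h2 : Ex (P k) (fun _ => Ex (pw P) F) = Ex (pw P) F := Ex_const (hP k) _
  rw [← h2]
  simp only [Ex, Finset.mul_sum] at h1 ⊢
  exact h1.symm

lemma Ex_one {P : K → A → ℝ} (hP : ∀ k, IsPMF (P k)) (k : K) (f : A → ℝ) :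
    Ex (pw P) (fun c => f (c k)) = Ex (P k) f := by
  rw [Ex_resample hP k]
  simp [Ex_const (isPMF_pw hP)]

lemma Ex_two {P : K → A → ℝ} (hP : ∀ k, IsPMF (P k)) {k k' : K} (h : k ≠ k')
    (f : A → A → ℝ) :
    Ex (pw P) (fun c => f (c k) (c k')) = Ex (P k) (fun a => Ex (P k') (fun b => f a b)) := by
  rw [Ex_resample hP k]
  congr 1
  ext a
  simp only [Function.update_self, Function.update_of_ne h.symm]
  exact Ex_one hP k' (f a)

lemma Ex_two_mul {P : K → A → ℝ} (hP : ∀ k, IsPMF (P k)) {k k' : K} (h : k ≠ k')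
    (f g : A → ℝ) :
    Ex (pw P) (fun c => f (c k) * g (c k')) = Ex (P k) f * Ex (P k') g := by
  rw [Ex_two hP h (fun a b => f a * g b)]
  simp only [Ex_mul_left, Ex_mul_right]

end Expectation

end CSBC

/-! ### Random superposition codebooks and covering -/

namespace CSBC

/-- Product of two weight functions. -/
def pr {C D : Type*} (w : C → ℝ) (v : D → ℝ) : C × D → ℝ := fun c => w c.1 * v c.2

lemma Ex_pr {C D : Type*} [Fintype C] [Fintype D] (w : C → ℝ) (v : D → ℝ) (f : C × D → ℝ) :
    Ex (pr w v) f = Ex w (fun c => Ex v (fun d => f (c, d))) := by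
  simp only [Ex, pr, Fintype.sum_prod_type, Finset.mul_sum]
  exact Finset.sum_congr rfl fun _ _ => Finset.sum_congr rfl fun _ _ => by ring

lemma isPMF_pr {C D : Type*} [Fintype C] [Fintype D] {w : C → ℝ} {v : D → ℝ}
    (hw : IsPMF w) (hv : IsPMF v) : IsPMF (pr w v) := by
  refine ⟨fun c => mul_nonneg (hw.1 _) (hv.1 _), ?_⟩
  simp only [pr, Fintype.sum_prod_type, ← Finset.mul_sum, hv.2, mul_one, hw.2]

section Covering

variable {S1 S2 U0 U1 U2 K0 L0 L1 L2 : Type*} [Fintype S1] [Fintype S2] [Fintype U0]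
  [Fintype U1] [Fintype U2] [Fintype K0] [Fintype L0] [Fintype L1] [Fintype L2]

/-- Law of the cloud codebook `c0 : K0 → U0`: i.i.d. codewords of law `P0`. -/
def law0 (K0 : Type*) [Fintype K0] (P0 : U0 → ℝ) : (K0 → U0) → ℝ := pw fun _ => P0

/-- Law of a satellite codebook. The codeword attached to the source word `s`, the cloud index `k`
and the index `l` is drawn from `Q s u` with `u` the cloud codeword of index `k`. To make all
codewords independent, a codeword is drawn for every possible value of `u`. -/
def law1 (K0 L1 : Type*) [Fintype K0] [Fintype L1] (Q1 : S1 → U0 → U1 → ℝ) :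
    (S1 × U0 × K0 × L1 → U1) → ℝ :=
  pw fun k => Q1 k.1 k.2.1

variable {P0 : U0 → ℝ} {Q1 : S1 → U0 → U1 → ℝ} {Q2 : S2 → U0 → U2 → ℝ}

lemma isPMF_law0 (hP0 : IsPMF P0) : IsPMF (law0 K0 P0) := isPMF_pw fun _ => hP0

lemma isPMF_law1 (hQ1 : ∀ s u, IsPMF (Q1 s u)) : IsPMF (law1 K0 L1 Q1) :=
  isPMF_pw fun _ => hQ1 _ _

/-- The codebooks: cloud codewords `c0` and, on top of them, satellite codewords for each of the
two sources. -/
abbrev Code (S1 S2 U0 U1 U2 K0 L1 L2 : Type*) :=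
  (K0 → U0) × (S1 × U0 × K0 × L1 → U1) × (S2 × U0 × K0 × L2 → U2)

/-- Law of the three codebooks. -/
def codeLaw (K0 L1 L2 : Type*) [Fintype K0] [Fintype L1] [Fintype L2]
    (P0 : U0 → ℝ) (Q1 : S1 → U0 → U1 → ℝ) (Q2 : S2 → U0 → U2 → ℝ) :
    Code S1 S2 U0 U1 U2 K0 L1 L2 → ℝ :=
  pr (law0 K0 P0) (pr (law1 K0 L1 Q1) (law1 K0 L2 Q2))

lemma isPMF_codeLaw (hP0 : IsPMF P0) (hQ1 : ∀ s u, IsPMF (Q1 s u))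
    (hQ2 : ∀ s u, IsPMF (Q2 s u)) : IsPMF (codeLaw K0 L1 L2 P0 Q1 Q2) :=
  isPMF_pr (isPMF_law0 hP0) (isPMF_pr (isPMF_law1 hQ1) (isPMF_law1 hQ2))

/-- The value of `g` at the codeword triple with indices `(k, l1, l2)` for the sources `s1, s2`. -/
def atCode (s1 : S1) (s2 : S2) (g : U0 → U1 → U2 → ℝ) (k : K0) (l1 : L1) (l2 : L2)
    (c : Code S1 S2 U0 U1 U2 K0 L1 L2) : ℝ :=
  g (c.1 k) (c.2.1 (s1, c.1 k, k, l1)) (c.2.2 (s2, c.1 k, k, l2))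

/-- Mean of `g` when the codeword triple is drawn from the reference law `P0 * Q1 * Q2`. -/
def refMean (P0 : U0 → ℝ) (Q1 : S1 → U0 → U1 → ℝ) (Q2 : S2 → U0 → U2 → ℝ) (s1 : S1) (s2 : S2)
    (g : U0 → U1 → U2 → ℝ) : ℝ :=
  Ex P0 fun u => Ex (Q1 s1 u) fun a => Ex (Q2 s2 u) fun b => g u a b

lemma Ex_atCode (hP0 : IsPMF P0) (hQ1 : ∀ s u, IsPMF (Q1 s u)) (hQ2 : ∀ s u, IsPMF (Q2 s u))
    (s1 : S1) (s2 : S2) (g : U0 → U1 → U2 → ℝ) (k : K0) (l1 : L1) (l2 : L2) :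
    Ex (codeLaw K0 L1 L2 P0 Q1 Q2) (atCode s1 s2 g k l1 l2) = refMean P0 Q1 Q2 s1 s2 g := by
  unfold codeLaw refMean
  rw [Ex_pr]
  simp only [Ex_pr, atCode]
  unfold law0 law1
  rw [← Ex_one (P := fun _ : K0 => P0) (fun _ => hP0) k]
  refine congrArg _ (funext fun c0 => ?_)
  rw [← Ex_one (P := fun k : S1 × U0 × K0 × L1 => Q1 k.1 k.2.1) (fun _ => hQ1 _ _)
    (s1, c0 k, k, l1)]
  refine congrArg _ (funext fun c1 => ?_)
  rw [← Ex_one (P := fun k : S2 × U0 × K0 × L2 => Q2 k.1 k.2.1) (fun _ => hQ2 _ _)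
    (s2, c0 k, k, l2)]

/-- Second moments: two codeword triples are independent unless they share the cloud codeword,
and then the product is controlled by the conditional means of `g`. -/
lemma Ex_atCode_mul (hP0 : IsPMF P0) (hQ1 : ∀ s u, IsPMF (Q1 s u))
    (hQ2 : ∀ s u, IsPMF (Q2 s u)) (s1 : S1) (s2 : S2) (g : U0 → U1 → U2 → ℝ)
    (hg : ∀ u a b, 0 ≤ g u a b) {α0 α1 α2 α3 : ℝ}
    (p0 : 0 ≤ α0) (p1 : 0 ≤ α1) (p2 : 0 ≤ α2) (p3 : 0 ≤ α3)
    (h0 : ∀ u, Ex (Q1 s1 u) (fun a => Ex (Q2 s2 u) fun b => g u a b) ≤ α0)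
    (h1 : ∀ u a, Ex (Q2 s2 u) (fun b => g u a b) ≤ α1)
    (h2 : ∀ u b, Ex (Q1 s1 u) (fun a => g u a b) ≤ α2)
    (h3 : ∀ u a b, g u a b ≤ α3)
    (hμ : refMean P0 Q1 Q2 s1 s2 g ≤ 1)
    (k k' : K0) (l1 l1' : L1) (l2 l2' : L2) :
    Ex (codeLaw K0 L1 L2 P0 Q1 Q2)
        (fun c => atCode s1 s2 g k l1 l2 c * atCode s1 s2 g k' l1' l2' c)
      ≤ refMean P0 Q1 Q2 s1 s2 g ^ 2 + (if k = k' then 1 else 0) * (α0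
        + (if l1 = l1' then 1 else 0) * α1 + (if l2 = l2' then 1 else 0) * α2
        + (if l1 = l1' then 1 else 0) * (if l2 = l2' then 1 else 0) * α3) := by
  set μ := refMean P0 Q1 Q2 s1 s2 g with hμdef
  have hP1 : ∀ k : S1 × U0 × K0 × L1, IsPMF (Q1 k.1 k.2.1) := fun _ => hQ1 _ _
  have hP2 : ∀ k : S2 × U0 × K0 × L2, IsPMF (Q2 k.1 k.2.1) := fun _ => hQ2 _ _
  set g2 : U0 → U1 → ℝ := fun u a => Ex (Q2 s2 u) fun b => g u a b with hg2
  set g1 : U0 → U2 → ℝ := fun u b => Ex (Q1 s1 u) fun a => g u a b with hg1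
  set g12 : U0 → ℝ := fun u => Ex (Q1 s1 u) (g2 u) with hg12
  have n2 : ∀ u a, 0 ≤ g2 u a := fun u a => Ex_nonneg (hQ2 _ _).1 (hg _ _)
  have n1 : ∀ u b, 0 ≤ g1 u b := fun u b => Ex_nonneg (hQ1 _ _).1 (fun _ => hg _ _ _)
  have n12 : ∀ u, 0 ≤ g12 u := fun u => Ex_nonneg (hQ1 _ _).1 (n2 _)
  have hμ' : μ = Ex P0 g12 := rfl
  have m0 : 0 ≤ μ := Ex_nonneg hP0.1 n12
  have sqle : ∀ {α : ℝ}, 0 ≤ α → α * μ ≤ α := fun h => by nlinarith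
  unfold codeLaw
  rw [Ex_pr]
  simp only [Ex_pr, atCode]
  unfold law0 law1
  by_cases hk : k = k'
  swap
  · -- distinct cloud codewords
    have e : ∀ c0 : K0 → U0, (Ex (pw fun k : S1 × U0 × K0 × L1 => Q1 k.1 k.2.1) fun c1 =>
        Ex (pw fun k : S2 × U0 × K0 × L2 => Q2 k.1 k.2.1) fun c2 =>
          g (c0 k) (c1 (s1, c0 k, k, l1)) (c2 (s2, c0 k, k, l2)) *
          g (c0 k') (c1 (s1, c0 k', k', l1')) (c2 (s2, c0 k', k', l2')))
        = g12 (c0 k) * g12 (c0 k') := by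
      intro c0
      have e2 : ∀ c1 : S1 × U0 × K0 × L1 → U1,
          (Ex (pw fun k : S2 × U0 × K0 × L2 => Q2 k.1 k.2.1) fun c2 =>
          g (c0 k) (c1 (s1, c0 k, k, l1)) (c2 (s2, c0 k, k, l2)) *
          g (c0 k') (c1 (s1, c0 k', k', l1')) (c2 (s2, c0 k', k', l2')))
          = g2 (c0 k) (c1 (s1, c0 k, k, l1)) * g2 (c0 k') (c1 (s1, c0 k', k', l1')) :=
        fun c1 => Ex_two_mul hP2 (by simp [hk]) (g (c0 k) (c1 (s1, c0 k, k, l1)))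
          (g (c0 k') (c1 (s1, c0 k', k', l1')))
      simp only [e2]
      exact Ex_two_mul hP1 (by simp [hk]) (g2 (c0 k)) (g2 (c0 k'))
    simp only [e]
    rw [Ex_two_mul (fun _ => hP0) hk g12 g12, ← hμ']
    simp [hk, sq]
  subst hk
  have key : ∀ {α : ℝ} (F : U0 → ℝ), 0 ≤ α → (∀ u, F u ≤ α * g12 u) → Ex P0 F ≤ α := by
    intro α F hα hF
    calc Ex P0 F ≤ Ex P0 fun u => α * g12 u := Ex_mono hP0.1 hF
      _ = α * μ := by rw [Ex_mul_left, hμ']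
      _ ≤ α := sqle hα
  have msq := sq_nonneg μ
  by_cases hl1 : l1 = l1' <;> by_cases hl2 : l2 = l2'
  · subst hl1 hl2
    have e2 : ∀ (c0 : K0 → U0) (c1 : S1 × U0 × K0 × L1 → U1),
        (Ex (pw fun k : S2 × U0 × K0 × L2 => Q2 k.1 k.2.1) fun c2 =>
          g (c0 k) (c1 (s1, c0 k, k, l1)) (c2 (s2, c0 k, k, l2)) *
          g (c0 k) (c1 (s1, c0 k, k, l1)) (c2 (s2, c0 k, k, l2)))
        = (fun u a => Ex (Q2 s2 u) fun b => g u a b * g u a b) (c0 k) (c1 (s1, c0 k, k, l1)) :=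
      fun c0 c1 => Ex_one hP2 (s2, c0 k, k, l2) (fun b => g (c0 k) (c1 (s1, c0 k, k, l1)) b
        * g (c0 k) (c1 (s1, c0 k, k, l1)) b)
    simp only [e2]
    have e1 : ∀ (c0 : K0 → U0), (Ex (pw fun k : S1 × U0 × K0 × L1 => Q1 k.1 k.2.1) fun c1 =>
        Ex (Q2 s2 (c0 k)) fun b => g (c0 k) (c1 (s1, c0 k, k, l1)) b
          * g (c0 k) (c1 (s1, c0 k, k, l1)) b)
        = (fun u => Ex (Q1 s1 u) fun a => Ex (Q2 s2 u) fun b => g u a b * g u a b) (c0 k) :=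
      fun c0 => Ex_one hP1 (s1, c0 k, k, l1) (fun a => Ex (Q2 s2 (c0 k)) fun b =>
        g (c0 k) a b * g (c0 k) a b)
    simp only [e1]
    rw [Ex_one (P := fun _ : K0 => P0) (fun _ => hP0) k
      (fun u => Ex (Q1 s1 u) fun a => Ex (Q2 s2 u) fun b => g u a b * g u a b)]
    have := key (α := α3)
      (fun u => Ex (Q1 s1 u) fun a => Ex (Q2 s2 u) fun b => g u a b * g u a b) p3 (fun u => by
        rw [hg12]; simp only [hg2]
        rw [← Ex_mul_left]
        refine Ex_mono (hQ1 _ _).1 fun a => ?_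
        rw [← Ex_mul_left]
        exact Ex_mono (hQ2 _ _).1 fun b => mul_le_mul_of_nonneg_right (h3 _ _ _) (hg _ _ _))
    simp only [if_true]
    linarith
  · subst hl1
    have e2 : ∀ (c0 : K0 → U0) (c1 : S1 × U0 × K0 × L1 → U1),
        (Ex (pw fun k : S2 × U0 × K0 × L2 => Q2 k.1 k.2.1) fun c2 =>
          g (c0 k) (c1 (s1, c0 k, k, l1)) (c2 (s2, c0 k, k, l2)) *
          g (c0 k) (c1 (s1, c0 k, k, l1)) (c2 (s2, c0 k, k, l2')))
        = (fun u a => g2 u a * g2 u a) (c0 k) (c1 (s1, c0 k, k, l1)) :=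
      fun c0 c1 => Ex_two_mul hP2 (by simp [hl2]) (g (c0 k) (c1 (s1, c0 k, k, l1))) _
    simp only [e2]
    have e1 : ∀ (c0 : K0 → U0), (Ex (pw fun k : S1 × U0 × K0 × L1 => Q1 k.1 k.2.1) fun c1 =>
        g2 (c0 k) (c1 (s1, c0 k, k, l1)) * g2 (c0 k) (c1 (s1, c0 k, k, l1)))
        = (fun u => Ex (Q1 s1 u) fun a => g2 u a * g2 u a) (c0 k) :=
      fun c0 => Ex_one hP1 (s1, c0 k, k, l1) (fun a => g2 (c0 k) a * g2 (c0 k) a)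
    simp only [e1]
    rw [Ex_one (P := fun _ : K0 => P0) (fun _ => hP0) k
      (fun u => Ex (Q1 s1 u) fun a => g2 u a * g2 u a)]
    have := key (α := α1) (fun u => Ex (Q1 s1 u) fun a => g2 u a * g2 u a) p1 (fun u => by
        rw [hg12]; simp only
        rw [← Ex_mul_left]
        exact Ex_mono (hQ1 _ _).1 fun a => mul_le_mul_of_nonneg_right (h1 _ _) (n2 _ _))
    simp only [if_true, if_neg hl2]
    linarith
  · subst hl2
    have e2 : ∀ (c0 : K0 → U0) (c1 : S1 × U0 × K0 × L1 → U1),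
        (Ex (pw fun k : S2 × U0 × K0 × L2 => Q2 k.1 k.2.1) fun c2 =>
          g (c0 k) (c1 (s1, c0 k, k, l1)) (c2 (s2, c0 k, k, l2)) *
          g (c0 k) (c1 (s1, c0 k, k, l1')) (c2 (s2, c0 k, k, l2)))
        = Ex (Q2 s2 (c0 k)) fun b => g (c0 k) (c1 (s1, c0 k, k, l1)) b
          * g (c0 k) (c1 (s1, c0 k, k, l1')) b :=
      fun c0 c1 => Ex_one hP2 (s2, c0 k, k, l2) (fun b => g (c0 k) (c1 (s1, c0 k, k, l1)) b
        * g (c0 k) (c1 (s1, c0 k, k, l1')) b)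
    simp only [e2]
    have e1 : ∀ (c0 : K0 → U0), (Ex (pw fun k : S1 × U0 × K0 × L1 => Q1 k.1 k.2.1) fun c1 =>
        Ex (Q2 s2 (c0 k)) fun b => g (c0 k) (c1 (s1, c0 k, k, l1)) b
          * g (c0 k) (c1 (s1, c0 k, k, l1')) b)
        = (fun u => Ex (Q2 s2 u) fun b => g1 u b * g1 u b) (c0 k) := by
      intro c0
      rw [Ex_comm]
      simp only
      congr 1; ext b
      exact Ex_two_mul hP1 (by simp [hl1]) (fun a => g (c0 k) a b) (fun a => g (c0 k) a b)
    simp only [e1]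
    rw [Ex_one (P := fun _ : K0 => P0) (fun _ => hP0) k
      (fun u => Ex (Q2 s2 u) fun b => g1 u b * g1 u b)]
    have := key (α := α2) (fun u => Ex (Q2 s2 u) fun b => g1 u b * g1 u b) p2 (fun u => by
        rw [hg12]; simp only [hg2]
        rw [Ex_comm, ← Ex_mul_left]
        exact Ex_mono (hQ2 _ _).1 fun a => mul_le_mul_of_nonneg_right (h2 _ _) (n1 _ _))
    simp only [if_true, if_neg hl1]
    linarith
  · have e2 : ∀ (c0 : K0 → U0) (c1 : S1 × U0 × K0 × L1 → U1),
        (Ex (pw fun k : S2 × U0 × K0 × L2 => Q2 k.1 k.2.1) fun c2 =>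
          g (c0 k) (c1 (s1, c0 k, k, l1)) (c2 (s2, c0 k, k, l2)) *
          g (c0 k) (c1 (s1, c0 k, k, l1')) (c2 (s2, c0 k, k, l2')))
        = g2 (c0 k) (c1 (s1, c0 k, k, l1)) * g2 (c0 k) (c1 (s1, c0 k, k, l1')) :=
      fun c0 c1 => Ex_two_mul hP2 (by simp [hl2]) (g (c0 k) (c1 (s1, c0 k, k, l1)))
        (g (c0 k) (c1 (s1, c0 k, k, l1')))
    simp only [e2]
    have e1 : ∀ (c0 : K0 → U0), (Ex (pw fun k : S1 × U0 × K0 × L1 => Q1 k.1 k.2.1) fun c1 =>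
        g2 (c0 k) (c1 (s1, c0 k, k, l1)) * g2 (c0 k) (c1 (s1, c0 k, k, l1')))
        = (fun u => g12 u * g12 u) (c0 k) :=
      fun c0 => Ex_two_mul hP1 (by simp [hl1]) (g2 (c0 k)) (g2 (c0 k))
    simp only [e1]
    rw [Ex_one (P := fun _ : K0 => P0) (fun _ => hP0) k (fun u => g12 u * g12 u)]
    have := key (α := α0) (fun u => g12 u * g12 u) p0 (fun u =>
      mul_le_mul_of_nonneg_right (h0 u) (n12 u))
    simp only [if_neg hl1, if_neg hl2, if_true]
    linarith

/-- Average of `g` over all codeword triples available for the sources `s1, s2`, the cloud indices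
being those in the range of `m`. -/
def avgCode (m : L0 → K0) (s1 : S1) (s2 : S2) (g : U0 → U1 → U2 → ℝ)
    (c : Code S1 S2 U0 U1 U2 K0 L1 L2) : ℝ :=
  (∑ l : L0 × L1 × L2, atCode s1 s2 g (m l.1) l.2.1 l.2.2 c) / Fintype.card (L0 × L1 × L2)

lemma Ex_avgCode [Nonempty L0] [Nonempty L1] [Nonempty L2]
    (hP0 : IsPMF P0) (hQ1 : ∀ s u, IsPMF (Q1 s u)) (hQ2 : ∀ s u, IsPMF (Q2 s u))
    (m : L0 → K0) (s1 : S1) (s2 : S2) (g : U0 → U1 → U2 → ℝ) :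
    Ex (codeLaw K0 L1 L2 P0 Q1 Q2) (avgCode m s1 s2 g) = refMean P0 Q1 Q2 s1 s2 g := by
  unfold avgCode
  simp only [div_eq_mul_inv]
  rw [Ex_mul_right, Ex_sum]
  have : ∀ l : L0 × L1 × L2, Ex (codeLaw K0 L1 L2 P0 Q1 Q2)
      (fun c => atCode s1 s2 g (m l.1) l.2.1 l.2.2 c) = refMean P0 Q1 Q2 s1 s2 g :=
    fun l => Ex_atCode hP0 hQ1 hQ2 s1 s2 g _ _ _
  simp only [this, Finset.sum_const, Finset.card_univ, nsmul_eq_mul]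
  have : (Fintype.card (L0 × L1 × L2) : ℝ) ≠ 0 := by
    exact_mod_cast Fintype.card_ne_zero
  field_simp

/-- The average of `g` over the available codeword triples concentrates around its mean. -/
lemma Ex_avgCode_sq [Nonempty L0] [Nonempty L1] [Nonempty L2]
    (hP0 : IsPMF P0) (hQ1 : ∀ s u, IsPMF (Q1 s u)) (hQ2 : ∀ s u, IsPMF (Q2 s u))
    (m : L0 → K0) (hm : Function.Injective m) (s1 : S1) (s2 : S2) (g : U0 → U1 → U2 → ℝ)
    (hg : ∀ u a b, 0 ≤ g u a b) {α0 α1 α2 α3 : ℝ}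
    (p0 : 0 ≤ α0) (p1 : 0 ≤ α1) (p2 : 0 ≤ α2) (p3 : 0 ≤ α3)
    (h0 : ∀ u, Ex (Q1 s1 u) (fun a => Ex (Q2 s2 u) fun b => g u a b) ≤ α0)
    (h1 : ∀ u a, Ex (Q2 s2 u) (fun b => g u a b) ≤ α1)
    (h2 : ∀ u b, Ex (Q1 s1 u) (fun a => g u a b) ≤ α2)
    (h3 : ∀ u a b, g u a b ≤ α3)
    (hμ : refMean P0 Q1 Q2 s1 s2 g ≤ 1) :
    Ex (codeLaw K0 L1 L2 P0 Q1 Q2)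
        (fun c => (avgCode m s1 s2 g c - refMean P0 Q1 Q2 s1 s2 g) ^ 2)
      ≤ α0 / Fintype.card L0 + α1 / (Fintype.card L0 * Fintype.card L1)
        + α2 / (Fintype.card L0 * Fintype.card L2)
        + α3 / (Fintype.card L0 * Fintype.card L1 * Fintype.card L2) := by
  set μ := refMean P0 Q1 Q2 s1 s2 g with hμdef
  have z0 : (0 : ℝ) < Fintype.card L0 := by exact_mod_cast Fintype.card_pos
  have z1 : (0 : ℝ) < Fintype.card L1 := by exact_mod_cast Fintype.card_pos
  have z2 : (0 : ℝ) < Fintype.card L2 := by exact_mod_cast Fintype.card_pos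
  have expand : ∀ c : Code S1 S2 U0 U1 U2 K0 L1 L2, (avgCode m s1 s2 g c - μ) ^ 2
      = avgCode m s1 s2 g c * avgCode m s1 s2 g c + (-2 * μ * avgCode m s1 s2 g c + μ ^ 2) :=
    fun c => by ring
  simp only [expand]
  rw [Ex_add, Ex_add, Ex_mul_left, Ex_const (isPMF_codeLaw hP0 hQ1 hQ2),
    Ex_avgCode hP0 hQ1 hQ2]
  have hsq : ∀ c : Code S1 S2 U0 U1 U2 K0 L1 L2, avgCode m s1 s2 g c * avgCode m s1 s2 g c
      = (∑ l : L0 × L1 × L2, ∑ l' : L0 × L1 × L2, atCode s1 s2 g (m l.1) l.2.1 l.2.2 c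
        * atCode s1 s2 g (m l'.1) l'.2.1 l'.2.2 c)
        * ((Fintype.card (L0 × L1 × L2) : ℝ) ^ 2)⁻¹ := by
    intro c
    unfold avgCode
    rw [← Finset.sum_mul_sum]
    ring
  simp only [hsq]
  rw [Ex_mul_right, Ex_sum]
  simp only [Ex_sum]
  have hle := Finset.sum_le_sum (s := Finset.univ) fun (l : L0 × L1 × L2) _ =>
    Finset.sum_le_sum (s := Finset.univ) fun (l' : L0 × L1 × L2) _ =>
      Ex_atCode_mul (K0 := K0) hP0 hQ1 hQ2 s1 s2 g hg p0 p1 p2 p3 h0 h1 h2 h3 hμ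
        (m l.1) (m l'.1) l.2.1 l'.2.1 l.2.2 l'.2.2
  have hrhs : (∑ l : L0 × L1 × L2, ∑ l' : L0 × L1 × L2,
      (refMean P0 Q1 Q2 s1 s2 g ^ 2 + (if m l.1 = m l'.1 then 1 else 0) * (α0
        + (if l.2.1 = l'.2.1 then 1 else 0) * α1 + (if l.2.2 = l'.2.2 then 1 else 0) * α2
        + (if l.2.1 = l'.2.1 then 1 else 0) * (if l.2.2 = l'.2.2 then 1 else 0) * α3)))
      = (Fintype.card (L0 × L1 × L2) : ℝ) * ((Fintype.card (L0 × L1 × L2) : ℝ) * μ ^ 2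
        + (Fintype.card L1 * Fintype.card L2 * α0 + Fintype.card L2 * α1
          + Fintype.card L1 * α2 + α3)) := by
    have : ∀ l : L0 × L1 × L2, (∑ l' : L0 × L1 × L2,
      (refMean P0 Q1 Q2 s1 s2 g ^ 2 + (if m l.1 = m l'.1 then 1 else 0) * (α0
        + (if l.2.1 = l'.2.1 then 1 else 0) * α1 + (if l.2.2 = l'.2.2 then 1 else 0) * α2
        + (if l.2.1 = l'.2.1 then 1 else 0) * (if l.2.2 = l'.2.2 then 1 else 0) * α3)))
        = (Fintype.card (L0 × L1 × L2) : ℝ) * μ ^ 2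
        + (Fintype.card L1 * Fintype.card L2 * α0 + Fintype.card L2 * α1
          + Fintype.card L1 * α2 + α3) := by
      intro l
      rw [Finset.sum_add_distrib]
      congr 1
      · simp [hμdef]
      · simp only [hm.eq_iff, Fintype.sum_prod_type, ite_mul, one_mul, zero_mul]
        have hx : ∑ x : L1, ∑ _x' : L2, (if l.2.1 = x then α1 else 0)
            = Fintype.card L2 * α1 := by
          rw [Finset.sum_comm]; simp
        simp [Finset.sum_add_distrib, Finset.sum_ite_eq, hx]
        ring
    simp only [this, Finset.sum_const, Finset.card_univ, nsmul_eq_mul]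
  rw [hrhs] at hle
  have hc : (Fintype.card (L0 × L1 × L2) : ℝ)
      = Fintype.card L0 * Fintype.card L1 * Fintype.card L2 := by
    simp [Fintype.card_prod, mul_assoc]
  rw [hc] at hle ⊢
  have := mul_le_mul_of_nonneg_right hle
    (inv_nonneg.2 (sq_nonneg ((Fintype.card L0 : ℝ) * Fintype.card L1 * Fintype.card L2)))
  refine (add_le_add_left this _).trans (le_of_eq ?_)
  field_simp
  ring

end Covering

end CSBC

/-! ### Decoding error of random codebooks -/

namespace CSBC

/-- Real-valued indicator of a proposition. -/
def ind (p : Prop) : ℝ := if p then 1 else 0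

lemma ind_nonneg (p : Prop) : 0 ≤ ind p := by unfold ind; split <;> norm_num

lemma ind_le_one (p : Prop) : ind p ≤ 1 := by unfold ind; split <;> norm_num

lemma ind_of {p : Prop} (h : p) : ind p = 1 := if_pos h

lemma ind_of_not {p : Prop} (h : ¬p) : ind p = 0 := if_neg h

lemma ind_mono {p q : Prop} (h : p → q) : ind p ≤ ind q := by
  by_cases hp : p
  · rw [ind_of hp, ind_of (h hp)]
  · rw [ind_of_not hp]; exact ind_nonneg _

section Decoding

variable {S1 U0 U1 K0 L1 V Y : Type*} [Fintype S1] [Fintype U0] [Fintype U1] [Fintype K0]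
  [Fintype L1] [Fintype Y]

/-- The decoder: a source word `s` for which some cloud index `k` whose label `ℓ k` is the hash
`h s`, and some satellite index, give codewords accepted by the test `T1` together with the
received word `y`. -/
def decode [Nonempty S1] (T1 : S1 → U0 → U1 → Y → Prop) (ℓ : K0 → V) (h : S1 → V) (c0 : K0 → U0)
    (c1 : S1 × U0 × K0 × L1 → U1) (y : Y) : S1 :=
  Classical.epsilon fun s => ∃ k l, ℓ k = h s ∧ T1 s (c0 k) (c1 (s, c0 k, k, l)) y

/-- Union bound for the decoding error: either the true codewords fail the test, or a wrong source
word with the same hash passes it with the true cloud codeword, or some source word passes it with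
another cloud codeword. -/
lemma decode_err [Nonempty S1] (T1 : S1 → U0 → U1 → Y → Prop) (ℓ : K0 → V) (h : S1 → V)
    (c0 : K0 → U0) (c1 : S1 × U0 × K0 × L1 → U1) (y : Y) (s : S1) (k : K0) (l : L1)
    (hk : ℓ k = h s) :
    ind (decode T1 ℓ h c0 c1 y ≠ s) ≤ ind (¬ T1 s (c0 k) (c1 (s, c0 k, k, l)) y)
      + ∑ x : S1 × L1, ind (x.1 ≠ s ∧ h x.1 = h s)
          * ind (T1 x.1 (c0 k) (c1 (x.1, c0 k, k, x.2)) y)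
      + ∑ x : S1 × K0 × L1, ind (x.2.1 ≠ k ∧ ℓ x.2.1 = h x.1)
          * ind (T1 x.1 (c0 x.2.1) (c1 (x.1, c0 x.2.1, x.2.1, x.2.2)) y) := by
  have n2 : ∀ x : S1 × L1, 0 ≤ ind (x.1 ≠ s ∧ h x.1 = h s)
      * ind (T1 x.1 (c0 k) (c1 (x.1, c0 k, k, x.2)) y) :=
    fun x => mul_nonneg (ind_nonneg _) (ind_nonneg _)
  have n3 : ∀ x : S1 × K0 × L1, 0 ≤ ind (x.2.1 ≠ k ∧ ℓ x.2.1 = h x.1)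
      * ind (T1 x.1 (c0 x.2.1) (c1 (x.1, c0 x.2.1, x.2.1, x.2.2)) y) :=
    fun x => mul_nonneg (ind_nonneg _) (ind_nonneg _)
  have s2 := Finset.sum_nonneg fun x (_ : x ∈ Finset.univ) => n2 x
  have s3 := Finset.sum_nonneg fun x (_ : x ∈ Finset.univ) => n3 x
  have s1 := ind_nonneg (¬ T1 s (c0 k) (c1 (s, c0 k, k, l)) y)
  by_cases hd : decode T1 ℓ h c0 c1 y = s
  · rw [ind_of_not (by simpa using hd)]
    linarith
  rw [ind_of hd]
  by_cases hT : T1 s (c0 k) (c1 (s, c0 k, k, l)) y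
  swap
  · rw [ind_of hT]; linarith
  have hex : ∃ s, ∃ k l, ℓ k = h s ∧ T1 s (c0 k) (c1 (s, c0 k, k, l)) y := ⟨s, k, l, hk, hT⟩
  obtain ⟨k', l', hk', hT'⟩ := Classical.epsilon_spec hex
  change ℓ k' = h (decode T1 ℓ h c0 c1 y) at hk'
  change T1 (decode T1 ℓ h c0 c1 y) _ (c1 (decode T1 ℓ h c0 c1 y, _, _, _)) y at hT'
  set s' := decode T1 ℓ h c0 c1 y
  by_cases hkk : k' = k
  · subst hkk
    have := Finset.single_le_sum (fun x (_ : x ∈ Finset.univ) => n2 x)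
      (Finset.mem_univ ((s', l') : S1 × L1))
    simp only at this
    rw [ind_of ⟨hd, by rw [← hk', hk]⟩, ind_of hT'] at this
    linarith
  · have := Finset.single_le_sum (fun x (_ : x ∈ Finset.univ) => n3 x)
      (Finset.mem_univ ((s', k', l') : S1 × K0 × L1))
    simp only at this
    rw [ind_of ⟨hkk, hk'⟩, ind_of hT'] at this
    linarith

variable {P0 : U0 → ℝ} {Q1 : S1 → U0 → U1 → ℝ}

lemma Ex_code_one (hP0 : IsPMF P0) (hQ1 : ∀ s u, IsPMF (Q1 s u)) (s : S1) (k : K0) (l : L1)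
    (F : U0 → U1 → ℝ) :
    Ex (pr (law0 K0 P0) (law1 K0 L1 Q1)) (fun c => F (c.1 k) (c.2 (s, c.1 k, k, l)))
      = Ex P0 fun u => Ex (Q1 s u) (F u) := by
  rw [Ex_pr]
  unfold law0 law1
  have e : ∀ c0 : K0 → U0, (Ex (pw fun k : S1 × U0 × K0 × L1 => Q1 k.1 k.2.1) fun c1 =>
      F (c0 k) (c1 (s, c0 k, k, l))) = (fun u => Ex (Q1 s u) (F u)) (c0 k) :=
    fun c0 => Ex_one (fun _ => hQ1 _ _) (s, c0 k, k, l) (F (c0 k))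
  simp only [e]
  exact Ex_one (P := fun _ : K0 => P0) (fun _ => hP0) k (fun u => Ex (Q1 s u) (F u))

lemma Ex_code_two (hP0 : IsPMF P0) (hQ1 : ∀ s u, IsPMF (Q1 s u)) {s s' : S1} (hs : s ≠ s')
    (k : K0) (l l' : L1) (F G : U0 → U1 → ℝ) :
    Ex (pr (law0 K0 P0) (law1 K0 L1 Q1))
        (fun c => F (c.1 k) (c.2 (s, c.1 k, k, l)) * G (c.1 k) (c.2 (s', c.1 k, k, l')))
      = Ex P0 fun u => Ex (Q1 s u) (F u) * Ex (Q1 s' u) (G u) := by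
  rw [Ex_pr]
  unfold law0 law1
  have e : ∀ c0 : K0 → U0, (Ex (pw fun k : S1 × U0 × K0 × L1 => Q1 k.1 k.2.1) fun c1 =>
      F (c0 k) (c1 (s, c0 k, k, l)) * G (c0 k) (c1 (s', c0 k, k, l')))
      = (fun u => Ex (Q1 s u) (F u) * Ex (Q1 s' u) (G u)) (c0 k) :=
    fun c0 => Ex_two_mul (fun _ => hQ1 _ _) (by simp [hs]) (F (c0 k)) (G (c0 k))
  simp only [e]
  exact Ex_one (P := fun _ : K0 => P0) (fun _ => hP0) k
    (fun u => Ex (Q1 s u) (F u) * Ex (Q1 s' u) (G u))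

lemma Ex_code_two' (hP0 : IsPMF P0) (hQ1 : ∀ s u, IsPMF (Q1 s u)) (s s' : S1)
    {k k' : K0} (hk : k ≠ k') (l l' : L1) (F G : U0 → U1 → ℝ) :
    Ex (pr (law0 K0 P0) (law1 K0 L1 Q1))
        (fun c => F (c.1 k) (c.2 (s, c.1 k, k, l)) * G (c.1 k') (c.2 (s', c.1 k', k', l')))
      = (Ex P0 fun u => Ex (Q1 s u) (F u)) * (Ex P0 fun u => Ex (Q1 s' u) (G u)) := by
  rw [Ex_pr]
  unfold law0 law1
  have e : ∀ c0 : K0 → U0, (Ex (pw fun k : S1 × U0 × K0 × L1 => Q1 k.1 k.2.1) fun c1 =>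
      F (c0 k) (c1 (s, c0 k, k, l)) * G (c0 k') (c1 (s', c0 k', k', l')))
      = (fun u => Ex (Q1 s u) (F u)) (c0 k) * (fun u => Ex (Q1 s' u) (G u)) (c0 k') :=
    fun c0 => Ex_two_mul (fun _ => hQ1 _ _) (by simp [hk]) (F (c0 k)) (G (c0 k'))
  simp only [e]
  exact Ex_two_mul (P := fun _ : K0 => P0) (fun _ => hP0) hk (fun u => Ex (Q1 s u) (F u))
    (fun u => Ex (Q1 s' u) (G u))

/-- Mean decoding error when the output weight `lam` depends on the codewords with indices
`(k, l)`. The codewords of wrong candidates are independent of the transmitted ones, except that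
they may share the cloud codeword. -/
lemma Ex_decode_err [Nonempty S1] (hP0 : IsPMF P0) (hQ1 : ∀ s u, IsPMF (Q1 s u))
    (T1 : S1 → U0 → U1 → Y → Prop) (ℓ : K0 → V) (h : S1 → V) (s : S1) (k : K0) (l : L1)
    (hk : ℓ k = h s) (lam : U0 → U1 → Y → ℝ) (hlam : ∀ u a y, 0 ≤ lam u a y) {B β : ℝ}
    (hB : ∀ v, ∑ k, ind (ℓ k = v) ≤ B)
    (hβ : ∀ y, ∑ s', (Ex P0 fun u => Ex (Q1 s' u) fun a => ind (T1 s' u a y)) ≤ β) :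
    Ex (pr (law0 K0 P0) (law1 K0 L1 Q1)) (fun c =>
        ∑ y, lam (c.1 k) (c.2 (s, c.1 k, k, l)) y * ind (decode T1 ℓ h c.1 c.2 y ≠ s))
      ≤ ∑ y, Ex P0 fun u => Ex (Q1 s u) fun a => lam u a y * (ind (¬ T1 s u a y)
        + Fintype.card L1 * (∑ s', ind (s' ≠ s ∧ h s' = h s)
            * Ex (Q1 s' u) (fun a' => ind (T1 s' u a' y)))
        + B * Fintype.card L1 * β) := by
  have hcode := isPMF_pr (isPMF_law0 (K0 := K0) hP0) (isPMF_law1 (K0 := K0) (L1 := L1) hQ1)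
  rw [Ex_sum]
  refine Finset.sum_le_sum fun y _ => ?_
  refine (Ex_mono hcode.1 fun c => mul_le_mul_of_nonneg_left
    (decode_err T1 ℓ h c.1 c.2 y s k l hk) (hlam _ _ _)).trans ?_
  have hsplit : ∀ c : (K0 → U0) × (S1 × U0 × K0 × L1 → U1),
      lam (c.1 k) (c.2 (s, c.1 k, k, l)) y *
        (ind (¬ T1 s (c.1 k) (c.2 (s, c.1 k, k, l)) y)
      + ∑ x : S1 × L1, ind (x.1 ≠ s ∧ h x.1 = h s)
          * ind (T1 x.1 (c.1 k) (c.2 (x.1, c.1 k, k, x.2)) y)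
      + ∑ x : S1 × K0 × L1, ind (x.2.1 ≠ k ∧ ℓ x.2.1 = h x.1)
          * ind (T1 x.1 (c.1 x.2.1) (c.2 (x.1, c.1 x.2.1, x.2.1, x.2.2)) y))
      = (fun u a => lam u a y * ind (¬ T1 s u a y)) (c.1 k) (c.2 (s, c.1 k, k, l))
      + (∑ x : S1 × L1, ind (x.1 ≠ s ∧ h x.1 = h s)
          * ((fun u a => lam u a y) (c.1 k) (c.2 (s, c.1 k, k, l))
            * (fun u a => ind (T1 x.1 u a y)) (c.1 k) (c.2 (x.1, c.1 k, k, x.2)))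
      + ∑ x : S1 × K0 × L1, ind (x.2.1 ≠ k ∧ ℓ x.2.1 = h x.1)
          * ((fun u a => lam u a y) (c.1 k) (c.2 (s, c.1 k, k, l)) * (fun u a =>
            ind (T1 x.1 u a y)) (c.1 x.2.1) (c.2 (x.1, c.1 x.2.1, x.2.1, x.2.2)))) := by
    intro c
    rw [mul_add, mul_add, Finset.mul_sum, Finset.mul_sum, add_assoc]
    congr 1
    congr 1
    · exact Finset.sum_congr rfl fun _ _ => by ring
    · exact Finset.sum_congr rfl fun _ _ => by ring
  simp only [hsplit]
  rw [Ex_add, Ex_add, Ex_sum, Ex_sum,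
    Ex_code_one hP0 hQ1 s k l (fun u a => lam u a y * ind (¬ T1 s u a y))]
  set lamU : U0 → ℝ := fun u => Ex (Q1 s u) fun a => lam u a y with hlamU
  have nlamU : ∀ u, 0 ≤ lamU u := fun u => Ex_nonneg (hQ1 _ _).1 fun a => hlam _ _ _
  set τ : S1 → U0 → ℝ := fun s' u => Ex (Q1 s' u) fun a => ind (T1 s' u a y) with hτ
  have nτ : ∀ s' u, 0 ≤ τ s' u := fun s' u => Ex_nonneg (hQ1 _ _).1 fun a => ind_nonneg _
  have t2 : ∀ x : S1 × L1, (Ex (pr (law0 K0 P0) (law1 K0 L1 Q1)) fun c =>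
      ind (x.1 ≠ s ∧ h x.1 = h s) * ((fun u a => lam u a y) (c.1 k) (c.2 (s, c.1 k, k, l))
            * (fun u a => ind (T1 x.1 u a y)) (c.1 k) (c.2 (x.1, c.1 k, k, x.2))))
      = Ex P0 fun u => lamU u * (ind (x.1 ≠ s ∧ h x.1 = h s) * τ x.1 u) := by
    intro x
    rw [Ex_mul_left]
    by_cases hx : x.1 = s
    · rw [ind_of_not (by simp [hx])]
      simp [Ex]
    · rw [Ex_code_two hP0 hQ1 (Ne.symm hx) k l x.2 (fun u a => lam u a y)
        (fun u a => ind (T1 x.1 u a y)), ← Ex_mul_left]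
      congr 1; ext u
      simp only [hlamU, hτ]; ring
  have t3 : ∀ x : S1 × K0 × L1, (Ex (pr (law0 K0 P0) (law1 K0 L1 Q1)) fun c =>
      ind (x.2.1 ≠ k ∧ ℓ x.2.1 = h x.1)
          * ((fun u a => lam u a y) (c.1 k) (c.2 (s, c.1 k, k, l)) * (fun u a =>
            ind (T1 x.1 u a y)) (c.1 x.2.1) (c.2 (x.1, c.1 x.2.1, x.2.1, x.2.2))))
      ≤ ind (ℓ x.2.1 = h x.1) * (Ex P0 lamU * Ex P0 (τ x.1)) := by
    intro x
    rw [Ex_mul_left]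
    by_cases hx : x.2.1 = k
    · rw [ind_of_not (by simp [hx]), zero_mul]
      exact mul_nonneg (ind_nonneg _) (mul_nonneg (Ex_nonneg hP0.1 nlamU)
        (Ex_nonneg hP0.1 (nτ _)))
    · rw [Ex_code_two' hP0 hQ1 s x.1 (Ne.symm hx) l x.2.2 (fun u a => lam u a y)
        (fun u a => ind (T1 x.1 u a y))]
      exact mul_le_mul_of_nonneg_right (ind_mono fun h => h.2)
        (mul_nonneg (Ex_nonneg hP0.1 nlamU) (Ex_nonneg hP0.1 (nτ _)))
  simp only [t2]
  have t3' : ∑ x : S1 × K0 × L1, ind (ℓ x.2.1 = h x.1) * (Ex P0 lamU * Ex P0 (τ x.1))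
      ≤ Ex P0 lamU * (B * Fintype.card L1 * β) := by
    have e : ∑ x : S1 × K0 × L1, ind (ℓ x.2.1 = h x.1) * (Ex P0 lamU * Ex P0 (τ x.1))
        = Ex P0 lamU * (Fintype.card L1 * ∑ s', (∑ k, ind (ℓ k = h s')) * Ex P0 (τ s')) := by
      simp only [Fintype.sum_prod_type, Finset.sum_const, Finset.card_univ, nsmul_eq_mul,
        Finset.mul_sum, Finset.sum_mul]
      exact Finset.sum_congr rfl fun _ _ => Finset.sum_congr rfl fun _ _ => by ring
    rw [e]
    refine mul_le_mul_of_nonneg_left ?_ (Ex_nonneg hP0.1 nlamU)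
    have hB0 : 0 ≤ B := (Finset.sum_nonneg fun _ _ => ind_nonneg _).trans (hB (h s))
    calc (Fintype.card L1 : ℝ) * ∑ s', (∑ k, ind (ℓ k = h s')) * Ex P0 (τ s')
        ≤ Fintype.card L1 * ∑ s', B * Ex P0 (τ s') := by
          refine mul_le_mul_of_nonneg_left (Finset.sum_le_sum fun s' _ => ?_) (Nat.cast_nonneg _)
          exact mul_le_mul_of_nonneg_right (hB _) (Ex_nonneg hP0.1 (nτ _))
      _ = Fintype.card L1 * (B * ∑ s', Ex P0 (τ s')) := by rw [← Finset.mul_sum]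
      _ ≤ Fintype.card L1 * (B * β) := by
          refine mul_le_mul_of_nonneg_left (mul_le_mul_of_nonneg_left (hβ y) hB0)
            (Nat.cast_nonneg _)
      _ = B * Fintype.card L1 * β := by ring
  refine (add_le_add le_rfl (add_le_add le_rfl
    ((Finset.sum_le_sum fun x _ => t3 x).trans t3'))).trans (le_of_eq ?_)
  have r : ∀ u, (Ex (Q1 s u) fun a => lam u a y * (ind (¬ T1 s u a y)
        + Fintype.card L1 * (∑ s', ind (s' ≠ s ∧ h s' = h s) * τ s' u)
        + B * Fintype.card L1 * β))
      = (Ex (Q1 s u) fun a => lam u a y * ind (¬ T1 s u a y))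
        + ((∑ x : S1 × L1, lamU u * (ind (x.1 ≠ s ∧ h x.1 = h s) * τ x.1 u))
        + lamU u * (B * Fintype.card L1 * β)) := by
    intro u
    have e : ∀ a, lam u a y * (ind (¬ T1 s u a y)
        + Fintype.card L1 * (∑ s', ind (s' ≠ s ∧ h s' = h s) * τ s' u)
        + B * Fintype.card L1 * β)
        = lam u a y * ind (¬ T1 s u a y) + (lam u a y *
          (Fintype.card L1 * (∑ s', ind (s' ≠ s ∧ h s' = h s) * τ s' u))
          + lam u a y * (B * Fintype.card L1 * β)) := fun a => by ring
    simp only [e]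
    rw [Ex_add, Ex_add, Ex_mul_right, Ex_mul_right]
    congr 2
    simp only [Fintype.sum_prod_type, Finset.sum_const, Finset.card_univ, nsmul_eq_mul,
        Finset.mul_sum]
    exact Finset.sum_congr rfl fun _ _ => by simp only [hlamU]; ring
  refine Eq.trans ?_ (congrArg (Ex P0) (funext r)).symm
  rw [Ex_add, Ex_add, Ex_sum, Ex_mul_right]

end Decoding

end CSBC

/-! ### Random hash functions -/

namespace CSBC

section Hash

/-- Uniform pmf. -/
def unif (A : Type*) [Fintype A] : A → ℝ := fun _ => (Fintype.card A : ℝ)⁻¹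

lemma isPMF_unif {A : Type*} [Fintype A] [Nonempty A] : IsPMF (unif A) := by
  refine ⟨fun _ => inv_nonneg.2 (Nat.cast_nonneg _), ?_⟩
  have : (Fintype.card A : ℝ) ≠ 0 := by exact_mod_cast Fintype.card_ne_zero
  simp [unif, this]

/-- Law of a uniformly random hash function `S1 → H1`. -/
def hashLaw (S1 H1 : Type*) [Fintype S1] [Fintype H1] : (S1 → H1) → ℝ := pw fun _ => unif H1

lemma isPMF_hashLaw {S1 H1 : Type*} [Fintype S1] [Fintype H1] [Nonempty H1] :
    IsPMF (hashLaw S1 H1) := isPMF_pw fun _ => isPMF_unif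

lemma Ex_collision {S1 H1 : Type*} [Fintype S1] [Fintype H1] [Nonempty H1] (s s' : S1) :
    Ex (hashLaw S1 H1) (fun h => ind (s' ≠ s ∧ h s' = h s)) ≤ (Fintype.card H1 : ℝ)⁻¹ := by
  by_cases hs : s' = s
  · have : ∀ h : S1 → H1, ind (s' ≠ s ∧ h s' = h s) = 0 := fun h => ind_of_not (by simp [hs])
    simp only [this]
    rw [Ex_const isPMF_hashLaw]
    exact inv_nonneg.2 (Nat.cast_nonneg _)
  · have : ∀ h : S1 → H1, ind (s' ≠ s ∧ h s' = h s) = ind (h s' = h s) := fun h => by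
      simp [hs]
    simp only [this]
    unfold hashLaw
    rw [Ex_two (fun _ => isPMF_unif) hs (fun a b => ind (a = b))]
    have e : ∀ a : H1, (Ex (unif H1) fun b => ind (a = b)) = (Fintype.card H1 : ℝ)⁻¹ := by
      intro a
      simp [Ex, unif, ind]
    simp only [e]
    rw [Ex_const isPMF_unif]

end Hash

section Side

variable {S1 S2 U0 U1 U2 K0 L1 L2 H1 Y : Type*} [Fintype S1] [Fintype S2] [Fintype U0]
  [Fintype U1] [Fintype U2] [Fintype K0] [Fintype L1] [Fintype L2] [Fintype H1] [Fintype Y]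
  {P0 : U0 → ℝ} {Q1 : S1 → U0 → U1 → ℝ} {Q2 : S2 → U0 → U2 → ℝ}

/-- Mean decoding error over the random hash function and the random codebooks; the transmitted
cloud index `k h` may depend on the hash function. -/
lemma Ex_hash_decode_err [Nonempty S1] [Nonempty H1] (hP0 : IsPMF P0)
    (hQ1 : ∀ s u, IsPMF (Q1 s u))
    (T1 : S1 → U0 → U1 → Y → Prop) (ℓ : K0 → H1) (s : S1) (k : (S1 → H1) → K0) (l : L1)
    (hk : ∀ h, ℓ (k h) = h s) (lam : U0 → U1 → Y → ℝ) (hlam : ∀ u a y, 0 ≤ lam u a y) {B β β' : ℝ}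
    (hB : ∀ v, ∑ k, ind (ℓ k = v) ≤ B)
    (hβ : ∀ u y, ∑ s', (Ex (Q1 s' u) fun a => ind (T1 s' u a y)) ≤ β)
    (hβ' : ∀ y, ∑ s', (Ex P0 fun u => Ex (Q1 s' u) fun a => ind (T1 s' u a y)) ≤ β') :
    Ex (hashLaw S1 H1) (fun h => Ex (pr (law0 K0 P0) (law1 K0 L1 Q1)) (fun c =>
        ∑ y, lam (c.1 (k h)) (c.2 (s, c.1 (k h), k h, l)) y
          * ind (decode T1 ℓ h c.1 c.2 y ≠ s)))
      ≤ ∑ y, Ex P0 fun u => Ex (Q1 s u) fun a => lam u a y * (ind (¬ T1 s u a y)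
        + (Fintype.card L1 * β / Fintype.card H1 + B * Fintype.card L1 * β')) := by
  refine (Ex_mono isPMF_hashLaw.1 fun h => Ex_decode_err hP0 hQ1 T1 ℓ h s (k h) l (hk h) lam hlam
    hB hβ').trans ?_
  rw [Ex_sum]
  refine Finset.sum_le_sum fun y _ => ?_
  rw [Ex_comm]
  refine Ex_mono hP0.1 fun u => ?_
  rw [Ex_comm]
  refine Ex_mono (hQ1 _ _).1 fun a => ?_
  rw [Ex_mul_left]
  refine mul_le_mul_of_nonneg_left ?_ (hlam _ _ _)
  rw [Ex_add, Ex_add, Ex_const isPMF_hashLaw, Ex_const isPMF_hashLaw, Ex_mul_left, Ex_sum,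
    add_assoc]
  refine add_le_add le_rfl (add_le_add ?_ le_rfl)
  rw [mul_div_assoc]
  refine mul_le_mul_of_nonneg_left ?_ (Nat.cast_nonneg _)
  calc ∑ s', Ex (hashLaw S1 H1) (fun h => ind (s' ≠ s ∧ h s' = h s)
          * Ex (Q1 s' u) fun a' => ind (T1 s' u a' y))
      ≤ ∑ s', (Fintype.card H1 : ℝ)⁻¹ * Ex (Q1 s' u) fun a' => ind (T1 s' u a' y) := by
        refine Finset.sum_le_sum fun s' _ => ?_
        rw [Ex_mul_right]
        exact mul_le_mul_of_nonneg_right (Ex_collision s s')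
          (Ex_nonneg (hQ1 _ _).1 fun _ => ind_nonneg _)
    _ ≤ β / Fintype.card H1 := by
        rw [← Finset.mul_sum, div_eq_inv_mul]
        exact mul_le_mul_of_nonneg_left (hβ u y) (inv_nonneg.2 (Nat.cast_nonneg _))

lemma Ex_codeLaw_fst (hQ2 : ∀ s u, IsPMF (Q2 s u)) (s1 : S1) (s2 : S2)
    (w : Y → U0 → U1 → U2 → ℝ) (k : K0) (l1 : L1) (l2 : L2)
    (F : (K0 → U0) × (S1 × U0 × K0 × L1 → U1) → Y → ℝ) :
    Ex (codeLaw K0 L1 L2 P0 Q1 Q2) (fun c => ∑ y, atCode s1 s2 (w y) k l1 l2 c * F (c.1, c.2.1) y)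
      = Ex (pr (law0 K0 P0) (law1 K0 L1 Q1)) (fun c => ∑ y,
        (fun u a y => Ex (Q2 s2 u) (w y u a)) (c.1 k) (c.2 (s1, c.1 k, k, l1)) y * F c y) := by
  unfold codeLaw
  rw [Ex_pr, Ex_pr]
  refine congrArg _ (funext fun c0 => ?_)
  rw [Ex_pr]
  refine congrArg _ (funext fun c1 => ?_)
  rw [Ex_sum]
  refine Finset.sum_congr rfl fun y _ => ?_
  simp only [atCode]
  rw [Ex_mul_right]
  congr 1
  unfold law1
  exact Ex_one (P := fun k : S2 × U0 × K0 × L2 => Q2 k.1 k.2.1) (fun _ => hQ2 _ _)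
    (s2, c0 k, k, l2) (w y (c0 k) (c1 (s1, c0 k, k, l1)))

/-- The two satellite codebooks play symmetric roles. -/
lemma Ex_codeLaw_swap (F : Code S1 S2 U0 U1 U2 K0 L1 L2 → ℝ) :
    Ex (codeLaw K0 L1 L2 P0 Q1 Q2) F
      = Ex (codeLaw K0 L2 L1 P0 Q2 Q1) (fun c => F (c.1, c.2.2, c.2.1)) := by
  unfold codeLaw
  rw [Ex_pr, Ex_pr]
  refine congrArg _ (funext fun c0 => ?_)
  rw [Ex_pr, Ex_pr, Ex_comm]

lemma refMean_eq (s1 : S1) (s2 : S2) (g : U0 → U1 → U2 → ℝ) :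
    refMean P0 Q1 Q2 s1 s2 g = ∑ u, ∑ a, ∑ b, P0 u * Q1 s1 u a * Q2 s2 u b * g u a b := by
  simp only [refMean, Ex, Finset.mul_sum]
  exact Finset.sum_congr rfl fun _ _ => Finset.sum_congr rfl fun _ _ =>
    Finset.sum_congr rfl fun _ _ => by ring

lemma refMean_swap (s1 : S1) (s2 : S2) (g : U0 → U1 → U2 → ℝ) :
    refMean P0 Q1 Q2 s1 s2 g = refMean P0 Q2 Q1 s2 s1 (fun u b a => g u a b) := by
  unfold refMean
  exact congrArg _ (funext fun u => Ex_comm _ _ _)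

/-- Contribution of the first receiver to the error probability, with `w y u a b` the weight with
which the codeword triple `(u, a, b)` produces the output `y`. -/
lemma side_one [Nonempty S1] [Nonempty H1] (hP0 : IsPMF P0)
    (hQ1 : ∀ s u, IsPMF (Q1 s u)) (hQ2 : ∀ s u, IsPMF (Q2 s u))
    (T1 : S1 → U0 → U1 → Y → Prop) (ℓ : K0 → H1) (s1 : S1) (s2 : S2)
    (k : (S1 → H1) → K0) (l1 : L1) (l2 : L2)
    (hk : ∀ h, ℓ (k h) = h s1) (w : Y → U0 → U1 → U2 → ℝ) (hw : ∀ y u a b, 0 ≤ w y u a b)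
    {B β β' : ℝ}
    (hB : ∀ v, ∑ k, ind (ℓ k = v) ≤ B)
    (hβ : ∀ u y, ∑ s', (Ex (Q1 s' u) fun a => ind (T1 s' u a y)) ≤ β)
    (hβ' : ∀ y, ∑ s', (Ex P0 fun u => Ex (Q1 s' u) fun a => ind (T1 s' u a y)) ≤ β') :
    Ex (hashLaw S1 H1) (fun h => Ex (codeLaw K0 L1 L2 P0 Q1 Q2) (fun c =>
        ∑ y, atCode s1 s2 (w y) (k h) l1 l2 c * ind (decode T1 ℓ h c.1 c.2.1 y ≠ s1)))
      ≤ ∑ y, refMean P0 Q1 Q2 s1 s2 (fun u a b => w y u a b * (ind (¬ T1 s1 u a y)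
        + (Fintype.card L1 * β / Fintype.card H1 + B * Fintype.card L1 * β'))) := by
  have e : ∀ h, _ := fun h => Ex_codeLaw_fst (P0 := P0) (Q1 := Q1) hQ2 s1 s2 w (k h) l1 l2
    (fun c y => ind (decode T1 ℓ h c.1 c.2 y ≠ s1))
  simp only [] at e
  simp only [e]
  refine (Ex_hash_decode_err hP0 hQ1 T1 ℓ s1 k l1 hk (fun u a y => Ex (Q2 s2 u) (w y u a))
    (fun u a y => Ex_nonneg (hQ2 _ _).1 (hw _ _ _)) hB hβ hβ').trans (le_of_eq ?_)
  unfold refMean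
  simp only [Ex_mul_right]

end Side

end CSBC

/-! ### Density of the target law -/

namespace CSBC

/-- Selection bound: an error probability `e` with `e * N ≤ Z` is controlled by `Z`, by the mean
deficit `1 - μ` and, through `|N - μ| ≤ t + (N - μ) ^ 2 / t`, by the squared deviation of `N` from
its mean `μ`. -/
lemma select_le {e N Z μ t : ℝ} (he0 : 0 ≤ e) (he1 : e ≤ 1) (hZ : e * N ≤ Z) (hμ : μ ≤ 1)
    (ht : 0 < t) : e ≤ (1 - μ) + t + (N - μ) ^ 2 / t + Z := by
  have h1 : |N - μ| ≤ t + (N - μ) ^ 2 / t := by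
    rw [← sub_nonneg]
    have : t + (N - μ) ^ 2 / t - |N - μ| = (t ^ 2 + |N - μ| ^ 2 - t * |N - μ|) / t := by
      rw [sq_abs]; field_simp
    rw [this]
    exact div_nonneg (by nlinarith [sq_nonneg (t - |N - μ|), abs_nonneg (N - μ)]) ht.le
  have h2 : e * (μ - N) ≤ |N - μ| := by
    rw [abs_sub_comm]
    calc e * (μ - N) ≤ e * |μ - N| := mul_le_mul_of_nonneg_left (le_abs_self _) he0
      _ ≤ 1 * |μ - N| := mul_le_mul_of_nonneg_right he1 (abs_nonneg _)
      _ = _ := one_mul _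
  have h3 : e * (1 - μ) ≤ 1 * (1 - μ) := mul_le_mul_of_nonneg_right he1 (by linarith)
  nlinarith

section Density

variable {S1 S2 U0 U1 U2 X Y : Type*} [Fintype S1] [Fintype S2] [Fintype U0]
  [Fintype U1] [Fintype U2] [Fintype X] [Fintype Y]

/-- Density of the target law `K`, restricted to the typical set `T`, with respect to the reference
law of the codewords. -/
def dens (P0 : U0 → ℝ) (Q1 : S1 → U0 → U1 → ℝ) (Q2 : S2 → U0 → U2 → ℝ) (s1 : S1) (s2 : S2)
    (T : U0 → U1 → U2 → Prop) (K : U0 → U1 → U2 → X → ℝ) (x : X) (u : U0) (a : U1) (b : U2) : ℝ :=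
  ind (T u a b) * K u a b x / (P0 u * Q1 s1 u a * Q2 s2 u b)

variable {P0 : U0 → ℝ} {Q1 : S1 → U0 → U1 → ℝ} {Q2 : S2 → U0 → U2 → ℝ} {s1 : S1} {s2 : S2}
    {T : U0 → U1 → U2 → Prop} {K : U0 → U1 → U2 → X → ℝ} {α0 α1 α2 α3 : ℝ}

lemma dens_nonneg (hP0 : IsPMF P0) (hQ1 : ∀ s u, IsPMF (Q1 s u)) (hQ2 : ∀ s u, IsPMF (Q2 s u))
    (hK : ∀ u a b x, 0 ≤ K u a b x) (x : X) (u : U0) (a : U1) (b : U2) :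
    0 ≤ dens P0 Q1 Q2 s1 s2 T K x u a b :=
  div_nonneg (mul_nonneg (ind_nonneg _) (hK _ _ _ _))
    (mul_nonneg (mul_nonneg (hP0.1 _) ((hQ1 _ _).1 _)) ((hQ2 _ _).1 _))

lemma mul_dens (hK : ∀ u a b x, 0 ≤ K u a b x)
    (h3 : ∀ u a b, T u a b → ∑ x, K u a b x ≤ α3 * (P0 u * Q1 s1 u a * Q2 s2 u b))
    (x : X) (u : U0) (a : U1) (b : U2) :
    P0 u * Q1 s1 u a * Q2 s2 u b * dens P0 Q1 Q2 s1 s2 T K x u a b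
      = ind (T u a b) * K u a b x := by
  unfold dens
  by_cases hz : P0 u * Q1 s1 u a * Q2 s2 u b = 0
  · rw [hz]
    by_cases hT : T u a b
    · have := h3 u a b hT
      rw [hz, mul_zero] at this
      have hle := Finset.single_le_sum (fun x (_ : x ∈ Finset.univ) => hK u a b x)
        (Finset.mem_univ x)
      have : K u a b x = 0 := le_antisymm (hle.trans this) (hK _ _ _ _)
      simp [this]
    · simp [ind_of_not hT]
  · rw [mul_div_assoc', mul_div_cancel_left₀ _ hz]

/-- If `d * E ≤ α * d` and `E` vanishes with `d`, then `E ≤ α`. -/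
lemma le_of_mul_density {d E α : ℝ} (hd : 0 ≤ d) (hα : 0 ≤ α) (h0 : d = 0 → E = 0)
    (h : d * E ≤ α * d) : E ≤ α := by
  rcases hd.eq_or_lt with h' | h'
  · rw [h0 h'.symm]; exact hα
  · rw [mul_comm] at h
    exact le_of_mul_le_mul_right h h'

lemma dens_le3 (hP0 : IsPMF P0) (hQ1 : ∀ s u, IsPMF (Q1 s u)) (hQ2 : ∀ s u, IsPMF (Q2 s u))
    (hK : ∀ u a b x, 0 ≤ K u a b x) (p3 : 0 ≤ α3)
    (h3 : ∀ u a b, T u a b → ∑ x, K u a b x ≤ α3 * (P0 u * Q1 s1 u a * Q2 s2 u b))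
    (u : U0) (a : U1) (b : U2) : ∑ x, dens P0 Q1 Q2 s1 s2 T K x u a b ≤ α3 := by
  refine le_of_mul_density (d := P0 u * Q1 s1 u a * Q2 s2 u b)
    (mul_nonneg (mul_nonneg (hP0.1 _) ((hQ1 _ _).1 _)) ((hQ2 _ _).1 _)) p3
    (fun hz => Finset.sum_eq_zero fun x _ => by simp [dens, hz]) ?_
  simp only [Finset.mul_sum, mul_dens hK h3]
  rw [← Finset.mul_sum]
  by_cases hT : T u a b
  · rw [ind_of hT, one_mul]; exact h3 u a b hT
  · rw [ind_of_not hT, zero_mul]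
    exact mul_nonneg p3 (mul_nonneg (mul_nonneg (hP0.1 _) ((hQ1 _ _).1 _)) ((hQ2 _ _).1 _))

lemma ind_mul_sum_le (hK : ∀ u a b x, 0 ≤ K u a b x)
    (u : U0) (a : U1) (b : U2) :
    ∑ x, ind (T u a b) * K u a b x ≤ ∑ x, K u a b x :=
  Finset.sum_le_sum fun x _ => mul_le_of_le_one_left (hK _ _ _ _) (ind_le_one _)

lemma dens_le1 (hP0 : IsPMF P0) (hQ1 : ∀ s u, IsPMF (Q1 s u)) (hK : ∀ u a b x, 0 ≤ K u a b x)
    (p1 : 0 ≤ α1) (h1 : ∀ u a b, T u a b → ∑ b, ∑ x, K u a b x ≤ α1 * (P0 u * Q1 s1 u a))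
    (h3 : ∀ u a b, T u a b → ∑ x, K u a b x ≤ α3 * (P0 u * Q1 s1 u a * Q2 s2 u b))
    (u : U0) (a : U1) :
    Ex (Q2 s2 u) (fun b => ∑ x, dens P0 Q1 Q2 s1 s2 T K x u a b) ≤ α1 := by
  have nd : 0 ≤ P0 u * Q1 s1 u a := mul_nonneg (hP0.1 _) ((hQ1 _ _).1 _)
  refine le_of_mul_density nd p1
    (fun hz => Finset.sum_eq_zero fun b _ => by simp [dens, hz]) ?_
  have e : P0 u * Q1 s1 u a * Ex (Q2 s2 u) (fun b => ∑ x, dens P0 Q1 Q2 s1 s2 T K x u a b)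
      = ∑ b, ∑ x, ind (T u a b) * K u a b x := by
    simp only [← mul_dens hK h3, Ex, Finset.mul_sum]
    exact Finset.sum_congr rfl fun _ _ => Finset.sum_congr rfl fun _ _ => by ring
  rw [e]
  by_cases hT : ∃ b, T u a b
  · obtain ⟨b, hT⟩ := hT
    exact (Finset.sum_le_sum fun b _ => ind_mul_sum_le hK u a b).trans (h1 u a b hT)
  · push Not at hT
    simp only [ind_of_not (hT _), zero_mul, Finset.sum_const_zero]
    exact mul_nonneg p1 nd

lemma dens_le2 (hP0 : IsPMF P0) (hQ2 : ∀ s u, IsPMF (Q2 s u)) (hK : ∀ u a b x, 0 ≤ K u a b x)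
    (p2 : 0 ≤ α2) (h2 : ∀ u a b, T u a b → ∑ a, ∑ x, K u a b x ≤ α2 * (P0 u * Q2 s2 u b))
    (h3 : ∀ u a b, T u a b → ∑ x, K u a b x ≤ α3 * (P0 u * Q1 s1 u a * Q2 s2 u b))
    (u : U0) (b : U2) :
    Ex (Q1 s1 u) (fun a => ∑ x, dens P0 Q1 Q2 s1 s2 T K x u a b) ≤ α2 := by
  have nd : 0 ≤ P0 u * Q2 s2 u b := mul_nonneg (hP0.1 _) ((hQ2 _ _).1 _)
  refine le_of_mul_density nd p2 (fun hz => Finset.sum_eq_zero fun a _ => by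
      have : P0 u * Q1 s1 u a * Q2 s2 u b = 0 := by rw [mul_right_comm, hz, zero_mul]
      simp [dens, this]) ?_
  have e : P0 u * Q2 s2 u b * Ex (Q1 s1 u) (fun a => ∑ x, dens P0 Q1 Q2 s1 s2 T K x u a b)
      = ∑ a, ∑ x, ind (T u a b) * K u a b x := by
    simp only [← mul_dens hK h3, Ex, Finset.mul_sum]
    exact Finset.sum_congr rfl fun _ _ => Finset.sum_congr rfl fun _ _ => by ring
  rw [e]
  by_cases hT : ∃ a, T u a b
  · obtain ⟨a, hT⟩ := hT
    exact (Finset.sum_le_sum fun a _ => ind_mul_sum_le hK u a b).trans (h2 u a b hT)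
  · push Not at hT
    simp only [ind_of_not (hT _), zero_mul, Finset.sum_const_zero]
    exact mul_nonneg p2 nd

lemma dens_le0 (hP0 : IsPMF P0) (hK : ∀ u a b x, 0 ≤ K u a b x) (p0 : 0 ≤ α0)
    (h0 : ∀ u a b, T u a b → ∑ a, ∑ b, ∑ x, K u a b x ≤ α0 * P0 u)
    (h3 : ∀ u a b, T u a b → ∑ x, K u a b x ≤ α3 * (P0 u * Q1 s1 u a * Q2 s2 u b))
    (u : U0) : Ex (Q1 s1 u) (fun a => Ex (Q2 s2 u) fun b =>
    ∑ x, dens P0 Q1 Q2 s1 s2 T K x u a b) ≤ α0 := by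
  refine le_of_mul_density (hP0.1 u) p0 (fun hz => Finset.sum_eq_zero fun a _ => by
      simp [dens, hz, Ex]) ?_
  have e : P0 u * Ex (Q1 s1 u) (fun a => Ex (Q2 s2 u) fun b =>
      ∑ x, dens P0 Q1 Q2 s1 s2 T K x u a b) = ∑ a, ∑ b, ∑ x, ind (T u a b) * K u a b x := by
    simp only [← mul_dens hK h3, Ex, Finset.mul_sum]
    exact Finset.sum_congr rfl fun _ _ => Finset.sum_congr rfl fun _ _ =>
      Finset.sum_congr rfl fun _ _ => by ring
  rw [e]
  by_cases hT : ∃ a b, T u a b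
  · obtain ⟨a, b, hT⟩ := hT
    exact (Finset.sum_le_sum fun a _ => Finset.sum_le_sum fun b _ =>
      ind_mul_sum_le hK u a b).trans (h0 u a b hT)
  · push Not at hT
    simp only [ind_of_not (hT _ _), zero_mul, Finset.sum_const_zero]
    exact mul_nonneg p0 (hP0.1 _)

lemma one_sub_refMean_dens (hK : ∀ u a b x, 0 ≤ K u a b x)
    (h3 : ∀ u a b, T u a b → ∑ x, K u a b x ≤ α3 * (P0 u * Q1 s1 u a * Q2 s2 u b))
    (hK1 : ∑ u, ∑ a, ∑ b, ∑ x, K u a b x = 1) :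
    1 - refMean P0 Q1 Q2 s1 s2 (fun u a b => ∑ x, dens P0 Q1 Q2 s1 s2 T K x u a b)
      = ∑ u, ∑ a, ∑ b, ∑ x, K u a b x * ind (¬ T u a b) := by
  rw [refMean_eq, ← hK1]
  simp only [Finset.mul_sum, mul_dens hK h3, ← Finset.sum_sub_distrib]
  refine Finset.sum_congr rfl fun u _ => Finset.sum_congr rfl fun a _ =>
    Finset.sum_congr rfl fun b _ => Finset.sum_congr rfl fun x _ => ?_
  by_cases hT : T u a b
  · simp [ind_of hT, ind_of_not (not_not.2 hT)]
  · simp [ind_of hT, ind_of_not hT]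

lemma sum_refMean_dens_le (hK : ∀ u a b x, 0 ≤ K u a b x)
    (h3 : ∀ u a b, T u a b → ∑ x, K u a b x ≤ α3 * (P0 u * Q1 s1 u a * Q2 s2 u b))
    {W : X → Y → ℝ} (hW : ∀ x, IsPMF (W x)) (F : Y → U0 → U1 → U2 → ℝ)
    (hF : ∀ y u a b, 0 ≤ F y u a b) :
    ∑ y, refMean P0 Q1 Q2 s1 s2 (fun u a b =>
        (∑ x, dens P0 Q1 Q2 s1 s2 T K x u a b * W x y) * F y u a b)
      ≤ ∑ u, ∑ a, ∑ b, ∑ x, ∑ y, K u a b x * W x y * F y u a b := by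
  simp only [refMean_eq]
  rw [Finset.sum_comm]
  refine Finset.sum_le_sum fun u _ => ?_
  rw [Finset.sum_comm]
  refine Finset.sum_le_sum fun a _ => ?_
  rw [Finset.sum_comm]
  refine Finset.sum_le_sum fun b _ => ?_
  rw [Finset.sum_comm]
  refine Finset.sum_le_sum fun y _ => ?_
  rw [← mul_assoc, Finset.mul_sum, Finset.sum_mul]
  refine Finset.sum_le_sum fun x _ => ?_
  rw [← mul_assoc, mul_dens hK h3]
  exact mul_le_mul_of_nonneg_right (mul_le_mul_of_nonneg_right
    (mul_le_of_le_one_left (hK _ _ _ _) (ind_le_one _)) ((hW _).1 _)) (hF _ _ _ _)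

end Density

end CSBC

/-! ### One-shot coding theorem -/

namespace CSBC

section OneShot

variable {S1 S2 U0 U1 U2 X Y H1 H2 L0 L1 L2 : Type*} [Fintype S1] [Fintype S2] [Fintype U0]
  [Fintype U1] [Fintype U2] [Fintype X] [Fintype Y] [Fintype H1] [Fintype H2] [Fintype L0]
  [Fintype L1] [Fintype L2] [Nonempty S1] [Nonempty S2] [Nonempty H1] [Nonempty H2]
  [Nonempty L0] [Nonempty L1] [Nonempty L2]
  {P0 : U0 → ℝ} {Q1 : S1 → U0 → U1 → ℝ} {Q2 : S2 → U0 → U2 → ℝ}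

lemma ind_not_and_le (p q : Prop) : ind (¬ (p ∧ q)) ≤ ind (¬ p) + ind (¬ q) := by
  by_cases hp : p <;> by_cases hq : q <;> simp [ind, hp, hq]

/-- If the error probability `e` is minimal over the channel inputs, then it is at most the error
probability of a channel input drawn along the density `dens` from the available codewords. -/
lemma mul_avgCode_le (hP0 : IsPMF P0) (hQ1 : ∀ s u, IsPMF (Q1 s u))
    (hQ2 : ∀ s u, IsPMF (Q2 s u)) {s1 : S1} {s2 : S2} {T : U0 → U1 → U2 → Prop}
    {K : U0 → U1 → U2 → X → ℝ} (hK : ∀ u a b x, 0 ≤ K u a b x)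
    {W : X → Y → ℝ} (hW : ∀ x, IsPMF (W x)) {K0 : Type*} (m : L0 → K0)
    (c : Code S1 S2 U0 U1 U2 K0 L1 L2) (p q : Y → Prop) {e : ℝ}
    (he : ∀ x, e ≤ ∑ y, W x y * ind (¬ (p y ∧ q y))) :
    e * avgCode m s1 s2 (fun u a b => ∑ x, dens P0 Q1 Q2 s1 s2 T K x u a b) c
      ≤ (∑ l : L0 × L1 × L2, ∑ y, atCode s1 s2 (fun u a b =>
            ∑ x, dens P0 Q1 Q2 s1 s2 T K x u a b * W x y) (m l.1) l.2.1 l.2.2 c * ind (¬ p y))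
          / Fintype.card (L0 × L1 × L2)
        + (∑ l : L0 × L1 × L2, ∑ y, atCode s1 s2 (fun u a b =>
            ∑ x, dens P0 Q1 Q2 s1 s2 T K x u a b * W x y) (m l.1) l.2.1 l.2.2 c * ind (¬ q y))
          / Fintype.card (L0 × L1 × L2) := by
  unfold avgCode
  rw [← add_div, mul_div_assoc', ← Finset.sum_add_distrib, Finset.mul_sum]
  refine div_le_div_of_nonneg_right (Finset.sum_le_sum fun l _ => ?_) (Nat.cast_nonneg _)
  rw [← Finset.sum_add_distrib]
  simp only [← mul_add, atCode]
  set u := c.1 (m l.1)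
  set a := c.2.1 (s1, u, m l.1, l.2.1)
  set b := c.2.2 (s2, u, m l.1, l.2.2)
  simp only [Finset.sum_mul, Finset.mul_sum]
  rw [Finset.sum_comm]
  refine Finset.sum_le_sum fun x _ => ?_
  have hd := dens_nonneg (s1 := s1) (s2 := s2) (T := T) hP0 hQ1 hQ2 hK x u a b
  rw [mul_comm]
  refine (mul_le_mul_of_nonneg_left (he x) hd).trans ?_
  rw [Finset.mul_sum]
  refine Finset.sum_le_sum fun y _ => ?_
  rw [mul_assoc]
  exact mul_le_mul_of_nonneg_left (mul_le_mul_of_nonneg_left (ind_not_and_le _ _) ((hW _).1 _)) hd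

lemma fiber_fst (v : H1) : ∑ k : H1 × H2 × L0, ind (k.1 = v)
    ≤ (Fintype.card H2 * Fintype.card L0 : ℝ) := by
  rw [Fintype.sum_prod_type, Finset.sum_comm]
  simp [ind]

lemma fiber_snd (v : H2) : ∑ k : H1 × H2 × L0, ind (k.2.1 = v)
    ≤ (Fintype.card H1 * Fintype.card L0 : ℝ) := by
  simp only [Fintype.sum_prod_type]
  simp [ind]

lemma Ex_avg_le {C : Type*} [Fintype C] {w : C → ℝ} {Λ : Type*} [Fintype Λ] [Nonempty Λ]
    (f : Λ → C → ℝ) {M : ℝ} (h : ∀ l, Ex w (f l) ≤ M) :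
    Ex w (fun c => (∑ l, f l c) / Fintype.card Λ) ≤ M := by
  simp only [div_eq_mul_inv]
  rw [Ex_mul_right, Ex_sum, ← div_eq_mul_inv]
  have : (0 : ℝ) < Fintype.card Λ := by exact_mod_cast Fintype.card_pos
  rw [div_le_iff₀ this]
  refine (Finset.sum_le_sum fun l _ => h l).trans (le_of_eq ?_)
  simp [mul_comm]

variable {K0 : Type*} [Fintype K0] {lab1 : K0 → H1} {lab2 : K0 → H2} {mk : H1 → H2 → L0 → K0}

/-- Error probability for one fixed pair of source words, averaged over hash functions and
codebooks. -/
lemma source_bound (hl1 : ∀ a b l, lab1 (mk a b l) = a) (hl2 : ∀ a b l, lab2 (mk a b l) = b)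
    (hmk : ∀ a b, Function.Injective (mk a b))
    (hf1 : ∀ v, ∑ k, ind (lab1 k = v) ≤ (Fintype.card H2 * Fintype.card L0 : ℝ))
    (hf2 : ∀ v, ∑ k, ind (lab2 k = v) ≤ (Fintype.card H1 * Fintype.card L0 : ℝ))
    (hP0 : IsPMF P0) (hQ1 : ∀ s u, IsPMF (Q1 s u))
    (hQ2 : ∀ s u, IsPMF (Q2 s u)) (s1 : S1) (s2 : S2) (T : U0 → U1 → U2 → Prop)
    {K : U0 → U1 → U2 → X → ℝ} (hK : ∀ u a b x, 0 ≤ K u a b x)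
    (hK1 : ∑ u, ∑ a, ∑ b, ∑ x, K u a b x = 1)
    {W : X → Y → ℝ} (hW : ∀ x, IsPMF (W x)) {α0 α1 α2 α3 : ℝ}
    (p0 : 0 ≤ α0) (p1 : 0 ≤ α1) (p2 : 0 ≤ α2) (p3 : 0 ≤ α3)
    (h0 : ∀ u a b, T u a b → ∑ a, ∑ b, ∑ x, K u a b x ≤ α0 * P0 u)
    (h1 : ∀ u a b, T u a b → ∑ b, ∑ x, K u a b x ≤ α1 * (P0 u * Q1 s1 u a))
    (h2 : ∀ u a b, T u a b → ∑ a, ∑ x, K u a b x ≤ α2 * (P0 u * Q2 s2 u b))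
    (h3 : ∀ u a b, T u a b → ∑ x, K u a b x ≤ α3 * (P0 u * Q1 s1 u a * Q2 s2 u b))
    (T1 : S1 → U0 → U1 → Y → Prop) (T2 : S2 → U0 → U2 → Y → Prop) {β1 β1' β2 β2' : ℝ}
    (g1 : ∀ u y, ∑ s', (Ex (Q1 s' u) fun a => ind (T1 s' u a y)) ≤ β1)
    (g1' : ∀ y, ∑ s', (Ex P0 fun u => Ex (Q1 s' u) fun a => ind (T1 s' u a y)) ≤ β1')
    (g2 : ∀ u y, ∑ s', (Ex (Q2 s' u) fun a => ind (T2 s' u a y)) ≤ β2)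
    (g2' : ∀ y, ∑ s', (Ex P0 fun u => Ex (Q2 s' u) fun a => ind (T2 s' u a y)) ≤ β2')
    (n1 : 0 ≤ β1) (n1' : 0 ≤ β1') (n2 : 0 ≤ β2) (n2' : 0 ≤ β2')
    {t : ℝ} (ht : 0 < t)
    (em : (S1 → H1) × (S2 → H2) → Code S1 S2 U0 U1 U2 K0 L1 L2 → ℝ)
    (em0 : ∀ h c, 0 ≤ em h c) (em1 : ∀ h c, em h c ≤ 1)
    (hem : ∀ h c x, em h c ≤ ∑ y, W x y * ind (¬ (decode T1 lab1 h.1 c.1 c.2.1 y = s1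
      ∧ decode T2 lab2 h.2 c.1 c.2.2 y = s2))) :
    Ex (pr (hashLaw S1 H1) (hashLaw S2 H2)) (fun h =>
        Ex (codeLaw K0 L1 L2 P0 Q1 Q2) (em h))
      ≤ (∑ u, ∑ a, ∑ b, ∑ x, K u a b x * ind (¬ T u a b)) + t
        + (α0 / Fintype.card L0 + α1 / (Fintype.card L0 * Fintype.card L1)
          + α2 / (Fintype.card L0 * Fintype.card L2)
          + α3 / (Fintype.card L0 * Fintype.card L1 * Fintype.card L2)) / t
        + ((∑ u, ∑ a, ∑ b, ∑ x, ∑ y, K u a b x * W x y * ind (¬ T1 s1 u a y))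
          + (Fintype.card L1 * β1 / Fintype.card H1
            + Fintype.card H2 * Fintype.card L0 * Fintype.card L1 * β1'))
        + ((∑ u, ∑ a, ∑ b, ∑ x, ∑ y, K u a b x * W x y * ind (¬ T2 s2 u b y))
          + (Fintype.card L2 * β2 / Fintype.card H2
            + Fintype.card H1 * Fintype.card L0 * Fintype.card L2 * β2')) := by
  set D1 : ℝ := Fintype.card L1 * β1 / Fintype.card H1
            + Fintype.card H2 * Fintype.card L0 * Fintype.card L1 * β1' with hD1
  set D2 : ℝ := Fintype.card L2 * β2 / Fintype.card H2
            + Fintype.card H1 * Fintype.card L0 * Fintype.card L2 * β2' with hD2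
  have nD1 : 0 ≤ D1 := by positivity
  have nD2 : 0 ≤ D2 := by positivity
  set g : U0 → U1 → U2 → ℝ := fun u a b => ∑ x, dens P0 Q1 Q2 s1 s2 T K x u a b with hg
  set μ := refMean P0 Q1 Q2 s1 s2 g with hμ
  set w : Y → U0 → U1 → U2 → ℝ := fun y u a b =>
    ∑ x, dens P0 Q1 Q2 s1 s2 T K x u a b * W x y with hw
  have ng : ∀ u a b, 0 ≤ g u a b := fun u a b =>
    Finset.sum_nonneg fun x _ => dens_nonneg hP0 hQ1 hQ2 hK x u a b
  have nw : ∀ y u a b, 0 ≤ w y u a b := fun y u a b =>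
    Finset.sum_nonneg fun x _ => mul_nonneg (dens_nonneg hP0 hQ1 hQ2 hK x u a b) ((hW _).1 _)
  have hμ1 : 1 - μ = ∑ u, ∑ a, ∑ b, ∑ x, K u a b x * ind (¬ T u a b) :=
    one_sub_refMean_dens hK h3 hK1
  have hμle : μ ≤ 1 := by
    rw [← sub_nonneg, hμ1]
    exact Finset.sum_nonneg fun u _ => Finset.sum_nonneg fun a _ => Finset.sum_nonneg fun b _ =>
      Finset.sum_nonneg fun x _ => mul_nonneg (hK _ _ _ _) (ind_nonneg _)
  set m : (S1 → H1) × (S2 → H2) → L0 → K0 := fun h l => mk (h.1 s1) (h.2 s2) l with hm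
  have hmi : ∀ h, Function.Injective (m h) := fun h => hmk _ _
  have hcode := isPMF_codeLaw (K0 := K0) (L1 := L1) (L2 := L2) hP0 hQ1 hQ2
  have hhash := isPMF_pr (isPMF_hashLaw (S1 := S1) (H1 := H1)) (isPMF_hashLaw (S1 := S2) (H1 := H2))
  have step : ∀ h c, em h c ≤ ((1 - μ) + t) + ((avgCode (m h) s1 s2 g c - μ) ^ 2 * t⁻¹
      + ((∑ l : L0 × L1 × L2, ∑ y, atCode s1 s2 (w y) (m h l.1) l.2.1 l.2.2 c
            * ind (decode T1 lab1 h.1 c.1 c.2.1 y ≠ s1)) / Fintype.card (L0 × L1 × L2)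
        + (∑ l : L0 × L1 × L2, ∑ y, atCode s1 s2 (w y) (m h l.1) l.2.1 l.2.2 c
            * ind (decode T2 lab2 h.2 c.1 c.2.2 y ≠ s2))
              / Fintype.card (L0 × L1 × L2))) := by
    intro h c
    have := select_le (em0 h c) (em1 h c) (mul_avgCode_le (s1 := s1)
      (s2 := s2) hP0 hQ1 hQ2 (T := T) hK hW (m h) c
      (fun y => decode T1 lab1 h.1 c.1 c.2.1 y = s1)
      (fun y => decode T2 lab2 h.2 c.1 c.2.2 y = s2) (hem h c)) hμle ht
    rw [← div_eq_mul_inv, ← add_assoc]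
    exact this
  refine (Ex_mono hhash.1 fun h => Ex_mono hcode.1 fun c => step h c).trans ?_
  simp only [Ex_add, Ex_const hcode, Ex_const hhash, Ex_mul_right]
  rw [← hμ1]
  -- the number of available codewords, weighted by the density, concentrates around `μ`
  have hV : ∀ h, Ex (codeLaw K0 L1 L2 P0 Q1 Q2)
      (fun c => (avgCode (m h) s1 s2 g c - μ) ^ 2)
      ≤ α0 / Fintype.card L0 + α1 / (Fintype.card L0 * Fintype.card L1)
        + α2 / (Fintype.card L0 * Fintype.card L2)
        + α3 / (Fintype.card L0 * Fintype.card L1 * Fintype.card L2) := fun h =>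
    Ex_avgCode_sq hP0 hQ1 hQ2 (m h) (hmi h) s1 s2 g ng p0 p1 p2 p3
      (dens_le0 hP0 hK p0 h0 h3) (dens_le1 hP0 hQ1 hK p1 h1 h3) (dens_le2 hP0 hQ2 hK p2 h2 h3)
      (dens_le3 hP0 hQ1 hQ2 hK p3 h3) hμle
  have hV' : Ex (pr (hashLaw S1 H1) (hashLaw S2 H2)) (fun h =>
      Ex (codeLaw K0 L1 L2 P0 Q1 Q2) (fun c => (avgCode (m h) s1 s2 g c - μ) ^ 2))
      ≤ _ := (Ex_mono hhash.1 hV).trans (le_of_eq (Ex_const hhash _))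
  have hV'' := mul_le_mul_of_nonneg_right hV' (inv_nonneg.2 ht.le)
  rw [← div_eq_mul_inv (α0 / _ + _ + _ + _) t] at hV''
  have hKW : ∀ D : ℝ, ∑ u, ∑ a, ∑ b, ∑ x, ∑ y, K u a b x * W x y * D = D := by
    intro D
    simp only [← Finset.sum_mul, ← Finset.mul_sum, (hW _).2, mul_one, hK1, one_mul]
  -- conditionally on the codeword triple that is sent, the other codewords are fresh, so the error
  -- of the first receiver is bounded under the target law
  have hR1 : Ex (pr (hashLaw S1 H1) (hashLaw S2 H2)) (fun h =>
      Ex (codeLaw K0 L1 L2 P0 Q1 Q2) (fun c =>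
        (∑ l : L0 × L1 × L2, ∑ y, atCode s1 s2 (w y) (m h l.1) l.2.1 l.2.2 c
            * ind (decode T1 lab1 h.1 c.1 c.2.1 y ≠ s1)) / Fintype.card (L0 × L1 × L2)))
      ≤ (∑ u, ∑ a, ∑ b, ∑ x, ∑ y, K u a b x * W x y * ind (¬ T1 s1 u a y)) + D1 := by
    rw [← Ex_pr (pr (hashLaw S1 H1) (hashLaw S2 H2)) (codeLaw K0 L1 L2 P0 Q1 Q2)
      (fun d => (∑ l : L0 × L1 × L2, ∑ y, atCode s1 s2 (w y) (m d.1 l.1) l.2.1 l.2.2 d.2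
            * ind (decode T1 lab1 d.1.1 d.2.1 d.2.2.1 y ≠ s1))
              / Fintype.card (L0 × L1 × L2))]
    refine Ex_avg_le _ fun l => ?_
    rw [Ex_pr, Ex_pr, Ex_comm]
    refine (Ex_mono isPMF_hashLaw.1 fun h2 => side_one hP0 hQ1 hQ2 T1 lab1 s1 s2
      (fun h1 => m (h1, h2) l.1) l.2.1 l.2.2 (fun _ => hl1 _ _ _) w nw hf1 g1 g1').trans ?_
    rw [Ex_const isPMF_hashLaw]
    refine (sum_refMean_dens_le hK h3 hW (fun y u a b => ind (¬ T1 s1 u a y) + D1)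
      (fun y u a b => add_nonneg (ind_nonneg _) nD1)).trans (le_of_eq ?_)
    simp only [mul_add, Finset.sum_add_distrib]
    rw [hKW]
  -- the same bound after exchanging the two satellite codebooks
  have hR2 : Ex (pr (hashLaw S1 H1) (hashLaw S2 H2)) (fun h =>
      Ex (codeLaw K0 L1 L2 P0 Q1 Q2) (fun c =>
        (∑ l : L0 × L1 × L2, ∑ y, atCode s1 s2 (w y) (m h l.1) l.2.1 l.2.2 c
            * ind (decode T2 lab2 h.2 c.1 c.2.2 y ≠ s2))
              / Fintype.card (L0 × L1 × L2)))
      ≤ (∑ u, ∑ a, ∑ b, ∑ x, ∑ y, K u a b x * W x y * ind (¬ T2 s2 u b y)) + D2 := by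
    rw [← Ex_pr (pr (hashLaw S1 H1) (hashLaw S2 H2)) (codeLaw K0 L1 L2 P0 Q1 Q2)
      (fun d => (∑ l : L0 × L1 × L2, ∑ y, atCode s1 s2 (w y) (m d.1 l.1) l.2.1 l.2.2 d.2
            * ind (decode T2 lab2 d.1.2 d.2.1 d.2.2.2 y ≠ s2))
              / Fintype.card (L0 × L1 × L2))]
    refine Ex_avg_le _ fun l => ?_
    rw [Ex_pr, Ex_pr]
    simp only [Ex_codeLaw_swap (Q1 := Q1)]
    refine (Ex_mono isPMF_hashLaw.1 fun h1 => side_one hP0 hQ2 hQ1 T2 lab2 s2 s1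
      (fun h2 => m (h1, h2) l.1) l.2.2 l.2.1 (fun _ => hl2 _ _ _) (fun y u b a => w y u a b)
      (fun y u b a => nw y u a b) hf2 g2 g2').trans ?_
    rw [Ex_const isPMF_hashLaw]
    simp only [← refMean_swap (Q1 := Q1)]
    exact ((sum_refMean_dens_le (s1 := s1) (s2 := s2)
      (Q1 := Q1) (Q2 := Q2) hK h3 hW (fun y u a b => ind (¬ T2 s2 u b y) + D2)
      (fun y u a b => add_nonneg (ind_nonneg _) nD2)).trans (le_of_eq (by
        simp only [mul_add, Finset.sum_add_distrib]
        rw [hKW])))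
  linarith

/-- The one-shot coding theorem for an abstract set of cloud indices: `mk a b l` is the index with
hash labels `a`, `b` and free part `l`. -/
theorem oneShot_aux {S Y1 Y2 : Type*} [Fintype S] [Nonempty X] (a1 : S → S1) (a2 : S → S2)
    (b1 : Y → Y1) (b2 : Y → Y2) {q : S → ℝ} (hq : IsPMF q)
    (hP0 : IsPMF P0) (hQ1 : ∀ s u, IsPMF (Q1 s u))
    (hQ2 : ∀ s u, IsPMF (Q2 s u)) (T : S → U0 → U1 → U2 → Prop)
    {K : S → U0 → U1 → U2 → X → ℝ} (hK : ∀ s u a b x, 0 ≤ K s u a b x)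
    (hK1 : ∀ s, ∑ u, ∑ a, ∑ b, ∑ x, K s u a b x = 1)
    {W : X → Y → ℝ} (hW : ∀ x, IsPMF (W x)) {α0 α1 α2 α3 : ℝ}
    (p0 : 0 ≤ α0) (p1 : 0 ≤ α1) (p2 : 0 ≤ α2) (p3 : 0 ≤ α3)
    (h0 : ∀ s u a b, T s u a b → ∑ a, ∑ b, ∑ x, K s u a b x ≤ α0 * P0 u)
    (h1 : ∀ s u a b, T s u a b → ∑ b, ∑ x, K s u a b x ≤ α1 * (P0 u * Q1 (a1 s) u a))
    (h2 : ∀ s u a b, T s u a b → ∑ a, ∑ x, K s u a b x ≤ α2 * (P0 u * Q2 (a2 s) u b))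
    (h3 : ∀ s u a b, T s u a b →
      ∑ x, K s u a b x ≤ α3 * (P0 u * Q1 (a1 s) u a * Q2 (a2 s) u b))
    (T1 : S1 → U0 → U1 → Y1 → Prop) (T2 : S2 → U0 → U2 → Y2 → Prop) {β1 β1' β2 β2' : ℝ}
    (g1 : ∀ u y, ∑ s', (Ex (Q1 s' u) fun a => ind (T1 s' u a y)) ≤ β1)
    (g1' : ∀ y, ∑ s', (Ex P0 fun u => Ex (Q1 s' u) fun a => ind (T1 s' u a y)) ≤ β1')
    (g2 : ∀ u y, ∑ s', (Ex (Q2 s' u) fun a => ind (T2 s' u a y)) ≤ β2)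
    (g2' : ∀ y, ∑ s', (Ex P0 fun u => Ex (Q2 s' u) fun a => ind (T2 s' u a y)) ≤ β2')
    (n1 : 0 ≤ β1) (n1' : 0 ≤ β1') (n2 : 0 ≤ β2) (n2' : 0 ≤ β2')
    {t : ℝ} (ht : 0 < t) (hl1 : ∀ a b l, lab1 (mk a b l) = a)
    (hl2 : ∀ a b l, lab2 (mk a b l) = b)
    (hmk : ∀ a b, Function.Injective (mk a b))
    (hf1 : ∀ v, ∑ k, ind (lab1 k = v) ≤ (Fintype.card H2 * Fintype.card L0 : ℝ))
    (hf2 : ∀ v, ∑ k, ind (lab2 k = v) ≤ (Fintype.card H1 * Fintype.card L0 : ℝ))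
    (L1 L2 : Type*) [Fintype L1] [Fintype L2] [Nonempty L1] [Nonempty L2] :
    ∃ (enc : S → X) (dec1 : Y1 → S1) (dec2 : Y2 → S2),
      ∑ s, q s * ∑ y, W (enc s) y * ind (¬ (dec1 (b1 y) = a1 s ∧ dec2 (b2 y) = a2 s))
      ≤ (∑ s, q s * ∑ u, ∑ a, ∑ b, ∑ x, K s u a b x * ind (¬ T s u a b)) + t
        + (α0 / Fintype.card L0 + α1 / (Fintype.card L0 * Fintype.card L1)
          + α2 / (Fintype.card L0 * Fintype.card L2)
          + α3 / (Fintype.card L0 * Fintype.card L1 * Fintype.card L2)) / t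
        + ((∑ s, q s * ∑ u, ∑ a, ∑ b, ∑ x, ∑ y,
              K s u a b x * W x y * ind (¬ T1 (a1 s) u a (b1 y)))
          + (Fintype.card L1 * β1 / Fintype.card H1
            + Fintype.card H2 * Fintype.card L0 * Fintype.card L1 * β1'))
        + ((∑ s, q s * ∑ u, ∑ a, ∑ b, ∑ x, ∑ y,
              K s u a b x * W x y * ind (¬ T2 (a2 s) u b (b2 y)))
          + (Fintype.card L2 * β2 / Fintype.card H2
            + Fintype.card H1 * Fintype.card L0 * Fintype.card L2 * β2')) := by
  set dec1 : (S1 → H1) × (S2 → H2) → Code S1 S2 U0 U1 U2 K0 L1 L2 → Y1 → S1 :=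
    fun h c => decode T1 lab1 h.1 c.1 c.2.1
  set dec2 : (S1 → H1) × (S2 → H2) → Code S1 S2 U0 U1 U2 K0 L1 L2 → Y2 → S2 :=
    fun h c => decode T2 lab2 h.2 c.1 c.2.2
  set err : (S1 → H1) × (S2 → H2) → Code S1 S2 U0 U1 U2 K0 L1 L2 → S → X → ℝ :=
    fun h c s x => ∑ y, W x y * ind (¬ (dec1 h c (b1 y) = a1 s ∧ dec2 h c (b2 y) = a2 s))
    with herr
  have hmin : ∀ h c s, ∃ x, ∀ x', err h c s x ≤ err h c s x' :=
    fun h c s => Finite.exists_min (err h c s)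
  choose enc henc using hmin
  have e0 : ∀ h c s x, 0 ≤ err h c s x := fun h c s x =>
    Finset.sum_nonneg fun y _ => mul_nonneg ((hW _).1 _) (ind_nonneg _)
  have e1 : ∀ h c s x, err h c s x ≤ 1 := fun h c s x => by
    rw [← (hW x).2]
    exact Finset.sum_le_sum fun y _ => mul_le_of_le_one_right ((hW _).1 _) (ind_le_one _)
  have hcode := isPMF_codeLaw (K0 := K0) (L1 := L1) (L2 := L2) hP0 hQ1 hQ2
  have hhash := isPMF_pr (isPMF_hashLaw (S1 := S1) (H1 := H1)) (isPMF_hashLaw (S1 := S2) (H1 := H2))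
  obtain ⟨⟨h, c⟩, hc⟩ := exists_le_Ex (isPMF_pr hhash hcode)
    (fun d => ∑ s, q s * err d.1 d.2 s (enc d.1 d.2 s))
  refine ⟨enc h c, dec1 h c, dec2 h c, hc.trans ?_⟩
  rw [Ex_sum]
  have key : ∀ s, _ := fun s => source_bound hl1 hl2 hmk hf1 hf2 hP0 hQ1 hQ2 (a1 s) (a2 s) (T s) (hK s) (hK1 s) hW
    p0 p1 p2 p3 (h0 s) (h1 s) (h2 s) (h3 s) (fun s u a y => T1 s u a (b1 y))
    (fun s u a y => T2 s u a (b2 y)) (fun u y => g1 u (b1 y)) (fun y => g1' (b1 y))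
    (fun u y => g2 u (b2 y)) (fun y => g2' (b2 y)) n1 n1' n2 n2' ht
    (fun (h : (S1 → H1) × (S2 → H2)) (c : Code S1 S2 U0 U1 U2 K0 L1 L2) =>
      err h c s (enc h c s)) (fun _ _ => e0 _ _ _ _) (fun _ _ => e1 _ _ _ _)
      (fun h c x => henc h c s x)
  have conv : ∀ s, Ex (pr (pr (hashLaw S1 H1) (hashLaw S2 H2))
      (codeLaw K0 L1 L2 P0 Q1 Q2)) (fun d => q s * err d.1 d.2 s (enc d.1 d.2 s))
      = q s * Ex (pr (hashLaw S1 H1) (hashLaw S2 H2)) (fun h =>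
        Ex (codeLaw K0 L1 L2 P0 Q1 Q2) (fun c => err h c s (enc h c s))) := by
    intro s
    rw [Ex_mul_left, Ex_pr]
  simp only [conv]
  refine (Finset.sum_le_sum fun s _ => mul_le_mul_of_nonneg_left (key s) (hq.1 s)).trans
    (le_of_eq ?_)
  simp only [mul_add, Finset.sum_add_distrib, ← Finset.sum_mul, hq.2, one_mul]

/-- One-shot coding theorem: a code whose error probability is at most the probability that the
target law violates the tests `T`, `T1`, `T2`, plus the terms coming from the random choice of the
codebooks. -/
theorem oneShot {S Y1 Y2 : Type*} [Fintype S] [Nonempty X] (a1 : S → S1) (a2 : S → S2)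
    (b1 : Y → Y1) (b2 : Y → Y2) {q : S → ℝ} (hq : IsPMF q)
    (hP0 : IsPMF P0) (hQ1 : ∀ s u, IsPMF (Q1 s u))
    (hQ2 : ∀ s u, IsPMF (Q2 s u)) (T : S → U0 → U1 → U2 → Prop)
    {K : S → U0 → U1 → U2 → X → ℝ} (hK : ∀ s u a b x, 0 ≤ K s u a b x)
    (hK1 : ∀ s, ∑ u, ∑ a, ∑ b, ∑ x, K s u a b x = 1)
    {W : X → Y → ℝ} (hW : ∀ x, IsPMF (W x)) {α0 α1 α2 α3 : ℝ}
    (p0 : 0 ≤ α0) (p1 : 0 ≤ α1) (p2 : 0 ≤ α2) (p3 : 0 ≤ α3)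
    (h0 : ∀ s u a b, T s u a b → ∑ a, ∑ b, ∑ x, K s u a b x ≤ α0 * P0 u)
    (h1 : ∀ s u a b, T s u a b → ∑ b, ∑ x, K s u a b x ≤ α1 * (P0 u * Q1 (a1 s) u a))
    (h2 : ∀ s u a b, T s u a b → ∑ a, ∑ x, K s u a b x ≤ α2 * (P0 u * Q2 (a2 s) u b))
    (h3 : ∀ s u a b, T s u a b →
      ∑ x, K s u a b x ≤ α3 * (P0 u * Q1 (a1 s) u a * Q2 (a2 s) u b))
    (T1 : S1 → U0 → U1 → Y1 → Prop) (T2 : S2 → U0 → U2 → Y2 → Prop) {β1 β1' β2 β2' : ℝ}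
    (g1 : ∀ u y, ∑ s', (Ex (Q1 s' u) fun a => ind (T1 s' u a y)) ≤ β1)
    (g1' : ∀ y, ∑ s', (Ex P0 fun u => Ex (Q1 s' u) fun a => ind (T1 s' u a y)) ≤ β1')
    (g2 : ∀ u y, ∑ s', (Ex (Q2 s' u) fun a => ind (T2 s' u a y)) ≤ β2)
    (g2' : ∀ y, ∑ s', (Ex P0 fun u => Ex (Q2 s' u) fun a => ind (T2 s' u a y)) ≤ β2')
    (n1 : 0 ≤ β1) (n1' : 0 ≤ β1') (n2 : 0 ≤ β2) (n2' : 0 ≤ β2')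
    {t : ℝ} (ht : 0 < t) (H1 H2 L0 L1 L2 : Type*) [Fintype H1] [Fintype H2] [Fintype L0]
    [Fintype L1] [Fintype L2] [Nonempty H1] [Nonempty H2]
    [Nonempty L0] [Nonempty L1] [Nonempty L2] :
    ∃ (enc : S → X) (dec1 : Y1 → S1) (dec2 : Y2 → S2),
      ∑ s, q s * ∑ y, W (enc s) y * ind (¬ (dec1 (b1 y) = a1 s ∧ dec2 (b2 y) = a2 s))
      ≤ (∑ s, q s * ∑ u, ∑ a, ∑ b, ∑ x, K s u a b x * ind (¬ T s u a b)) + t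
        + (α0 / Fintype.card L0 + α1 / (Fintype.card L0 * Fintype.card L1)
          + α2 / (Fintype.card L0 * Fintype.card L2)
          + α3 / (Fintype.card L0 * Fintype.card L1 * Fintype.card L2)) / t
        + ((∑ s, q s * ∑ u, ∑ a, ∑ b, ∑ x, ∑ y,
              K s u a b x * W x y * ind (¬ T1 (a1 s) u a (b1 y)))
          + (Fintype.card L1 * β1 / Fintype.card H1
            + Fintype.card H2 * Fintype.card L0 * Fintype.card L1 * β1'))
        + ((∑ s, q s * ∑ u, ∑ a, ∑ b, ∑ x, ∑ y,
              K s u a b x * W x y * ind (¬ T2 (a2 s) u b (b2 y)))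
          + (Fintype.card L2 * β2 / Fintype.card H2
            + Fintype.card H1 * Fintype.card L0 * Fintype.card L2 * β2')) :=
  oneShot_aux (mk := fun a b l => ((a, b, l) : H1 × H2 × L0)) (lab1 := fun k => k.1)
    (lab2 := fun k => k.2.1) a1 a2 b1 b2 hq hP0 hQ1 hQ2 T hK hK1 hW p0 p1 p2 p3 h0 h1 h2 h3 T1 T2
    g1 g1' g2 g2' n1 n1' n2 n2' ht (fun _ _ _ => rfl) (fun _ _ _ => rfl)
    (fun a b l l' h => by simpa using h) fiber_fst fiber_snd L1 L2

end OneShot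

end CSBC

/-! ### Entropy inequalities and the law of large numbers -/

namespace CSBC

section Info

variable {Ω A B C : Type*} [Fintype Ω] [Fintype A] [Fintype B] [Fintype C] {p : Ω → ℝ}

lemma dist_nonneg' (hp : IsPMF p) (X : Ω → A) (a : A) : 0 ≤ dist p X a :=
  Finset.sum_nonneg fun ω _ => by split_ifs <;> simp [hp.1 ω]

lemma dist_pos (hp : IsPMF p) (X : Ω → A) {ω : Ω} (h : 0 < p ω) : 0 < dist p X (X ω) := by
  refine h.trans_le ?_
  have := Finset.single_le_sum (f := fun ω' => if X ω' = X ω then p ω' else 0)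
    (fun ω' _ => by split_ifs <;> simp [hp.1 ω']) (Finset.mem_univ ω)
  simpa [dist] using this

lemma sum_dist_mul (X : Ω → A) (f : A → ℝ) :
    ∑ a, dist p X a * f a = ∑ ω, p ω * f (X ω) := by
  simp only [dist, Finset.sum_mul]
  rw [Finset.sum_comm]
  exact Finset.sum_congr rfl fun ω _ => by simp

lemma isPMF_dist (hp : IsPMF p) (X : Ω → A) : IsPMF (dist p X) := by
  refine ⟨dist_nonneg' hp X, ?_⟩
  have := sum_dist_mul (p := p) X (fun _ => 1)
  simpa [hp.2] using this

/-- Entropy is minus the mean of the log-probability. -/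
lemma Ex_log_dist (X : Ω → A) : Ex p (fun ω => Real.log (dist p X (X ω))) = -H p X := by
  unfold H Ex
  rw [sum_dist_mul X (fun a => Real.log (dist p X a)), neg_neg]

lemma H_comp_injective (X : Ω → A) (e : A → B) (he : Function.Injective e) :
    H p (fun ω => e (X ω)) = H p X := by
  rw [← neg_inj, ← Ex_log_dist, ← Ex_log_dist]
  simp only [dist, he.eq_iff]

lemma sum_dist_snd (X : Ω → A) (Y : Ω → B) (a : A) :
    ∑ b, dist p (fun ω => (X ω, Y ω)) (a, b) = dist p X a := by
  simp only [dist]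
  rw [Finset.sum_comm]
  refine Finset.sum_congr rfl fun ω _ => ?_
  by_cases h : X ω = a <;> simp [h]

lemma sum_dist_fst (X : Ω → A) (Y : Ω → B) (b : B) :
    ∑ a, dist p (fun ω => (X ω, Y ω)) (a, b) = dist p Y b := by
  simp only [dist]
  rw [Finset.sum_comm]
  refine Finset.sum_congr rfl fun ω _ => ?_
  by_cases h : Y ω = b <;> simp [h]

/-- The basic Shannon inequality, from `log x ≤ x - 1` applied to the ratio of `p(x|z) p(y|z)` and
`p(x,y|z)`. -/
lemma CI_nonneg (hp : IsPMF p) (X : Ω → A) (Y : Ω → B) (Z : Ω → C) : 0 ≤ CI p X Y Z := by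
  set dXZ := dist p (fun ω => (X ω, Z ω))
  set dYZ := dist p (fun ω => (Y ω, Z ω))
  set dXYZ := dist p (fun ω => (X ω, Y ω, Z ω))
  set dZ := dist p Z
  set F : A × B × C → ℝ := fun v => dXZ (v.1, v.2.2) * dYZ (v.2.1, v.2.2) / (dXYZ v * dZ v.2.2)
    with hF
  have e : -CI p X Y Z = Ex p (fun ω => Real.log (dXZ (X ω, Z ω)))
      + Ex p (fun ω => Real.log (dYZ (Y ω, Z ω)))
      + -1 * Ex p (fun ω => Real.log (dXYZ (X ω, Y ω, Z ω)))
      + -1 * Ex p (fun ω => Real.log (dZ (Z ω))) := by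
    have h1 := Ex_log_dist (p := p) (fun ω => (X ω, Z ω))
    have h2 := Ex_log_dist (p := p) (fun ω => (Y ω, Z ω))
    have h3 := Ex_log_dist (p := p) (fun ω => (X ω, Y ω, Z ω))
    have h4 := Ex_log_dist (p := p) Z
    simp only [dXZ, dYZ, dXYZ, dZ]
    rw [h1, h2, h3, h4]
    unfold CI
    ring
  have hle : -CI p X Y Z ≤ ∑ ω, p ω * (F (X ω, Y ω, Z ω) - 1) := by
    rw [e, ← Ex_mul_left, ← Ex_mul_left, ← Ex_add, ← Ex_add, ← Ex_add]
    refine Finset.sum_le_sum fun ω _ => ?_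
    rcases (hp.1 ω).eq_or_lt with h | h
    · simp [← h]
    · refine mul_le_mul_of_nonneg_left ?_ h.le
      have h1 : 0 < dXZ (X ω, Z ω) := dist_pos hp (fun ω => (X ω, Z ω)) h
      have h2 : 0 < dYZ (Y ω, Z ω) := dist_pos hp (fun ω => (Y ω, Z ω)) h
      have h3 : 0 < dXYZ (X ω, Y ω, Z ω) := dist_pos hp (fun ω => (X ω, Y ω, Z ω)) h
      have h4 : 0 < dZ (Z ω) := dist_pos hp Z h
      have := Real.log_le_sub_one_of_pos (show 0 < F (X ω, Y ω, Z ω) by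
        simp only [hF]; positivity)
      simp only [hF] at this ⊢
      rw [Real.log_div (by positivity) (by positivity), Real.log_mul h1.ne' h2.ne',
        Real.log_mul h3.ne' h4.ne'] at this
      linarith
  have hsum : ∑ ω, p ω * F (X ω, Y ω, Z ω) ≤ 1 := by
    rw [← sum_dist_mul (fun ω => (X ω, Y ω, Z ω)) F]
    calc ∑ v : A × B × C, dXYZ v * F v
        ≤ ∑ v : A × B × C, dXZ (v.1, v.2.2) * dYZ (v.2.1, v.2.2) / dZ v.2.2 := by
          refine Finset.sum_le_sum fun v _ => ?_
          have n1 : 0 ≤ dXZ (v.1, v.2.2) := dist_nonneg' hp _ _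
          have n2 : 0 ≤ dYZ (v.2.1, v.2.2) := dist_nonneg' hp _ _
          have n4 : 0 ≤ dZ v.2.2 := dist_nonneg' hp _ _
          by_cases h : dXYZ v = 0
          · rw [h, zero_mul]; positivity
          · apply le_of_eq
            simp only [hF]
            field_simp
      _ = ∑ z, dZ z * dZ z / dZ z := by
          rw [Fintype.sum_prod_type]
          simp only [Fintype.sum_prod_type]
          have : ∀ x y z, dXZ (x, z) * dYZ (y, z) / dZ z = dXZ (x, z) * (dYZ (y, z) / dZ z) :=
            fun x y z => by ring
          simp only [this]
          rw [Finset.sum_comm]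
          simp only [Finset.sum_comm (s := (Finset.univ : Finset A)), ← Finset.sum_mul]
          rw [Finset.sum_comm]
          refine Finset.sum_congr rfl fun z _ => ?_
          have h1 : ∑ x, dXZ (x, z) = dZ z := sum_dist_fst X Z z
          have h2 : ∑ y, dYZ (y, z) = dZ z := sum_dist_fst Y Z z
          rw [h1, ← Finset.mul_sum, ← Finset.sum_div, h2]
          ring
      _ = ∑ z, dZ z := Finset.sum_congr rfl fun z _ => by
          by_cases h : dZ z = 0
          · simp [h]
          · field_simp
      _ = 1 := (isPMF_dist hp Z).2
  simp only [mul_sub, mul_one, Finset.sum_sub_distrib, hp.2] at hle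
  linarith

lemma I2_nonneg (hp : IsPMF p) (X : Ω → A) (Y : Ω → B) : 0 ≤ I2 p X Y := by
  have h := CI_nonneg hp X Y (fun _ => ())
  have hc : H p (fun _ => ()) = 0 := by
    simp [H, dist, hp.2]
  unfold CI at h
  have h1 : H p (fun ω => (X ω, ())) = H p X := H_comp_injective X (fun a => (a, ()))
    (fun a b h => by simpa using h)
  have h2 : H p (fun ω => (Y ω, ())) = H p Y := H_comp_injective Y (fun a => (a, ()))
    (fun a b h => by simpa using h)
  have h3 : H p (fun ω => (X ω, Y ω, ())) = H p (fun ω => (X ω, Y ω)) :=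
    H_comp_injective (fun ω => (X ω, Y ω)) (fun a => (a.1, a.2, ())) (fun a b h => by
      simpa [Prod.ext_iff] using h)
  rw [h1, h2, h3, hc] at h
  unfold I2
  linarith

end Info

section LLN

variable {Ω : Type*} [Fintype Ω] {p : Ω → ℝ}

lemma Ex_sum_sq (hp : IsPMF p) (f : Ω → ℝ) (hf : Ex p f = 0) (n : ℕ) :
    Ex (pw fun _ : Fin n => p) (fun ω => (∑ i, f (ω i)) ^ 2) = n * Ex p (fun ω => f ω ^ 2) := by
  have e : ∀ ω : Fin n → Ω, (∑ i, f (ω i)) ^ 2 = ∑ i, ∑ j, f (ω i) * f (ω j) := fun ω => by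
    rw [sq, Finset.sum_mul_sum]
  simp only [e]
  rw [Ex_sum]
  have h : ∀ i : Fin n, Ex (pw fun _ : Fin n => p) (fun ω => ∑ j, f (ω i) * f (ω j))
      = Ex p (fun ω => f ω ^ 2) := by
    intro i
    rw [Ex_sum, Finset.sum_eq_single i]
    · rw [Ex_one (P := fun _ : Fin n => p) (fun _ => hp) i (fun ω => f ω * f ω)]
      simp only [sq]
    · intro j _ hj
      rw [Ex_two_mul (P := fun _ : Fin n => p) (fun _ => hp) (Ne.symm hj) f f, hf, zero_mul]
    · simp
  simp [h]

/-- Weak law of large numbers for log-likelihood ratios: `a` is at most `exp (n c)` times `b` with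
probability tending to one if `c` exceeds the mean of `L = log (a / b)`. -/
lemma lln (hp : IsPMF p) (a b L : Ω → ℝ)
    (h : ∀ ω, 0 < p ω → 0 < a ω ∧ 0 < b ω ∧ Real.log (a ω) - Real.log (b ω) = L ω) {c : ℝ}
    (hc : Ex p L < c) :
    Tendsto (fun n : ℕ => ∑ ω : Fin n → Ω, (∏ i, p (ω i)) *
      ind (¬ ∏ i, a (ω i) ≤ Real.exp (n * c) * ∏ i, b (ω i))) atTop (nhds 0) := by
  set M := Ex p L
  set f : Ω → ℝ := fun ω => L ω - M with hf
  have hf0 : Ex p f = 0 := by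
    have : f = fun ω => L ω + -M := by ext; simp [hf, sub_eq_add_neg]
    rw [this, Ex_add, Ex_const hp]
    exact add_neg_cancel M
  set V := Ex p (fun ω => f ω ^ 2)
  have hd : 0 < c - M := by linarith
  have key : ∀ n : ℕ, 0 < n → ∑ ω : Fin n → Ω, (∏ i, p (ω i)) *
      ind (¬ ∏ i, a (ω i) ≤ Real.exp (n * c) * ∏ i, b (ω i)) ≤ V / (c - M) ^ 2 * (n : ℝ)⁻¹ := by
    intro n hn
    have hn' : (0 : ℝ) < n := by exact_mod_cast hn
    have : ∑ ω : Fin n → Ω, (∏ i, p (ω i)) *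
        ind (¬ ∏ i, a (ω i) ≤ Real.exp (n * c) * ∏ i, b (ω i))
        ≤ Ex (pw fun _ : Fin n => p) (fun ω => (∑ i, f (ω i)) ^ 2 * ((n * (c - M)) ^ 2)⁻¹) := by
      refine Finset.sum_le_sum fun ω _ => ?_
      change pw (fun _ : Fin n => p) ω * _ ≤ _
      rcases (pw_nonneg (P := fun _ : Fin n => p) (fun _ => hp) ω).eq_or_lt with h0 | h0
      · simp [← h0]
      · refine mul_le_mul_of_nonneg_left ?_ h0.le
        have hpi : ∀ i, 0 < p (ω i) := fun i => (hp.1 _).lt_of_ne' fun hz => h0.ne' (by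
          unfold pw; exact Finset.prod_eq_zero (Finset.mem_univ i) hz)
        by_cases hv : ∏ i, a (ω i) ≤ Real.exp (n * c) * ∏ i, b (ω i)
        · rw [ind_of_not (not_not.2 hv)]; positivity
        · rw [ind_of hv]
          push Not at hv
          have pb : 0 < ∏ i, b (ω i) := Finset.prod_pos fun i _ => (h _ (hpi i)).2.1
          have hl := Real.log_lt_log (by positivity) hv
          rw [Real.log_mul (Real.exp_ne_zero _) pb.ne', Real.log_exp,
            Real.log_prod (fun i _ => (h _ (hpi i)).2.1.ne'),
            Real.log_prod (fun i _ => (h _ (hpi i)).1.ne')] at hl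
          have hL : ∑ i, L (ω i) = ∑ i, Real.log (a (ω i)) - ∑ i, Real.log (b (ω i)) := by
            rw [← Finset.sum_sub_distrib]
            exact Finset.sum_congr rfl fun i _ => (h _ (hpi i)).2.2.symm
          have hfs : ∑ i, f (ω i) = ∑ i, L (ω i) - n * M := by
            simp [hf, Finset.sum_sub_distrib]
          have hgt : n * (c - M) ≤ ∑ i, f (ω i) := by rw [hfs, hL]; linarith
          change (1 : ℝ) ≤ (∑ i, f (ω i)) ^ 2 * ((n * (c - M)) ^ 2)⁻¹
          rw [← div_eq_mul_inv, one_le_div (by positivity)]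
          exact pow_le_pow_left₀ (by positivity) hgt 2
    refine this.trans (le_of_eq ?_)
    rw [Ex_mul_right, Ex_sum_sq hp f hf0]
    change n * V * _ = _
    field_simp
  refine squeeze_zero' (Eventually.of_forall fun n => Finset.sum_nonneg fun ω _ =>
    mul_nonneg (Finset.prod_nonneg fun i _ => hp.1 _) (ind_nonneg _))
    ((eventually_gt_atTop 0).mono key) ?_
  have := (tendsto_inv_atTop_nhds_zero_nat (𝕜 := ℝ)).const_mul (V / (c - M) ^ 2)
  simpa using this

end LLN

end CSBC

/-! ### Rates -/

namespace CSBC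

section Rates

variable {Ω A B C : Type*} [Fintype Ω] [Fintype A] [Fintype B] [Fintype C] {p : Ω → ℝ}

/-- Entropy only depends on the partition of the sample space induced by the random variable. -/
lemma H_congr (X : Ω → A) (Y : Ω → B) (h : ∀ ω ω', X ω = X ω' ↔ Y ω = Y ω') : H p X = H p Y := by
  rw [← neg_inj, ← Ex_log_dist, ← Ex_log_dist]
  simp only [dist, h]

variable {σ1 σ2 𝒰0 𝒰1 𝒰2 : Type*} [Fintype σ1] [Fintype σ2] [Fintype 𝒰0] [Fintype 𝒰1]
  [Fintype 𝒰2]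

/-- Mean log-likelihood ratio of `p(u|s)` against `p(u)`, that is `I(U; S)`. -/
def cov0 (p : Ω → ℝ) (S : Ω → A) (U : Ω → B) : ℝ :=
  -H p (fun ω => (S ω, U ω)) + H p S + H p U

/-- Mean log-likelihood ratio of `p(u,v|s,t)` against `p(u) p(v|s,u)`, where `S' = (S, T)` is the
source pair and `S` the component the codeword `V` depends on. -/
def cov1 (p : Ω → ℝ) (S' : Ω → A) (S : Ω → σ1) (U : Ω → 𝒰0) (V : Ω → 𝒰1) : ℝ :=
  -H p (fun ω => (S' ω, U ω, V ω)) + H p S' + H p U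
    + (H p (fun ω => (S ω, U ω, V ω)) - H p (fun ω => (S ω, U ω)))

/-- Mean log-likelihood ratio of `p(u0,u1,u2|s1,s2)` against `p(u0) p(u1|s1,u0) p(u2|s2,u0)`. -/
def cov3 (p : Ω → ℝ) (S' : Ω → A) (S1 : Ω → σ1) (S2 : Ω → σ2) (U0 : Ω → 𝒰0) (U1 : Ω → 𝒰1)
    (U2 : Ω → 𝒰2) : ℝ :=
  -H p (fun ω => (S' ω, U0 ω, U1 ω, U2 ω)) + H p S' + H p U0
    + (H p (fun ω => (S1 ω, U0 ω, U1 ω)) - H p (fun ω => (S1 ω, U0 ω)))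
    + (H p (fun ω => (S2 ω, U0 ω, U2 ω)) - H p (fun ω => (S2 ω, U0 ω)))

/-- Mean log-likelihood ratio of `p(s,v|u,y)` against `p(v|s,u)`. -/
def dec (p : Ω → ℝ) (S : Ω → A) (U : Ω → 𝒰0) (V : Ω → 𝒰1) (Y : Ω → B) : ℝ :=
  H p (fun ω => (S ω, U ω, V ω)) - H p (fun ω => (S ω, U ω))
    - (H p (fun ω => (S ω, U ω, V ω, Y ω)) - H p (fun ω => (U ω, Y ω)))

/-- Mean log-likelihood ratio of `p(s,u,v|y)` against `p(u) p(v|s,u)`. -/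
def dec' (p : Ω → ℝ) (S : Ω → A) (U : Ω → 𝒰0) (V : Ω → 𝒰1) (Y : Ω → B) : ℝ :=
  H p U + (H p (fun ω => (S ω, U ω, V ω)) - H p (fun ω => (S ω, U ω)))
    - (H p (fun ω => (S ω, U ω, V ω, Y ω)) - H p Y)

/-- The five hypotheses in terms of the exponents of the random code, together with the
Shannon-type inequalities between the covering exponents. -/
lemma MKfive_exponents (hp : IsPMF p) (S1 : Ω → σ1) (S2 : Ω → σ2) (U0 : Ω → 𝒰0) (U1 : Ω → 𝒰1)
    (U2 : Ω → 𝒰2) (Y1 : Ω → A) (Y2 : Ω → B) (h : MKfive p S1 S2 U0 U1 U2 Y1 Y2) :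
    let S := fun ω => (S1 ω, S2 ω)
    0 ≤ cov0 p S U0 ∧ cov0 p S U0 ≤ cov1 p S S1 U0 U1 ∧ cov0 p S U0 ≤ cov1 p S S2 U0 U2 ∧
    cov1 p S S1 U0 U1 ≤ cov3 p S S1 S2 U0 U1 U2 ∧ cov1 p S S2 U0 U2 ≤ cov3 p S S1 S2 U0 U1 U2 ∧
    cov1 p S S1 U0 U1 < dec' p S1 U0 U1 Y1 ∧ cov1 p S S2 U0 U2 < dec' p S2 U0 U2 Y2 ∧
    cov3 p S S1 S2 U0 U1 U2 < dec' p S1 U0 U1 Y1 + dec p S2 U0 U2 Y2 ∧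
    cov3 p S S1 S2 U0 U1 U2 < dec' p S2 U0 U2 Y2 + dec p S1 U0 U1 Y1 ∧
    cov0 p S U0 + cov3 p S S1 S2 U0 U1 U2 < dec' p S1 U0 U1 Y1 + dec' p S2 U0 U2 Y2 := by
  obtain ⟨h1, h2, h3, h4, h5⟩ := h
  have k0 := I2_nonneg hp (fun ω => (S1 ω, S2 ω)) U0
  have k1 := CI_nonneg hp U1 S2 (fun ω => (S1 ω, U0 ω))
  have k2 := CI_nonneg hp U2 S1 (fun ω => (S2 ω, U0 ω))
  have k3 := CI_nonneg hp U2 (fun ω => (S1 ω, U1 ω)) (fun ω => (S2 ω, U0 ω))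
  have k4 := CI_nonneg hp U1 (fun ω => (S2 ω, U2 ω)) (fun ω => (S1 ω, U0 ω))
  unfold I2 CI at *
  unfold cov0 cov1 cov3 dec dec'
  have e1 : H p (fun ω => (U0 ω, U1 ω, S1 ω)) = H p (fun ω => (S1 ω, U0 ω, U1 ω)) :=
    H_congr _ _ (by intros; simp only [Prod.mk.injEq]; tauto)
  have e2 : H p (fun ω => (U0 ω, U2 ω, S2 ω)) = H p (fun ω => (S2 ω, U0 ω, U2 ω)) :=
    H_congr _ _ (by intros; simp only [Prod.mk.injEq]; tauto)
  have e3 : H p (fun ω => ((U0 ω, U1 ω, S1 ω), Y1 ω)) = H p (fun ω => (S1 ω, U0 ω, U1 ω, Y1 ω)) :=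
    H_congr _ _ (by intros; simp only [Prod.mk.injEq]; tauto)
  have e4 : H p (fun ω => ((U0 ω, U2 ω, S2 ω), Y2 ω)) = H p (fun ω => (S2 ω, U0 ω, U2 ω, Y2 ω)) :=
    H_congr _ _ (by intros; simp only [Prod.mk.injEq]; tauto)
  have e5 : H p (fun ω => ((U0 ω, U1 ω), S1 ω)) = H p (fun ω => (S1 ω, U0 ω, U1 ω)) :=
    H_congr _ _ (by intros; simp only [Prod.mk.injEq]; tauto)
  have e6 : H p (fun ω => ((U0 ω, U2 ω), S2 ω)) = H p (fun ω => (S2 ω, U0 ω, U2 ω)) :=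
    H_congr _ _ (by intros; simp only [Prod.mk.injEq]; tauto)
  have e7 : H p (fun ω => (S2 ω, S1 ω)) = H p (fun ω => (S1 ω, S2 ω)) :=
    H_congr _ _ (by intros; simp only [Prod.mk.injEq]; tauto)
  have e8 : H p (fun ω => ((U0 ω, U1 ω), S2 ω, S1 ω)) =
      H p (fun ω => ((S1 ω, S2 ω), U0 ω, U1 ω)) :=
    H_congr _ _ (by intros; simp only [Prod.mk.injEq]; tauto)
  have e9 : H p (fun ω => ((U0 ω, U2 ω), S1 ω, S2 ω)) =
      H p (fun ω => ((S1 ω, S2 ω), U0 ω, U2 ω)) :=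
    H_congr _ _ (by intros; simp only [Prod.mk.injEq]; tauto)
  have e10 : H p (fun ω => ((U2 ω, S2 ω), U0 ω)) = H p (fun ω => (S2 ω, U0 ω, U2 ω)) :=
    H_congr _ _ (by intros; simp only [Prod.mk.injEq]; tauto)
  have e11 : H p (fun ω => ((U1 ω, S1 ω), U0 ω)) = H p (fun ω => (S1 ω, U0 ω, U1 ω)) :=
    H_congr _ _ (by intros; simp only [Prod.mk.injEq]; tauto)
  have e12 : H p (fun ω => (Y1 ω, U0 ω)) = H p (fun ω => (U0 ω, Y1 ω)) :=
    H_congr _ _ (by intros; simp only [Prod.mk.injEq]; tauto)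
  have e13 : H p (fun ω => (Y2 ω, U0 ω)) = H p (fun ω => (U0 ω, Y2 ω)) :=
    H_congr _ _ (by intros; simp only [Prod.mk.injEq]; tauto)
  have e14 : H p (fun ω => ((U1 ω, S1 ω), Y1 ω, U0 ω)) = H p (fun ω => (S1 ω, U0 ω, U1 ω, Y1 ω)) :=
    H_congr _ _ (by intros; simp only [Prod.mk.injEq]; tauto)
  have e15 : H p (fun ω => ((U2 ω, S2 ω), Y2 ω, U0 ω)) = H p (fun ω => (S2 ω, U0 ω, U2 ω, Y2 ω)) :=
    H_congr _ _ (by intros; simp only [Prod.mk.injEq]; tauto)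
  have e16 : H p (fun ω => ((U1 ω, S1 ω), (U2 ω, S2 ω), U0 ω)) =
      H p (fun ω => ((S1 ω, S2 ω), U0 ω, U1 ω, U2 ω)) :=
    H_congr _ _ (by intros; simp only [Prod.mk.injEq]; tauto)
  have e17 : H p (fun ω => (U1 ω, S1 ω, U0 ω)) = H p (fun ω => (S1 ω, U0 ω, U1 ω)) :=
    H_congr _ _ (by intros; simp only [Prod.mk.injEq]; tauto)
  have e18 : H p (fun ω => (U2 ω, S2 ω, U0 ω)) = H p (fun ω => (S2 ω, U0 ω, U2 ω)) :=
    H_congr _ _ (by intros; simp only [Prod.mk.injEq]; tauto)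
  have e19 : H p (fun ω => (S2 ω, S1 ω, U0 ω)) = H p (fun ω => ((S1 ω, S2 ω), U0 ω)) :=
    H_congr _ _ (by intros; simp only [Prod.mk.injEq]; tauto)
  have e20 : H p (fun ω => (S1 ω, S2 ω, U0 ω)) = H p (fun ω => ((S1 ω, S2 ω), U0 ω)) :=
    H_congr _ _ (by intros; simp only [Prod.mk.injEq]; tauto)
  have e21 : H p (fun ω => (U1 ω, S2 ω, S1 ω, U0 ω)) = H p (fun ω => ((S1 ω, S2 ω), U0 ω, U1 ω)) :=
    H_congr _ _ (by intros; simp only [Prod.mk.injEq]; tauto)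
  have e22 : H p (fun ω => (U2 ω, S1 ω, S2 ω, U0 ω)) = H p (fun ω => ((S1 ω, S2 ω), U0 ω, U2 ω)) :=
    H_congr _ _ (by intros; simp only [Prod.mk.injEq]; tauto)
  have e23 : H p (fun ω => ((S1 ω, U1 ω), S2 ω, U0 ω)) =
      H p (fun ω => ((S1 ω, S2 ω), U0 ω, U1 ω)) :=
    H_congr _ _ (by intros; simp only [Prod.mk.injEq]; tauto)
  have e24 : H p (fun ω => ((S2 ω, U2 ω), S1 ω, U0 ω)) =
      H p (fun ω => ((S1 ω, S2 ω), U0 ω, U2 ω)) :=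
    H_congr _ _ (by intros; simp only [Prod.mk.injEq]; tauto)
  have e25 : H p (fun ω => (U2 ω, (S1 ω, U1 ω), S2 ω, U0 ω)) =
      H p (fun ω => ((S1 ω, S2 ω), U0 ω, U1 ω, U2 ω)) :=
    H_congr _ _ (by intros; simp only [Prod.mk.injEq]; tauto)
  have e26 : H p (fun ω => (U1 ω, (S2 ω, U2 ω), S1 ω, U0 ω)) =
      H p (fun ω => ((S1 ω, S2 ω), U0 ω, U1 ω, U2 ω)) :=
    H_congr _ _ (by intros; simp only [Prod.mk.injEq]; tauto)
  refine ⟨?_, ?_, ?_, ?_, ?_, ?_, ?_, ?_, ?_, ?_⟩ <;> linarith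

end Rates

/-- Rates of the hash functions (`ρ1`, `ρ2`) and of the three index sets (`R0`, `R1`, `R2`) that
satisfy every covering and every decoding constraint, with a common slack `δ`. -/
lemma exists_rates {A0 A1 A2 A3 B1 B2 C1 C2 : ℝ} (h0 : 0 ≤ A0) (h13 : A1 ≤ A3)
    (h23 : A2 ≤ A3) (g1 : A1 < C1) (g2 : A2 < C2) (g3 : A3 < C1 + B2) (g4 : A3 < C2 + B1)
    (g5 : A0 + A3 < C1 + C2) (h01 : A0 ≤ A1) (h02 : A0 ≤ A2) :
    ∃ R0 R1 R2 ρ1 ρ2 δ : ℝ, 0 ≤ R0 ∧ 0 ≤ R1 ∧ 0 ≤ R2 ∧ 0 ≤ ρ1 ∧ 0 ≤ ρ2 ∧ 0 < δ ∧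
      A0 + 3 * δ ≤ R0 ∧ A1 + 3 * δ ≤ R0 + R1 ∧ A2 + 3 * δ ≤ R0 + R2 ∧
      A3 + 3 * δ ≤ R0 + R1 + R2 ∧
      R1 - ρ1 + 3 * δ ≤ B1 ∧ R2 - ρ2 + 3 * δ ≤ B2 ∧ R0 + R1 + ρ2 + 3 * δ ≤ C1 ∧
      R0 + R2 + ρ1 + 3 * δ ≤ C2 := by
  obtain ⟨η, hη, k1, k2, k3, k4, k5⟩ : ∃ η : ℝ, 0 < η ∧ 4 * η < C1 - A1 ∧ 4 * η < C2 - A2 ∧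
      4 * η < C1 + B2 - A3 ∧ 4 * η < C2 + B1 - A3 ∧ 4 * η < C1 + C2 - A0 - A3 := by
    have : 0 < min (min (min (C1 - A1) (C2 - A2)) (min (C1 + B2 - A3) (C2 + B1 - A3)))
        (C1 + C2 - A0 - A3) := by
      simp only [lt_min_iff]; refine ⟨⟨⟨?_, ?_⟩, ?_, ?_⟩, ?_⟩ <;> linarith
    obtain ⟨e, he, he'⟩ := exists_between this
    simp only [lt_min_iff] at he'
    exact ⟨e / 4, by positivity, by linarith, by linarith, by linarith, by linarith, by linarith⟩
  -- Total rate `R0 + R1 + R2 = A`; the rates `a = R0 + R1` and `b = R0 + R2` are as large as the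
  -- receivers allow, and the hash rates as small as decoding with the true cloud allows.
  set A := A3 + η with hS
  obtain ⟨a, ha, ha', hA⟩ : ∃ a, a ≤ A ∧ a ≤ C1 - η ∧ (a = A ∨ a = C1 - η) :=
    ⟨min A (C1 - η), min_le_left _ _, min_le_right _ _, min_choice _ _⟩
  obtain ⟨b, hb, hb', hB⟩ : ∃ b, b ≤ A ∧ b ≤ C2 - η ∧ (b = A ∨ b = C2 - η) :=
    ⟨min A (C2 - η), min_le_left _ _, min_le_right _ _, min_choice _ _⟩
  have m1 : max 0 (A - b - B1 + η / 2) ≤ C2 - b - η / 2 := max_le (by linarith) (by linarith)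
  have m2 : max 0 (A - a - B2 + η / 2) ≤ C1 - a - η / 2 := max_le (by linarith) (by linarith)
  refine ⟨a + b - A, A - b, A - a, max 0 (A - b - B1 + η / 2), max 0 (A - a - B2 + η / 2), η / 6,
    ?_, by linarith, by linarith, le_max_left _ _, le_max_left _ _, by positivity, ?_, ?_, ?_,
    by linarith, ?_, ?_, by linarith, by linarith⟩
  · rcases hA with hA | hA <;> rcases hB with hB | hB <;> linarith
  · rcases hA with hA | hA <;> rcases hB with hB | hB <;> linarith
  · rcases hA with hA | hA <;> linarith
  · rcases hB with hB | hB <;> linarith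
  · linarith [le_max_right 0 (A - b - B1 + η / 2)]
  · linarith [le_max_right 0 (A - a - B2 + η / 2)]

end CSBC

/-! ### Blocks, conditional laws and the tests of the receivers -/

namespace CSBC

section Blocks

variable {K A B C D : Type*} [Fintype K] [DecidableEq K] [Fintype A] [Fintype B] [Fintype C]
  [Fintype D]

lemma sum_prod_eq2 (F : K → A → B → ℝ) :
    ∑ a : K → A, ∑ b : K → B, ∏ k, F k (a k) (b k) = ∏ k, ∑ a, ∑ b, F k a b :=
  (Finset.sum_congr rfl fun a _ => sum_prod_eq fun k b => F k (a k) b).trans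
    (sum_prod_eq fun k a => ∑ b, F k a b)

lemma sum_prod_eq3 (F : K → A → B → C → ℝ) :
    ∑ a : K → A, ∑ b : K → B, ∑ c : K → C, ∏ k, F k (a k) (b k) (c k)
      = ∏ k, ∑ a, ∑ b, ∑ c, F k a b c :=
  (Finset.sum_congr rfl fun a _ => sum_prod_eq2 fun k b c => F k (a k) b c).trans
    (sum_prod_eq fun k a => ∑ b, ∑ c, F k a b c)

lemma sum_prod_eq4 (F : K → A → B → C → D → ℝ) :
    ∑ a : K → A, ∑ b : K → B, ∑ c : K → C, ∑ d : K → D, ∏ k, F k (a k) (b k) (c k) (d k)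
      = ∏ k, ∑ a, ∑ b, ∑ c, ∑ d, F k a b c d :=
  (Finset.sum_congr rfl fun a _ => sum_prod_eq3 fun k b c d => F k (a k) b c d).trans
    (sum_prod_eq fun k a => ∑ b, ∑ c, ∑ d, F k a b c d)

lemma sum_arrow_prod (G : (K → A × B) → ℝ) :
    ∑ ω, G ω = ∑ a : K → A, ∑ b : K → B, G (fun k => (a k, b k)) := by
  rw [← Fintype.sum_prod_type' (f := fun (a : K → A) (b : K → B) => G (fun k => (a k, b k)))]
  exact Fintype.sum_equiv (Equiv.arrowProdEquivProdArrow K (fun _ => A) (fun _ => B)) _ _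
    fun ω => rfl

end Blocks

section Cond

variable {Ω A B C : Type*} [Fintype Ω] [Fintype A] [Fintype B] [Fintype C] {p : Ω → ℝ}

/-- Conditional pmf of `Y` given `X = a`; if `X = a` has probability zero, the value is the
marginal of `Y`, so that it is a pmf for every `a`. -/
def condP (p : Ω → ℝ) (X : Ω → A) (Y : Ω → B) (a : A) : B → ℝ :=
  fun b => if dist p X a = 0 then dist p Y b
    else dist p (fun ω => (X ω, Y ω)) (a, b) / dist p X a

lemma isPMF_condP (hp : IsPMF p) (X : Ω → A) (Y : Ω → B) (a : A) : IsPMF (condP p X Y a) := by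
  unfold condP
  by_cases h : dist p X a = 0
  · simpa [h] using isPMF_dist hp Y
  · simp only [h, if_false]
    refine ⟨fun b => div_nonneg (dist_nonneg' hp _ _) (dist_nonneg' hp _ _), ?_⟩
    rw [← Finset.sum_div, sum_dist_snd, div_self h]

lemma condP_self (hp : IsPMF p) (X : Ω → A) (Y : Ω → B) {ω : Ω} (h : 0 < p ω) :
    condP p X Y (X ω) (Y ω) = dist p (fun ω => (X ω, Y ω)) (X ω, Y ω) / dist p X (X ω) := by
  simp [condP, (dist_pos hp X h).ne']

lemma condP_pos (hp : IsPMF p) (X : Ω → A) (Y : Ω → B) {ω : Ω} (h : 0 < p ω) :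
    0 < condP p X Y (X ω) (Y ω) := by
  rw [condP_self hp X Y h]
  exact div_pos (dist_pos hp (fun ω => (X ω, Y ω)) h) (dist_pos hp X h)

lemma log_condP (hp : IsPMF p) (X : Ω → A) (Y : Ω → B) {ω : Ω} (h : 0 < p ω) :
    Real.log (condP p X Y (X ω) (Y ω))
      = Real.log (dist p (fun ω => (X ω, Y ω)) (X ω, Y ω)) - Real.log (dist p X (X ω)) := by
  rw [condP_self hp X Y h,
    Real.log_div (dist_pos hp (fun ω => (X ω, Y ω)) h).ne' (dist_pos hp X h).ne']

lemma Ex_sub (f g : Ω → ℝ) : Ex p (fun ω => f ω - g ω) = Ex p f - Ex p g := by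
  simp [Ex, mul_sub, Finset.sum_sub_distrib]

end Cond

section Receiver

variable {Ω σ 𝒰 𝒱 𝒴 : Type*} [Fintype Ω] [Fintype σ] [Fintype 𝒰] [Fintype 𝒱] [Fintype 𝒴]
  {p : Ω → ℝ}

/-- The receiver's test: the source block `s` and the codewords `u`, `v` look jointly generated
with the output block `y`, relative to codewords drawn independently of `y`. -/
def recvTest (p : Ω → ℝ) (S : Ω → σ) (U : Ω → 𝒰) (V : Ω → 𝒱) (Y : Ω → 𝒴) (n : ℕ) (c c' : ℝ)
    (s : Fin n → σ) (u : Fin n → 𝒰) (v : Fin n → 𝒱) (y : Fin n → 𝒴) : Prop :=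
  (∏ i, condP p (fun ω => (S ω, U ω)) V (s i, u i) (v i) ≤ Real.exp (n * c) *
    ∏ i, dist p (fun ω => (S ω, U ω, V ω, Y ω)) (s i, u i, v i, y i)
      / dist p (fun ω => (U ω, Y ω)) (u i, y i)) ∧
  (∏ i, dist p U (u i) * condP p (fun ω => (S ω, U ω)) V (s i, u i) (v i) ≤ Real.exp (n * c') *
    ∏ i, dist p (fun ω => (S ω, U ω, V ω, Y ω)) (s i, u i, v i, y i) / dist p Y (y i))

/-- Expected number of source blocks passing the test with the given cloud codeword, when their satellite
codewords are independent of the output. -/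
lemma recv_count (hp : IsPMF p) (S : Ω → σ) (U : Ω → 𝒰) (V : Ω → 𝒱) (Y : Ω → 𝒴) (n : ℕ)
    (c c' : ℝ) (u : Fin n → 𝒰) (y : Fin n → 𝒴) :
    ∑ s : Fin n → σ, (Ex (fun v : Fin n → 𝒱 => ∏ i, condP p (fun ω => (S ω, U ω)) V
      (s i, u i) (v i)) fun v => ind (recvTest p S U V Y n c c' s u v y)) ≤ Real.exp (n * c) := by
  have key : ∀ (s : Fin n → σ) (v : Fin n → 𝒱),
      (∏ i, condP p (fun ω => (S ω, U ω)) V (s i, u i) (v i)) *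
        ind (recvTest p S U V Y n c c' s u v y) ≤ Real.exp (n * c) *
        ∏ i, dist p (fun ω => (S ω, U ω, V ω, Y ω)) (s i, u i, v i, y i)
          / dist p (fun ω => (U ω, Y ω)) (u i, y i) := by
    intro s v
    by_cases h : recvTest p S U V Y n c c' s u v y
    · rw [ind_of h, mul_one]; exact h.1
    · rw [ind_of_not h, mul_zero]
      exact mul_nonneg (Real.exp_pos _).le (Finset.prod_nonneg fun i _ =>
        div_nonneg (dist_nonneg' hp _ _) (dist_nonneg' hp _ _))
  refine (Finset.sum_le_sum fun s _ => Finset.sum_le_sum fun v _ => key s v).trans ?_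
  simp only [← Finset.mul_sum]
  rw [sum_prod_eq2 (fun i s v => dist p (fun ω => (S ω, U ω, V ω, Y ω)) (s, u i, v, y i)
          / dist p (fun ω => (U ω, Y ω)) (u i, y i))]
  refine mul_le_of_le_one_right (Real.exp_pos _).le (Finset.prod_le_one (fun i _ =>
    Finset.sum_nonneg fun _ _ => Finset.sum_nonneg fun _ _ =>
        div_nonneg (dist_nonneg' hp _ _) (dist_nonneg' hp _ _)) fun i _ => ?_)
  have e : ∑ s, ∑ v, dist p (fun ω => (S ω, U ω, V ω, Y ω)) (s, u i, v, y i)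
      = dist p (fun ω => (U ω, Y ω)) (u i, y i) := by
    have h1 := sum_dist_snd (p := p) (fun ω => (U ω, Y ω)) (fun ω => (S ω, V ω)) (u i, y i)
    rw [← h1, Fintype.sum_prod_type]
    refine Finset.sum_congr rfl fun s _ => Finset.sum_congr rfl fun v _ => ?_
    simp only [dist, Prod.mk.injEq]
    exact Finset.sum_congr rfl fun ω _ => if_congr (by tauto) rfl rfl
  simp only [← Finset.sum_div, e]
  exact div_self_le_one _

/-- Expected number of source blocks passing the test when both their cloud codeword and their
satellite codewords are independent of the output. -/
lemma recv_count' (hp : IsPMF p) (S : Ω → σ) (U : Ω → 𝒰) (V : Ω → 𝒱) (Y : Ω → 𝒴) (n : ℕ)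
    (c c' : ℝ) (y : Fin n → 𝒴) :
    ∑ s : Fin n → σ, (Ex (fun u : Fin n → 𝒰 => ∏ i, dist p U (u i)) fun u =>
      Ex (fun v : Fin n → 𝒱 => ∏ i, condP p (fun ω => (S ω, U ω)) V
      (s i, u i) (v i)) fun v => ind (recvTest p S U V Y n c c' s u v y)) ≤ Real.exp (n * c') := by
  have key : ∀ (s : Fin n → σ) (u : Fin n → 𝒰) (v : Fin n → 𝒱),
      (∏ i, dist p U (u i)) * ((∏ i, condP p (fun ω => (S ω, U ω)) V (s i, u i) (v i)) *
        ind (recvTest p S U V Y n c c' s u v y)) ≤ Real.exp (n * c') *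
        ∏ i, dist p (fun ω => (S ω, U ω, V ω, Y ω)) (s i, u i, v i, y i) / dist p Y (y i) := by
    intro s u v
    by_cases h : recvTest p S U V Y n c c' s u v y
    · rw [ind_of h, mul_one, ← Finset.prod_mul_distrib]; exact h.2
    · rw [ind_of_not h, mul_zero, mul_zero]
      exact mul_nonneg (Real.exp_pos _).le (Finset.prod_nonneg fun i _ =>
        div_nonneg (dist_nonneg' hp _ _) (dist_nonneg' hp _ _))
  have : ∑ s : Fin n → σ, (Ex (fun u : Fin n → 𝒰 => ∏ i, dist p U (u i)) fun u =>
      Ex (fun v : Fin n → 𝒱 => ∏ i, condP p (fun ω => (S ω, U ω)) V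
      (s i, u i) (v i)) fun v => ind (recvTest p S U V Y n c c' s u v y))
      ≤ ∑ s : Fin n → σ, ∑ u : Fin n → 𝒰, ∑ v : Fin n → 𝒱, Real.exp (n * c') *
        ∏ i, dist p (fun ω => (S ω, U ω, V ω, Y ω)) (s i, u i, v i, y i) / dist p Y (y i) := by
    refine Finset.sum_le_sum fun s _ => Finset.sum_le_sum fun u _ => ?_
    unfold Ex
    rw [Finset.mul_sum]
    exact Finset.sum_le_sum fun v _ => key s u v
  refine this.trans ?_
  simp only [← Finset.mul_sum]
  rw [sum_prod_eq3 (fun i s u v => dist p (fun ω => (S ω, U ω, V ω, Y ω)) (s, u, v, y i)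
          / dist p Y (y i))]
  refine mul_le_of_le_one_right (Real.exp_pos _).le (Finset.prod_le_one (fun i _ =>
    Finset.sum_nonneg fun _ _ => Finset.sum_nonneg fun _ _ => Finset.sum_nonneg fun _ _ =>
        div_nonneg (dist_nonneg' hp _ _) (dist_nonneg' hp _ _)) fun i _ => ?_)
  have e : ∑ s, ∑ u, ∑ v, dist p (fun ω => (S ω, U ω, V ω, Y ω)) (s, u, v, y i)
      = dist p Y (y i) := by
    have h1 := sum_dist_snd (p := p) Y (fun ω => (S ω, U ω, V ω)) (y i)
    simp only [← h1, Fintype.sum_prod_type]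
    refine Finset.sum_congr rfl fun s _ => Finset.sum_congr rfl fun u _ =>
      Finset.sum_congr rfl fun v _ => ?_
    simp only [dist, Prod.mk.injEq]
    exact Finset.sum_congr rfl fun ω _ => if_congr (by tauto) rfl rfl
  simp only [← Finset.sum_div, e]
  exact div_self_le_one _

/-- The true source block and codewords pass the test with probability tending to one. -/
lemma recv_typical (hp : IsPMF p) (S : Ω → σ) (U : Ω → 𝒰) (V : Ω → 𝒱) (Y : Ω → 𝒴)
    (c c' : ℝ) (hc : -dec p S U V Y < c) (hc' : -dec' p S U V Y < c') :
    Tendsto (fun n : ℕ => ∑ ω : Fin n → Ω, (∏ i, p (ω i)) *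
      ind (¬ recvTest p S U V Y n c c' (fun i => S (ω i)) (fun i => U (ω i)) (fun i => V (ω i))
        (fun i => Y (ω i)))) atTop (nhds 0) := by
  have eSUV : H p (fun ω => ((S ω, U ω), V ω)) = H p (fun ω => (S ω, U ω, V ω)) :=
    H_congr _ _ (by intros; simp only [Prod.mk.injEq]; tauto)
  have pSUVY := fun {ω} => dist_pos (ω := ω) hp (fun ω => (S ω, U ω, V ω, Y ω))
  have pUY := fun {ω} => dist_pos (ω := ω) hp (fun ω => (U ω, Y ω))
  have pY := fun {ω} => dist_pos (ω := ω) hp Y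
  have pU := fun {ω} => dist_pos (ω := ω) hp U
  have pc := fun {ω} => condP_pos (ω := ω) hp (fun ω => (S ω, U ω)) V
  have h1 := lln hp (fun ω => condP p (fun ω => (S ω, U ω)) V (S ω, U ω) (V ω))
    (fun ω => dist p (fun ω => (S ω, U ω, V ω, Y ω)) (S ω, U ω, V ω, Y ω)
      / dist p (fun ω => (U ω, Y ω)) (U ω, Y ω))
    (fun ω => (Real.log (dist p (fun ω => ((S ω, U ω), V ω)) ((S ω, U ω), V ω))
      - Real.log (dist p (fun ω => (S ω, U ω)) (S ω, U ω)))
      - (Real.log (dist p (fun ω => (S ω, U ω, V ω, Y ω)) (S ω, U ω, V ω, Y ω))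
      - Real.log (dist p (fun ω => (U ω, Y ω)) (U ω, Y ω)))) (c := c)
    (fun ω h => ⟨pc h, div_pos (pSUVY h) (pUY h), by
      rw [log_condP hp (fun ω => (S ω, U ω)) V h, Real.log_div (pSUVY h).ne' (pUY h).ne']⟩)
    (by
      rw [Ex_sub, Ex_sub, Ex_sub, Ex_log_dist (fun ω => ((S ω, U ω), V ω)),
        Ex_log_dist (fun ω => (S ω, U ω)), Ex_log_dist (fun ω => (S ω, U ω, V ω, Y ω)),
        Ex_log_dist (fun ω => (U ω, Y ω)), eSUV]
      unfold dec at hc; linarith)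
  have h2 := lln hp (fun ω => dist p U (U ω) * condP p (fun ω => (S ω, U ω)) V (S ω, U ω) (V ω))
    (fun ω => dist p (fun ω => (S ω, U ω, V ω, Y ω)) (S ω, U ω, V ω, Y ω) / dist p Y (Y ω))
    (fun ω => (Real.log (dist p U (U ω)) +
      (Real.log (dist p (fun ω => ((S ω, U ω), V ω)) ((S ω, U ω), V ω))
      - Real.log (dist p (fun ω => (S ω, U ω)) (S ω, U ω))))
      - (Real.log (dist p (fun ω => (S ω, U ω, V ω, Y ω)) (S ω, U ω, V ω, Y ω))
      - Real.log (dist p Y (Y ω)))) (c := c')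
    (fun ω h => ⟨mul_pos (pU h) (pc h), div_pos (pSUVY h) (pY h), by
      rw [Real.log_mul (pU h).ne' (pc h).ne', log_condP hp (fun ω => (S ω, U ω)) V h,
        Real.log_div (pSUVY h).ne' (pY h).ne']⟩)
    (by
      rw [Ex_sub, Ex_add, Ex_sub, Ex_sub, Ex_log_dist (fun ω => ((S ω, U ω), V ω)),
        Ex_log_dist (fun ω => (S ω, U ω)), Ex_log_dist (fun ω => (S ω, U ω, V ω, Y ω)),
        Ex_log_dist Y, Ex_log_dist U, eSUV]
      unfold dec' at hc'; linarith)
  have h3 := h1.add h2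
  rw [add_zero] at h3
  refine squeeze_zero (fun n => Finset.sum_nonneg fun ω _ =>
    mul_nonneg (Finset.prod_nonneg fun i _ => hp.1 _) (ind_nonneg _)) (fun n => ?_) h3
  rw [← Finset.sum_add_distrib]
  refine Finset.sum_le_sum fun ω _ => ?_
  rw [← mul_add]
  exact mul_le_mul_of_nonneg_left (ind_not_and_le _ _) (Finset.prod_nonneg fun i _ => hp.1 _)

end Receiver

end CSBC

/-! ### The joint law -/

namespace CSBC

section Joint

variable {σ1 σ2 𝒰0 𝒰1 𝒰2 𝒳 𝒴1 𝒴2 : Type*} [Fintype σ1] [Fintype σ2] [Fintype 𝒰0] [Fintype 𝒰1]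
  [Fintype 𝒰2] [Fintype 𝒳] [Fintype 𝒴1] [Fintype 𝒴2]
  {q : σ1 × σ2 → ℝ} {r : σ1 × σ2 → 𝒰0 × 𝒰1 × 𝒰2 × 𝒳 → ℝ} {W : 𝒳 → 𝒴1 × 𝒴2 → ℝ}

/-- Summation against the joint law, with the outputs summed out. -/
lemma sum_jointLaw_mul (hW : ∀ x, IsPMF (W x)) (f : (σ1 × σ2) → 𝒰0 × 𝒰1 × 𝒰2 × 𝒳 → ℝ) :
    ∑ ω, jointLaw q r W ω *
      f (ω.1, ω.2.1) (ω.2.2.1, ω.2.2.2.1, ω.2.2.2.2.1, ω.2.2.2.2.2.1)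
      = ∑ s, ∑ v, q s * r s v * f s v := by
  have hW' : ∀ x, ∑ y1, ∑ y2, W x (y1, y2) = 1 := fun x => by
    rw [← Fintype.sum_prod_type']; exact (hW x).2
  simp only [jointLaw, Fintype.sum_prod_type]
  refine Finset.sum_congr rfl fun s1 _ => Finset.sum_congr rfl fun s2 _ =>
    Finset.sum_congr rfl fun u _ => Finset.sum_congr rfl fun a _ =>
    Finset.sum_congr rfl fun b _ => Finset.sum_congr rfl fun x _ => ?_
  simp only [mul_right_comm _ (W _ _), ← Finset.mul_sum, hW', mul_one]

lemma isPMF_jointLaw (hq : IsPMF q) (hr : ∀ s, IsPMF (r s)) (hW : ∀ x, IsPMF (W x)) :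
    IsPMF (jointLaw q r W) := by
  refine ⟨fun ω => mul_nonneg (mul_nonneg (hq.1 _) ((hr _).1 _)) ((hW _).1 _), ?_⟩
  have := sum_jointLaw_mul (q := q) (r := r) hW (fun _ _ => 1)
  simp only [mul_one, ← Finset.mul_sum, (hr _).2, hq.2] at this
  exact this

lemma dist_jointLaw (hW : ∀ x, IsPMF (W x)) {B : Type*} [Fintype B]
    (f : 𝒰0 × 𝒰1 × 𝒰2 × 𝒳 → B) (s : σ1 × σ2) (z : B) :
    dist (jointLaw q r W) (fun ω => ((ω.1, ω.2.1),
      f (ω.2.2.1, ω.2.2.2.1, ω.2.2.2.2.1, ω.2.2.2.2.2.1))) (s, z) = q s * dist (r s) f z := by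
  have := sum_jointLaw_mul (q := q) (r := r) hW
    (fun s' v => if (s', f v) = (s, z) then (1 : ℝ) else 0)
  simp only [mul_ite, mul_one, mul_zero] at this
  unfold dist
  refine Eq.trans (b := ∑ s', ∑ v, if (s', f v) = (s, z) then q s' * r s' v else 0)
    (by convert this) ?_
  rw [Finset.mul_sum, Finset.sum_eq_single s]
  · refine Finset.sum_congr rfl fun v _ => ?_
    simp
  · intro s' _ hs
    simp [hs]
  · simp

lemma dist_jointLaw_source (hr : ∀ s, IsPMF (r s)) (hW : ∀ x, IsPMF (W x)) (s : σ1 × σ2) :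
    dist (jointLaw q r W) (fun ω => (ω.1, ω.2.1)) s = q s := by
  rw [← sum_dist_snd (fun ω : σ1 × σ2 × 𝒰0 × 𝒰1 × 𝒰2 × 𝒳 × 𝒴1 × 𝒴2 => (ω.1, ω.2.1))
    (fun ω => (ω.2.2.1, ω.2.2.2.1, ω.2.2.2.2.1, ω.2.2.2.2.2.1)) s]
  simp only [dist_jointLaw hW (fun v => v), ← Finset.mul_sum, (isPMF_dist (hr s) _).2, mul_one]

/-- On the support of the joint law, a marginal of `r` is a ratio of marginals of the joint law. -/
lemma log_dist_r (hq : IsPMF q) (hr : ∀ s, IsPMF (r s)) (hW : ∀ x, IsPMF (W x))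
    {p : σ1 × σ2 × 𝒰0 × 𝒰1 × 𝒰2 × 𝒳 × 𝒴1 × 𝒴2 → ℝ} (hpd : p = jointLaw q r W)
    {B : Type*} [Fintype B] (f : 𝒰0 × 𝒰1 × 𝒰2 × 𝒳 → B)
    {ω : σ1 × σ2 × 𝒰0 × 𝒰1 × 𝒰2 × 𝒳 × 𝒴1 × 𝒴2} (h : 0 < p ω) :
    0 < dist (r (ω.1, ω.2.1)) f (f (ω.2.2.1, ω.2.2.2.1, ω.2.2.2.2.1, ω.2.2.2.2.2.1)) ∧
    Real.log (dist (r (ω.1, ω.2.1)) f (f (ω.2.2.1, ω.2.2.2.1, ω.2.2.2.2.1, ω.2.2.2.2.2.1)))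
      = Real.log (dist p (fun ω => ((ω.1, ω.2.1),
          f (ω.2.2.1, ω.2.2.2.1, ω.2.2.2.2.1, ω.2.2.2.2.2.1)))
          ((ω.1, ω.2.1), f (ω.2.2.1, ω.2.2.2.1, ω.2.2.2.2.1, ω.2.2.2.2.2.1)))
        - Real.log (dist p (fun ω => (ω.1, ω.2.1)) (ω.1, ω.2.1)) := by
  subst hpd
  have hp := isPMF_jointLaw hq hr hW
  have h1 := dist_pos hp (fun ω => ((ω.1, ω.2.1),
          f (ω.2.2.1, ω.2.2.2.1, ω.2.2.2.2.1, ω.2.2.2.2.2.1))) h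
  have h2 := dist_pos hp (fun ω => (ω.1, ω.2.1)) h
  rw [dist_jointLaw hW f] at h1 ⊢
  rw [dist_jointLaw_source hr hW] at h2 ⊢
  have h3 := pos_of_mul_pos_right h1 h2.le
  exact ⟨h3, by rw [Real.log_mul h2.ne' h3.ne']; ring⟩

/-- Block form of the joint law: averages over source, codewords, input and output blocks are
averages over blocks of the joint sample space. -/
lemma sum_jointLaw_block (n : ℕ) (F : (Fin n → σ1 × σ2) → (Fin n → 𝒰0) → (Fin n → 𝒰1) →
      (Fin n → 𝒰2) → (Fin n → 𝒴1 × 𝒴2) → ℝ) :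
    ∑ s : Fin n → σ1 × σ2, (∏ i, q (s i)) * ∑ u, ∑ a, ∑ b, ∑ x : Fin n → 𝒳, ∑ y,
      (∏ i, r (s i) (u i, a i, b i, x i)) * (∏ i, W (x i) (y i)) * F s u a b y
      = ∑ ω : Fin n → σ1 × σ2 × 𝒰0 × 𝒰1 × 𝒰2 × 𝒳 × 𝒴1 × 𝒴2, (∏ i, jointLaw q r W (ω i)) *
        F (fun i => ((ω i).1, (ω i).2.1)) (fun i => (ω i).2.2.1) (fun i => (ω i).2.2.2.1)
          (fun i => (ω i).2.2.2.2.1)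
          (fun i => ((ω i).2.2.2.2.2.2.1, (ω i).2.2.2.2.2.2.2)) := by
  simp only [sum_arrow_prod, jointLaw, Finset.mul_sum, Finset.prod_mul_distrib, mul_assoc]

lemma dist_injective {Ω A : Type*} [Fintype Ω] [Fintype A] {p : Ω → ℝ} (X : Ω → A)
    (hX : Function.Injective X) (ω : Ω) : dist p X (X ω) = p ω := by
  simp [dist, hX.eq_iff]

/-- Marginals of a product of conditional pmfs. -/
lemma marg0 (n : ℕ) (s : Fin n → σ1 × σ2) (u : Fin n → 𝒰0) :
    ∑ a : Fin n → 𝒰1, ∑ b : Fin n → 𝒰2, ∑ x : Fin n → 𝒳, ∏ i, r (s i) (u i, a i, b i, x i)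
      = ∏ i, dist (r (s i)) (fun v => v.1) (u i) := by
  rw [sum_prod_eq3 (fun i a b x => r (s i) (u i, a, b, x))]
  refine Finset.prod_congr rfl fun i _ => ?_
  rw [← sum_dist_snd (fun v : 𝒰0 × 𝒰1 × 𝒰2 × 𝒳 => v.1) (fun v => v.2)]
  simp only [Fintype.sum_prod_type]
  refine Finset.sum_congr rfl fun a _ => Finset.sum_congr rfl fun b _ => Finset.sum_congr rfl fun x _ => ?_
  exact (dist_injective (fun v : 𝒰0 × 𝒰1 × 𝒰2 × 𝒳 => (v.1, v.2)) (by
    rintro ⟨_, _, _, _⟩ ⟨_, _, _, _⟩ h; simp only [Prod.mk.injEq] at h ⊢; tauto) (u i, a, b, x)).symm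

lemma marg1 (n : ℕ) (s : Fin n → σ1 × σ2) (u : Fin n → 𝒰0) (a : Fin n → 𝒰1) :
    ∑ b : Fin n → 𝒰2, ∑ x : Fin n → 𝒳, ∏ i, r (s i) (u i, a i, b i, x i)
      = ∏ i, dist (r (s i)) (fun v => (v.1, v.2.1)) (u i, a i) := by
  rw [sum_prod_eq2 (fun i b x => r (s i) (u i, a i, b, x))]
  refine Finset.prod_congr rfl fun i _ => ?_
  rw [← sum_dist_snd (fun v : 𝒰0 × 𝒰1 × 𝒰2 × 𝒳 => (v.1, v.2.1)) (fun v => v.2.2)]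
  simp only [Fintype.sum_prod_type]
  refine Finset.sum_congr rfl fun b _ => Finset.sum_congr rfl fun x _ => ?_
  exact (dist_injective (fun v : 𝒰0 × 𝒰1 × 𝒰2 × 𝒳 => ((v.1, v.2.1), v.2.2)) (by
    rintro ⟨_, _, _, _⟩ ⟨_, _, _, _⟩ h; simp only [Prod.mk.injEq] at h ⊢; tauto) (u i, a i, b, x)).symm

lemma marg2 (n : ℕ) (s : Fin n → σ1 × σ2) (u : Fin n → 𝒰0) (b : Fin n → 𝒰2) :
    ∑ a : Fin n → 𝒰1, ∑ x : Fin n → 𝒳, ∏ i, r (s i) (u i, a i, b i, x i)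
      = ∏ i, dist (r (s i)) (fun v => (v.1, v.2.2.1)) (u i, b i) := by
  rw [sum_prod_eq2 (fun i a x => r (s i) (u i, a, b i, x))]
  refine Finset.prod_congr rfl fun i _ => ?_
  rw [← sum_dist_snd (fun v : 𝒰0 × 𝒰1 × 𝒰2 × 𝒳 => (v.1, v.2.2.1)) (fun v => (v.2.1, v.2.2.2))]
  simp only [Fintype.sum_prod_type]
  refine Finset.sum_congr rfl fun a _ => Finset.sum_congr rfl fun x _ => ?_
  exact (dist_injective (fun v : 𝒰0 × 𝒰1 × 𝒰2 × 𝒳 => ((v.1, v.2.2.1), v.2.1, v.2.2.2)) (by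
    rintro ⟨_, _, _, _⟩ ⟨_, _, _, _⟩ h; simp only [Prod.mk.injEq] at h ⊢; tauto) (u i, a, b i, x)).symm

lemma marg3 (n : ℕ) (s : Fin n → σ1 × σ2) (u : Fin n → 𝒰0) (a : Fin n → 𝒰1) (b : Fin n → 𝒰2) :
    ∑ x : Fin n → 𝒳, ∏ i, r (s i) (u i, a i, b i, x i)
      = ∏ i, dist (r (s i)) (fun v => (v.1, v.2.1, v.2.2.1)) (u i, a i, b i) := by
  rw [sum_prod_eq (fun i x => r (s i) (u i, a i, b i, x))]
  refine Finset.prod_congr rfl fun i _ => ?_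
  rw [← sum_dist_snd (fun v : 𝒰0 × 𝒰1 × 𝒰2 × 𝒳 => (v.1, v.2.1, v.2.2.1)) (fun v => v.2.2.2)]
  refine Finset.sum_congr rfl fun x _ => ?_
  exact (dist_injective (fun v : 𝒰0 × 𝒰1 × 𝒰2 × 𝒳 => ((v.1, v.2.1, v.2.2.1), v.2.2.2)) (by
    rintro ⟨_, _, _, _⟩ ⟨_, _, _, _⟩ h; simp only [Prod.mk.injEq] at h ⊢; tauto) (u i, a i, b i, x)).symm

end Joint

end CSBC

/-! ### The test of the sender -/

namespace CSBC

section Sender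

variable {σ1 σ2 𝒰0 𝒰1 𝒰2 𝒳 𝒴1 𝒴2 : Type*} [Fintype σ1] [Fintype σ2] [Fintype 𝒰0] [Fintype 𝒰1]
  [Fintype 𝒰2] [Fintype 𝒳] [Fintype 𝒴1] [Fintype 𝒴2]
  {q : σ1 × σ2 → ℝ} {r : σ1 × σ2 → 𝒰0 × 𝒰1 × 𝒰2 × 𝒳 → ℝ} {W : 𝒳 → 𝒴1 × 𝒴2 → ℝ}

/-- The sender's test: given the source block `s`, the target law `r` of `(u, a, b)` and of its
sub-tuples containing `u` exceeds the law `P0 · Q1 · Q2` of the random code by at most the stated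
exponential factors. -/
def sendTest (r : σ1 × σ2 → 𝒰0 × 𝒰1 × 𝒰2 × 𝒳 → ℝ) (P0 : 𝒰0 → ℝ) (Q1 : σ1 × 𝒰0 → 𝒰1 → ℝ)
    (Q2 : σ2 × 𝒰0 → 𝒰2 → ℝ) (n : ℕ) (c0 c1 c2 c3 : ℝ)
    (s : Fin n → σ1 × σ2) (u : Fin n → 𝒰0) (a : Fin n → 𝒰1) (b : Fin n → 𝒰2) : Prop :=
  (∏ i, dist (r (s i)) (fun v => v.1) (u i) ≤ Real.exp (n * c0) * ∏ i, P0 (u i)) ∧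
  (∏ i, dist (r (s i)) (fun v => (v.1, v.2.1)) (u i, a i)
    ≤ Real.exp (n * c1) * ∏ i, P0 (u i) * Q1 ((s i).1, u i) (a i)) ∧
  (∏ i, dist (r (s i)) (fun v => (v.1, v.2.2.1)) (u i, b i)
    ≤ Real.exp (n * c2) * ∏ i, P0 (u i) * Q2 ((s i).2, u i) (b i)) ∧
  (∏ i, dist (r (s i)) (fun v => (v.1, v.2.1, v.2.2.1)) (u i, a i, b i)
    ≤ Real.exp (n * c3) *
      ∏ i, P0 (u i) * Q1 ((s i).1, u i) (a i) * Q2 ((s i).2, u i) (b i))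

/-- Codewords generated jointly with the source pass the sender's test with probability tending
to one. -/
lemma send_typical (hq : IsPMF q) (hr : ∀ s, IsPMF (r s)) (hW : ∀ x, IsPMF (W x))
    {p : σ1 × σ2 × 𝒰0 × 𝒰1 × 𝒰2 × 𝒳 × 𝒴1 × 𝒴2 → ℝ} (hpd : p = jointLaw q r W)
    {c0 c1 c2 c3 : ℝ}
    (h0 : cov0 p (fun ω => (ω.1, ω.2.1)) (fun ω => ω.2.2.1) < c0)
    (h1 : cov1 p (fun ω => (ω.1, ω.2.1)) (fun ω => ω.1) (fun ω => ω.2.2.1)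
      (fun ω => ω.2.2.2.1) < c1)
    (h2 : cov1 p (fun ω => (ω.1, ω.2.1)) (fun ω => ω.2.1) (fun ω => ω.2.2.1)
      (fun ω => ω.2.2.2.2.1) < c2)
    (h3 : cov3 p (fun ω => (ω.1, ω.2.1)) (fun ω => ω.1) (fun ω => ω.2.1) (fun ω => ω.2.2.1)
      (fun ω => ω.2.2.2.1) (fun ω => ω.2.2.2.2.1) < c3) :
    Tendsto (fun n : ℕ => ∑ ω : Fin n → σ1 × σ2 × 𝒰0 × 𝒰1 × 𝒰2 × 𝒳 × 𝒴1 × 𝒴2, (∏ i, p (ω i)) *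
      ind (¬ sendTest r (dist p (fun ω => ω.2.2.1))
        (condP p (fun ω => (ω.1, ω.2.2.1)) (fun ω => ω.2.2.2.1))
        (condP p (fun ω => (ω.2.1, ω.2.2.1)) (fun ω => ω.2.2.2.2.1)) n c0 c1 c2 c3
        (fun i => ((ω i).1, (ω i).2.1)) (fun i => (ω i).2.2.1) (fun i => (ω i).2.2.2.1)
        (fun i => (ω i).2.2.2.2.1))) atTop (nhds 0) := by
  have hp : IsPMF p := hpd ▸ isPMF_jointLaw hq hr hW
  have e1 : H p (fun ω => ((ω.1, ω.2.2.1), ω.2.2.2.1)) =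
      H p (fun ω => (ω.1, ω.2.2.1, ω.2.2.2.1)) :=
    H_congr _ _ (by intros; simp only [Prod.mk.injEq]; tauto)
  have e2 : H p (fun ω => ((ω.2.1, ω.2.2.1), ω.2.2.2.2.1)) =
      H p (fun ω => (ω.2.1, ω.2.2.1, ω.2.2.2.2.1)) :=
    H_congr _ _ (by intros; simp only [Prod.mk.injEq]; tauto)
  have pU := fun {ω} => dist_pos (ω := ω) hp (fun ω => ω.2.2.1)
  have pc1 := fun {ω} => condP_pos (ω := ω) hp (fun ω => (ω.1, ω.2.2.1)) (fun ω => ω.2.2.2.1)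
  have pc2 := fun {ω} => condP_pos (ω := ω) hp (fun ω => (ω.2.1, ω.2.2.1)) (fun ω => ω.2.2.2.2.1)
  have lc1 := fun {ω} => log_condP (ω := ω) hp (fun ω => (ω.1, ω.2.2.1)) (fun ω => ω.2.2.2.1)
  have lc2 := fun {ω} => log_condP (ω := ω) hp (fun ω => (ω.2.1, ω.2.2.1)) (fun ω => ω.2.2.2.2.1)
  have lr0 := fun {ω} => log_dist_r hq hr hW hpd (fun v => v.1) (ω := ω)
  have lr1 := fun {ω} => log_dist_r hq hr hW hpd (fun v => (v.1, v.2.1)) (ω := ω)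
  have lr2 := fun {ω} => log_dist_r hq hr hW hpd (fun v => (v.1, v.2.2.1)) (ω := ω)
  have lr3 := fun {ω} => log_dist_r hq hr hW hpd (fun v => (v.1, v.2.1, v.2.2.1)) (ω := ω)
  have t0 := lln hp (fun ω => dist (r (ω.1, ω.2.1)) (fun v => v.1) ω.2.2.1)
    (fun ω => dist p (fun ω => ω.2.2.1) ω.2.2.1)
    (fun ω => (Real.log (dist p (fun ω => ((ω.1, ω.2.1), ω.2.2.1)) ((ω.1, ω.2.1), ω.2.2.1))
      - Real.log (dist p (fun ω => (ω.1, ω.2.1)) (ω.1, ω.2.1)))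
      - Real.log (dist p (fun ω => ω.2.2.1) ω.2.2.1)) (c := c0)
    (fun ω h => ⟨(lr0 h).1, pU h, by rw [(lr0 h).2]⟩)
    (by
      rw [Ex_sub, Ex_sub, Ex_log_dist (p := p) (fun ω => ((ω.1, ω.2.1), ω.2.2.1)),
        Ex_log_dist (p := p) (fun ω => (ω.1, ω.2.1)), Ex_log_dist (p := p) (fun ω => ω.2.2.1)]
      unfold cov0 at h0; linarith)
  have t1 := lln hp
    (fun ω => dist (r (ω.1, ω.2.1)) (fun v => (v.1, v.2.1)) (ω.2.2.1, ω.2.2.2.1))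
    (fun ω => dist p (fun ω => ω.2.2.1) ω.2.2.1 *
      condP p (fun ω => (ω.1, ω.2.2.1)) (fun ω => ω.2.2.2.1) (ω.1, ω.2.2.1) ω.2.2.2.1)
    (fun ω => (Real.log (dist p (fun ω => ((ω.1, ω.2.1), ω.2.2.1, ω.2.2.2.1))
        ((ω.1, ω.2.1), ω.2.2.1, ω.2.2.2.1))
      - Real.log (dist p (fun ω => (ω.1, ω.2.1)) (ω.1, ω.2.1)))
      - (Real.log (dist p (fun ω => ω.2.2.1) ω.2.2.1)
        + (Real.log (dist p (fun ω => ((ω.1, ω.2.2.1), ω.2.2.2.1)) ((ω.1, ω.2.2.1), ω.2.2.2.1))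
          - Real.log (dist p (fun ω => (ω.1, ω.2.2.1)) (ω.1, ω.2.2.1))))) (c := c1)
    (fun ω h => ⟨(lr1 h).1, mul_pos (pU h) (pc1 h), by
      rw [(lr1 h).2, Real.log_mul (pU h).ne' (pc1 h).ne', lc1 h]⟩)
    (by
      rw [Ex_sub, Ex_sub, Ex_add, Ex_sub,
        Ex_log_dist (p := p) (fun ω => ((ω.1, ω.2.1), ω.2.2.1, ω.2.2.2.1)),
        Ex_log_dist (p := p) (fun ω => (ω.1, ω.2.1)), Ex_log_dist (p := p) (fun ω => ω.2.2.1),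
        Ex_log_dist (p := p) (fun ω => ((ω.1, ω.2.2.1), ω.2.2.2.1)), e1,
        Ex_log_dist (p := p) (fun ω => (ω.1, ω.2.2.1))]
      unfold cov1 at h1; linarith)
  have t2 := lln hp
    (fun ω => dist (r (ω.1, ω.2.1)) (fun v => (v.1, v.2.2.1)) (ω.2.2.1, ω.2.2.2.2.1))
    (fun ω => dist p (fun ω => ω.2.2.1) ω.2.2.1 *
      condP p (fun ω => (ω.2.1, ω.2.2.1)) (fun ω => ω.2.2.2.2.1) (ω.2.1, ω.2.2.1) ω.2.2.2.2.1)
    (fun ω => (Real.log (dist p (fun ω => ((ω.1, ω.2.1), ω.2.2.1, ω.2.2.2.2.1))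
        ((ω.1, ω.2.1), ω.2.2.1, ω.2.2.2.2.1))
      - Real.log (dist p (fun ω => (ω.1, ω.2.1)) (ω.1, ω.2.1)))
      - (Real.log (dist p (fun ω => ω.2.2.1) ω.2.2.1)
        + (Real.log (dist p (fun ω => ((ω.2.1, ω.2.2.1), ω.2.2.2.2.1))
            ((ω.2.1, ω.2.2.1), ω.2.2.2.2.1))
          - Real.log (dist p (fun ω => (ω.2.1, ω.2.2.1)) (ω.2.1, ω.2.2.1))))) (c := c2)
    (fun ω h => ⟨(lr2 h).1, mul_pos (pU h) (pc2 h), by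
      rw [(lr2 h).2, Real.log_mul (pU h).ne' (pc2 h).ne', lc2 h]⟩)
    (by
      rw [Ex_sub, Ex_sub, Ex_add, Ex_sub,
        Ex_log_dist (p := p) (fun ω => ((ω.1, ω.2.1), ω.2.2.1, ω.2.2.2.2.1)),
        Ex_log_dist (p := p) (fun ω => (ω.1, ω.2.1)), Ex_log_dist (p := p) (fun ω => ω.2.2.1),
        Ex_log_dist (p := p) (fun ω => ((ω.2.1, ω.2.2.1), ω.2.2.2.2.1)), e2,
        Ex_log_dist (p := p) (fun ω => (ω.2.1, ω.2.2.1))]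
      unfold cov1 at h2; linarith)
  have t3 := lln hp
    (fun ω => dist (r (ω.1, ω.2.1)) (fun v => (v.1, v.2.1, v.2.2.1))
      (ω.2.2.1, ω.2.2.2.1, ω.2.2.2.2.1))
    (fun ω => dist p (fun ω => ω.2.2.1) ω.2.2.1 *
      condP p (fun ω => (ω.1, ω.2.2.1)) (fun ω => ω.2.2.2.1) (ω.1, ω.2.2.1) ω.2.2.2.1 *
      condP p (fun ω => (ω.2.1, ω.2.2.1)) (fun ω => ω.2.2.2.2.1) (ω.2.1, ω.2.2.1) ω.2.2.2.2.1)
    (fun ω => (Real.log (dist p (fun ω => ((ω.1, ω.2.1), ω.2.2.1, ω.2.2.2.1, ω.2.2.2.2.1))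
        ((ω.1, ω.2.1), ω.2.2.1, ω.2.2.2.1, ω.2.2.2.2.1))
      - Real.log (dist p (fun ω => (ω.1, ω.2.1)) (ω.1, ω.2.1)))
      - (Real.log (dist p (fun ω => ω.2.2.1) ω.2.2.1)
        + (Real.log (dist p (fun ω => ((ω.1, ω.2.2.1), ω.2.2.2.1)) ((ω.1, ω.2.2.1), ω.2.2.2.1))
          - Real.log (dist p (fun ω => (ω.1, ω.2.2.1)) (ω.1, ω.2.2.1)))
        + (Real.log (dist p (fun ω => ((ω.2.1, ω.2.2.1), ω.2.2.2.2.1))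
            ((ω.2.1, ω.2.2.1), ω.2.2.2.2.1))
          - Real.log (dist p (fun ω => (ω.2.1, ω.2.2.1)) (ω.2.1, ω.2.2.1))))) (c := c3)
    (fun ω h => ⟨(lr3 h).1, mul_pos (mul_pos (pU h) (pc1 h)) (pc2 h), by
      rw [(lr3 h).2, Real.log_mul (mul_pos (pU h) (pc1 h)).ne' (pc2 h).ne',
        Real.log_mul (pU h).ne' (pc1 h).ne', lc1 h, lc2 h]⟩)
    (by
      rw [Ex_sub, Ex_sub, Ex_add, Ex_add, Ex_sub, Ex_sub,
        Ex_log_dist (p := p) (fun ω => ((ω.1, ω.2.1), ω.2.2.1, ω.2.2.2.1, ω.2.2.2.2.1)),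
        Ex_log_dist (p := p) (fun ω => (ω.1, ω.2.1)), Ex_log_dist (p := p) (fun ω => ω.2.2.1),
        Ex_log_dist (p := p) (fun ω => ((ω.1, ω.2.2.1), ω.2.2.2.1)), e1,
        Ex_log_dist (p := p) (fun ω => (ω.1, ω.2.2.1)),
        Ex_log_dist (p := p) (fun ω => ((ω.2.1, ω.2.2.1), ω.2.2.2.2.1)), e2,
        Ex_log_dist (p := p) (fun ω => (ω.2.1, ω.2.2.1))]
      unfold cov3 at h3; linarith)
  have ht := t0.add (t1.add (t2.add t3))
  simp only [add_zero] at ht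
  refine squeeze_zero (fun n => Finset.sum_nonneg fun ω _ =>
    mul_nonneg (Finset.prod_nonneg fun i _ => hp.1 _) (ind_nonneg _)) (fun n => ?_) ht
  simp only [← Finset.sum_add_distrib]
  refine Finset.sum_le_sum fun ω _ => ?_
  simp only [← mul_add]
  refine mul_le_mul_of_nonneg_left ?_ (Finset.prod_nonneg fun i _ => hp.1 _)
  exact (ind_not_and_le _ _).trans (add_le_add le_rfl ((ind_not_and_le _ _).trans
    (add_le_add le_rfl (ind_not_and_le _ _))))

end Sender

end CSBC

/-! ### Block codes -/

namespace CSBC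

section Numeric

/-- Size of a codebook of rate `R` and block length `n`; the summand `1` keeps it nonempty. -/
def size (n : ℕ) (R : ℝ) : ℕ := ⌊Real.exp (n * R)⌋₊ + 1

instance (n : ℕ) (R : ℝ) : Nonempty (Fin (size n R)) := ⟨⟨0, Nat.succ_pos _⟩⟩

lemma exp_le_size (n : ℕ) (R : ℝ) : Real.exp (n * R) ≤ size n R := by
  unfold size; push_cast; exact (Nat.lt_floor_add_one _).le

lemma size_le (n : ℕ) {R : ℝ} (hR : 0 ≤ R) : (size n R : ℝ) ≤ 2 * Real.exp (n * R) := by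
  unfold size; push_cast
  have h1 := Nat.floor_le (Real.exp_pos (n * R)).le
  have h2 := Real.one_le_exp (show (0 : ℝ) ≤ n * R by positivity)
  linarith

lemma exp_div_le {n : ℕ} {A R δ M : ℝ} (h : A + 3 * δ ≤ R) (hM : Real.exp (n * R) ≤ M) :
    Real.exp (n * (A + δ)) / M ≤ Real.exp (-(n * δ)) * Real.exp (-(n * δ)) := by
  have hn : (0 : ℝ) ≤ n := Nat.cast_nonneg n
  have hM0 := (Real.exp_pos (n * R)).trans_le hM
  rw [div_le_iff₀ hM0]
  refine le_trans ?_ (mul_le_mul_of_nonneg_left hM (by positivity))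
  rw [← Real.exp_add, ← Real.exp_add, Real.exp_le_exp]
  nlinarith [mul_le_mul_of_nonneg_left h hn]

lemma exp_mul_le {n : ℕ} {B R δ k M : ℝ} (hk : 0 ≤ k) (hδ : 0 < δ) (h : R + 3 * δ ≤ B)
    (hM : M ≤ k * Real.exp (n * R)) :
    M * Real.exp (n * (-B + δ)) ≤ k * Real.exp (-(n * δ)) := by
  have hn : (0 : ℝ) ≤ n := Nat.cast_nonneg n
  refine (mul_le_mul_of_nonneg_right hM (Real.exp_pos _).le).trans ?_
  rw [mul_assoc, ← Real.exp_add]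
  refine mul_le_mul_of_nonneg_left (Real.exp_le_exp.2 ?_) hk
  nlinarith [mul_le_mul_of_nonneg_left h hn, mul_nonneg hn hδ.le]

/-- With rates as in `exists_rates`, the error terms due to the random code are exponentially
small. -/
lemma code_terms_le (n : ℕ) {A0 A1 A2 A3 B1 B2 C1 C2 R0 R1 R2 ρ1 ρ2 δ : ℝ} (hR0 : 0 ≤ R0)
    (hR1 : 0 ≤ R1) (hR2 : 0 ≤ R2) (hρ1 : 0 ≤ ρ1) (hρ2 : 0 ≤ ρ2) (hδ : 0 < δ)
    (c0 : A0 + 3 * δ ≤ R0) (c1 : A1 + 3 * δ ≤ R0 + R1) (c2 : A2 + 3 * δ ≤ R0 + R2)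
    (c3 : A3 + 3 * δ ≤ R0 + R1 + R2) (d1 : R1 - ρ1 + 3 * δ ≤ B1) (d2 : R2 - ρ2 + 3 * δ ≤ B2)
    (d1' : R0 + R1 + ρ2 + 3 * δ ≤ C1) (d2' : R0 + R2 + ρ1 + 3 * δ ≤ C2) :
    Real.exp (-(n * δ)) + (Real.exp (n * (A0 + δ)) / (size n R0 : ℝ)
      + Real.exp (n * (A1 + δ)) / ((size n R0 : ℝ) * (size n R1 : ℝ))
      + Real.exp (n * (A2 + δ)) / ((size n R0 : ℝ) * (size n R2 : ℝ))
      + Real.exp (n * (A3 + δ)) / ((size n R0 : ℝ) * (size n R1 : ℝ) * (size n R2 : ℝ)))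
        / Real.exp (-(n * δ))
      + ((size n R1 : ℝ) * Real.exp (n * (-B1 + δ)) / (size n ρ1 : ℝ)
        + (size n ρ2 : ℝ) * (size n R0 : ℝ) * (size n R1 : ℝ) * Real.exp (n * (-C1 + δ)))
      + ((size n R2 : ℝ) * Real.exp (n * (-B2 + δ)) / (size n ρ2 : ℝ)
        + (size n ρ1 : ℝ) * (size n R0 : ℝ) * (size n R2 : ℝ) * Real.exp (n * (-C2 + δ)))
      ≤ 25 * Real.exp (-(n * δ)) := by
  have pos : ∀ R, (0 : ℝ) < size n R := fun R => (Real.exp_pos _).trans_le (exp_le_size n R)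
  have lo := exp_le_size n
  have x2 : ∀ a b : ℝ, Real.exp (n * (a + b)) = Real.exp (n * a) * Real.exp (n * b) := fun a b => by
    rw [mul_add, Real.exp_add]
  have lo2 : ∀ a b, Real.exp (n * (a + b)) ≤ (size n a : ℝ) * (size n b : ℝ) := fun a b => by
    rw [x2]; exact mul_le_mul (lo a) (lo b) (Real.exp_pos _).le (pos a).le
  have lo3 : Real.exp (n * (R0 + R1 + R2)) ≤ (size n R0 : ℝ) * (size n R1 : ℝ) * (size n R2 : ℝ) := by
    rw [x2]; exact mul_le_mul (lo2 _ _) (lo _) (Real.exp_pos _).le (mul_pos (pos _) (pos _)).le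
  have hi3 : ∀ a b c : ℝ, 0 ≤ a → 0 ≤ b → 0 ≤ c → (size n a : ℝ) * (size n b : ℝ) * (size n c : ℝ)
      ≤ 8 * Real.exp (n * (b + c + a)) := fun a b c ha hb hc => by
    rw [x2, x2]
    calc (size n a : ℝ) * (size n b : ℝ) * (size n c : ℝ)
        ≤ (2 * Real.exp (n * a)) * (2 * Real.exp (n * b)) * (2 * Real.exp (n * c)) := by
          gcongr
          exacts [size_le n ha, size_le n hb, size_le n hc]
      _ = _ := by ring
  have hidiv : ∀ a b : ℝ, 0 ≤ a → (size n a : ℝ) / (size n b : ℝ) ≤ 2 * Real.exp (n * (a - b)) :=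
    fun a b ha => by
    rw [div_le_iff₀ (pos b), mul_assoc]
    refine (size_le n ha).trans (mul_le_mul_of_nonneg_left ?_ (by norm_num))
    refine le_trans (le_of_eq ?_) (mul_le_mul_of_nonneg_left (lo b) (Real.exp_pos _).le)
    rw [← x2, sub_add_cancel]
  have k0 := exp_div_le c0 (lo R0)
  have k1 := exp_div_le c1 (lo2 R0 R1)
  have k2 := exp_div_le c2 (lo2 R0 R2)
  have k3 := exp_div_le c3 lo3
  have k4 := exp_mul_le (by norm_num) hδ d1 (hidiv R1 ρ1 hR1)
  have k5 := exp_mul_le (by norm_num) hδ d2 (hidiv R2 ρ2 hR2)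
  have k6 := exp_mul_le (by norm_num) hδ d1' (hi3 ρ2 R0 R1 hρ2 hR0 hR1)
  have k7 := exp_mul_le (by norm_num) hδ d2' (hi3 ρ1 R0 R2 hρ1 hR0 hR2)
  have k8 : (Real.exp (n * (A0 + δ)) / (size n R0 : ℝ)
      + Real.exp (n * (A1 + δ)) / ((size n R0 : ℝ) * (size n R1 : ℝ))
      + Real.exp (n * (A2 + δ)) / ((size n R0 : ℝ) * (size n R2 : ℝ))
      + Real.exp (n * (A3 + δ)) / ((size n R0 : ℝ) * (size n R1 : ℝ) * (size n R2 : ℝ)))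
        / Real.exp (-(n * δ)) ≤ 4 * Real.exp (-(n * δ)) := by
    rw [div_le_iff₀ (Real.exp_pos _)]; linarith
  rw [div_mul_eq_mul_div] at k4 k5
  linarith

end Numeric

section Block

variable {σ1 σ2 𝒰0 𝒰1 𝒰2 𝒳 𝒴1 𝒴2 : Type} [Fintype σ1] [Fintype σ2] [Fintype 𝒰0] [Fintype 𝒰1]
  [Fintype 𝒰2] [Fintype 𝒳] [Fintype 𝒴1] [Fintype 𝒴2]
  {q : σ1 × σ2 → ℝ} {r : σ1 × σ2 → 𝒰0 × 𝒰1 × 𝒰2 × 𝒳 → ℝ} {W : 𝒳 → 𝒴1 × 𝒴2 → ℝ}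

/-- The one-shot coding theorem applied to blocks of length `n`. -/
lemma block_code [Nonempty σ1] [Nonempty σ2] [Nonempty 𝒳]
    (hq : IsPMF q) (hr : ∀ s, IsPMF (r s)) (hW : ∀ x, IsPMF (W x))
    {p : σ1 × σ2 × 𝒰0 × 𝒰1 × 𝒰2 × 𝒳 × 𝒴1 × 𝒴2 → ℝ} (hpd : p = jointLaw q r W) (n : ℕ)
    {A0 A1 A2 A3 B1 B2 C1 C2 R0 R1 R2 ρ1 ρ2 δ : ℝ} (hR0 : 0 ≤ R0)
    (hR1 : 0 ≤ R1) (hR2 : 0 ≤ R2) (hρ1 : 0 ≤ ρ1) (hρ2 : 0 ≤ ρ2) (hδ : 0 < δ)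
    (c0 : A0 + 3 * δ ≤ R0) (c1 : A1 + 3 * δ ≤ R0 + R1) (c2 : A2 + 3 * δ ≤ R0 + R2)
    (c3 : A3 + 3 * δ ≤ R0 + R1 + R2) (d1 : R1 - ρ1 + 3 * δ ≤ B1) (d2 : R2 - ρ2 + 3 * δ ≤ B2)
    (d1' : R0 + R1 + ρ2 + 3 * δ ≤ C1) (d2' : R0 + R2 + ρ1 + 3 * δ ≤ C2) :
    ∃ enc dec1 dec2, errProb q W n enc dec1 dec2 ≤
      (∑ ω : Fin n → σ1 × σ2 × 𝒰0 × 𝒰1 × 𝒰2 × 𝒳 × 𝒴1 × 𝒴2, (∏ i, p (ω i)) *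
        ind (¬ sendTest r (dist p (fun ω => ω.2.2.1))
        (condP p (fun ω => (ω.1, ω.2.2.1)) (fun ω => ω.2.2.2.1))
        (condP p (fun ω => (ω.2.1, ω.2.2.1)) (fun ω => ω.2.2.2.2.1)) n
        (A0 + δ) (A1 + δ) (A2 + δ) (A3 + δ)
        (fun i => ((ω i).1, (ω i).2.1)) (fun i => (ω i).2.2.1) (fun i => (ω i).2.2.2.1)
        (fun i => (ω i).2.2.2.2.1)))
      + (∑ ω : Fin n → σ1 × σ2 × 𝒰0 × 𝒰1 × 𝒰2 × 𝒳 × 𝒴1 × 𝒴2, (∏ i, p (ω i)) *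
        ind (¬ recvTest p (fun ω => ω.1) (fun ω => ω.2.2.1) (fun ω => ω.2.2.2.1)
          (fun ω => ω.2.2.2.2.2.2.1) n (-B1 + δ) (-C1 + δ) (fun i => (ω i).1)
          (fun i => (ω i).2.2.1) (fun i => (ω i).2.2.2.1) (fun i => (ω i).2.2.2.2.2.2.1)))
      + (∑ ω : Fin n → σ1 × σ2 × 𝒰0 × 𝒰1 × 𝒰2 × 𝒳 × 𝒴1 × 𝒴2, (∏ i, p (ω i)) *
        ind (¬ recvTest p (fun ω => ω.2.1) (fun ω => ω.2.2.1) (fun ω => ω.2.2.2.2.1)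
          (fun ω => ω.2.2.2.2.2.2.2) n (-B2 + δ) (-C2 + δ) (fun i => (ω i).2.1)
          (fun i => (ω i).2.2.1) (fun i => (ω i).2.2.2.2.1) (fun i => (ω i).2.2.2.2.2.2.2)))
      + 25 * Real.exp (-(n * δ)) := by
  have hp : IsPMF p := hpd ▸ isPMF_jointLaw hq hr hW
  have hQ1 := isPMF_condP hp (fun ω => (ω.1, ω.2.2.1)) (fun ω => ω.2.2.2.1)
  have hQ2 := isPMF_condP hp (fun ω => (ω.2.1, ω.2.2.1)) (fun ω => ω.2.2.2.2.1)
  obtain ⟨enc, dec1, dec2, h⟩ := oneShot (X := Fin n → 𝒳) (S := Fin n → σ1 × σ2)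
    (Y := Fin n → 𝒴1 × 𝒴2) (U0 := Fin n → 𝒰0) (U1 := Fin n → 𝒰1) (U2 := Fin n → 𝒰2)
    (fun s i => (s i).1) (fun s i => (s i).2) (fun y i => (y i).1) (fun y i => (y i).2)
    (q := fun s => ∏ i, q (s i)) (isPMF_pw (P := fun _ : Fin n => q) fun _ => hq)
    (P0 := fun u => ∏ i, dist p (fun ω => ω.2.2.1) (u i))
    (isPMF_pw (P := fun _ : Fin n => dist p (fun ω => ω.2.2.1)) fun _ => isPMF_dist hp _)
    (Q1 := fun (s : Fin n → σ1) (u : Fin n → 𝒰0) (a : Fin n → 𝒰1) => ∏ i, condP p (fun ω => (ω.1, ω.2.2.1)) (fun ω => ω.2.2.2.1)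
      (s i, u i) (a i))
    (fun s u => isPMF_pw (P := fun i : Fin n => condP p (fun ω => (ω.1, ω.2.2.1))
      (fun ω => ω.2.2.2.1) (s i, u i)) fun i => hQ1 _)
    (Q2 := fun (s : Fin n → σ2) (u : Fin n → 𝒰0) (b : Fin n → 𝒰2) => ∏ i, condP p (fun ω => (ω.2.1, ω.2.2.1)) (fun ω => ω.2.2.2.2.1)
      (s i, u i) (b i))
    (fun s u => isPMF_pw (P := fun i : Fin n => condP p (fun ω => (ω.2.1, ω.2.2.1))
      (fun ω => ω.2.2.2.2.1) (s i, u i)) fun i => hQ2 _)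
    (sendTest r (dist p (fun ω => ω.2.2.1))
        (condP p (fun ω => (ω.1, ω.2.2.1)) (fun ω => ω.2.2.2.1))
        (condP p (fun ω => (ω.2.1, ω.2.2.1)) (fun ω => ω.2.2.2.2.1)) n
        (A0 + δ) (A1 + δ) (A2 + δ) (A3 + δ))
    (K := fun s u a b x => ∏ i, r (s i) (u i, a i, b i, x i))
    (fun s u a b x => Finset.prod_nonneg fun i _ => (hr _).1 _)
    (fun s => by
      rw [sum_prod_eq4 (fun i u a b x => r (s i) (u, a, b, x))]
      refine Finset.prod_eq_one fun i _ => ?_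
      have := (hr (s i)).2
      simpa only [Fintype.sum_prod_type] using this)
    (W := fun x y => ∏ i, W (x i) (y i))
    (fun x => isPMF_pw (P := fun i : Fin n => W (x i)) fun i => hW _)
    (Real.exp_pos (n * (A0 + δ))).le (Real.exp_pos (n * (A1 + δ))).le
    (Real.exp_pos (n * (A2 + δ))).le (Real.exp_pos (n * (A3 + δ))).le
    (fun s u a b hT => by rw [marg0]; exact hT.1)
    (fun s u a b hT => by rw [marg1, ← Finset.prod_mul_distrib]; exact hT.2.1)
    (fun s u a b hT => by rw [marg2, ← Finset.prod_mul_distrib]; exact hT.2.2.1)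
    (fun s u a b hT => by
      rw [marg3, ← Finset.prod_mul_distrib, ← Finset.prod_mul_distrib]; exact hT.2.2.2)
    (recvTest p (fun ω => ω.1) (fun ω => ω.2.2.1) (fun ω => ω.2.2.2.1)
          (fun ω => ω.2.2.2.2.2.2.1) n (-B1 + δ) (-C1 + δ))
    (recvTest p (fun ω => ω.2.1) (fun ω => ω.2.2.1) (fun ω => ω.2.2.2.2.1)
          (fun ω => ω.2.2.2.2.2.2.2) n (-B2 + δ) (-C2 + δ))
    (recv_count hp _ _ _ _ n _ _) (recv_count' hp _ _ _ _ n _ _)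
    (recv_count hp _ _ _ _ n _ _) (recv_count' hp _ _ _ _ n _ _)
    (Real.exp_pos _).le (Real.exp_pos _).le (Real.exp_pos _).le (Real.exp_pos _).le
    (Real.exp_pos (-(n * δ))) (Fin (size n ρ1)) (Fin (size n ρ2)) (Fin (size n R0))
    (Fin (size n R1)) (Fin (size n R2))
  refine ⟨enc, dec1, dec2, ?_⟩
  have eL : errProb q W n enc dec1 dec2 = ∑ s : Fin n → σ1 × σ2, (∏ i, q (s i)) *
      ∑ y : Fin n → 𝒴1 × 𝒴2,
      (∏ i, W (enc s i) (y i)) * ind (¬ (dec1 (fun i => (y i).1) = (fun i => (s i).1) ∧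
        dec2 (fun i => (y i).2) = (fun i => (s i).2))) := by
    unfold errProb
    refine Finset.sum_congr rfl fun s _ => ?_
    rw [Finset.mul_sum]
    refine Finset.sum_congr rfl fun y _ => ?_
    rw [mul_assoc]
    congr 2
    by_cases hc : dec1 (fun i => (y i).1) = (fun i => (s i).1) ∧
        dec2 (fun i => (y i).2) = (fun i => (s i).2)
    · rw [if_pos hc, ind_of_not (not_not.2 hc)]
    · rw [if_neg hc, ind_of hc]
  have e0 := sum_jointLaw_block (q := q) (r := r) (W := W) n (fun s u a b _ =>
    ind (¬ sendTest r (dist p (fun ω => ω.2.2.1))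
        (condP p (fun ω => (ω.1, ω.2.2.1)) (fun ω => ω.2.2.2.1))
        (condP p (fun ω => (ω.2.1, ω.2.2.1)) (fun ω => ω.2.2.2.2.1)) n
        (A0 + δ) (A1 + δ) (A2 + δ) (A3 + δ) s u a b))
  have e1 := sum_jointLaw_block (q := q) (r := r) (W := W) n (fun s u a b y =>
    ind (¬ recvTest p (fun ω => ω.1) (fun ω => ω.2.2.1) (fun ω => ω.2.2.2.1)
          (fun ω => ω.2.2.2.2.2.2.1) n (-B1 + δ) (-C1 + δ) (fun i => (s i).1) u a
          (fun i => (y i).1)))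
  have e2 := sum_jointLaw_block (q := q) (r := r) (W := W) n (fun s u a b y =>
    ind (¬ recvTest p (fun ω => ω.2.1) (fun ω => ω.2.2.1) (fun ω => ω.2.2.2.2.1)
          (fun ω => ω.2.2.2.2.2.2.2) n (-B2 + δ) (-C2 + δ) (fun i => (s i).2) u b
          (fun i => (y i).2)))
  have hWn : ∀ x : Fin n → 𝒳, ∑ y : Fin n → 𝒴1 × 𝒴2, ∏ i, W (x i) (y i) = 1 := fun x =>
    (isPMF_pw (P := fun i : Fin n => W (x i)) fun i => hW _).2
  simp only [mul_right_comm _ (∏ i, W _ _), ← Finset.mul_sum, hWn, mul_one] at e0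
  rw [← hpd] at e0 e1 e2
  rw [eL, ← e0, ← e1, ← e2]
  have hn := code_terms_le n hR0 hR1 hR2 hρ1 hρ2 hδ c0 c1 c2 c3 d1 d2 d1' d2'
  simp only [Fintype.card_fin] at h
  refine h.trans ?_
  linarith

/-- The five inequalities suffice for reliable transmission. -/
lemma reliable_of_MKfive (hq : IsPMF q) (hr : ∀ s, IsPMF (r s)) (hW : ∀ x, IsPMF (W x))
    (h5 : MKfive (jointLaw q r W)
        (fun ω => ω.1) (fun ω => ω.2.1) (fun ω => ω.2.2.1) (fun ω => ω.2.2.2.1)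
        (fun ω => ω.2.2.2.2.1) (fun ω => ω.2.2.2.2.2.2.1) (fun ω => ω.2.2.2.2.2.2.2)) :
    Reliable q W := by
  obtain ⟨p, hpd⟩ : ∃ p, p = jointLaw q r W := ⟨_, rfl⟩
  rw [← hpd] at h5
  have hp : IsPMF p := hpd ▸ isPMF_jointLaw hq hr hW
  have ne : Nonempty (σ1 × σ2 × 𝒰0 × 𝒰1 × 𝒰2 × 𝒳 × 𝒴1 × 𝒴2) := by
    by_contra hne
    rw [not_nonempty_iff] at hne
    have := hp.2
    rw [Finset.univ_eq_empty, Finset.sum_empty] at this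
    exact zero_ne_one this
  obtain ⟨ω0⟩ := ne
  have : Nonempty σ1 := ⟨ω0.1⟩
  have : Nonempty σ2 := ⟨ω0.2.1⟩
  have : Nonempty 𝒳 := ⟨ω0.2.2.2.2.2.1⟩
  obtain ⟨a0, a01, a02, a13, a23, g1, g2, g3, g4, g5⟩ := MKfive_exponents hp _ _ _ _ _ _ _ h5
  obtain ⟨R0, R1, R2, ρ1, ρ2, δ, hR0, hR1, hR2, hρ1, hρ2, hδ, c0, c1, c2, c3, d1, d2, d1', d2'⟩ :=
    exists_rates a0 a13 a23 g1 g2 g3 g4 g5 a01 a02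
  choose enc dec1 dec2 hcode using fun n => block_code hq hr hW hpd n hR0 hR1 hR2 hρ1 hρ2 hδ
    c0 c1 c2 c3 d1 d2 d1' d2'
  refine ⟨enc, dec1, dec2, squeeze_zero (fun n => ?_) hcode ?_⟩
  · unfold errProb
    refine Finset.sum_nonneg fun s _ => Finset.sum_nonneg fun y _ => mul_nonneg (mul_nonneg
      (Finset.prod_nonneg fun i _ => hq.1 _) (Finset.prod_nonneg fun i _ => (hW _).1 _)) ?_
    split_ifs <;> norm_num
  · have t0 := send_typical hq hr hW hpd (lt_add_of_pos_right _ hδ) (lt_add_of_pos_right _ hδ)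
      (lt_add_of_pos_right _ hδ) (lt_add_of_pos_right _ hδ)
    have t1 := recv_typical hp (fun ω => ω.1) (fun ω => ω.2.2.1) (fun ω => ω.2.2.2.1)
      (fun ω => ω.2.2.2.2.2.2.1) _ _ (lt_add_of_pos_right _ hδ) (lt_add_of_pos_right _ hδ)
    have t2 := recv_typical hp (fun ω => ω.2.1) (fun ω => ω.2.2.1) (fun ω => ω.2.2.2.2.1)
      (fun ω => ω.2.2.2.2.2.2.2) _ _ (lt_add_of_pos_right _ hδ) (lt_add_of_pos_right _ hδ)
    have t3 : Tendsto (fun n : ℕ => 25 * Real.exp (-(n * δ))) atTop (nhds 0) := by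
      have h1 : Tendsto (fun n : ℕ => (n : ℝ) * δ) atTop atTop :=
        tendsto_natCast_atTop_atTop.atTop_mul_const hδ
      have h2 := (Real.tendsto_exp_neg_atTop_nhds_zero.comp h1).const_mul 25
      simpa using h2
    have t := ((t0.add t1).add t2).add t3
    simpa only [add_zero] using t

end Block

end CSBC

/-- Theorem 2 of Minero–Kim, achievability.
If there exist finite auxiliary alphabets `𝒰0, 𝒰1, 𝒰2` and a conditional pmf
`r = p(u0,u1,u2,x|s1,s2)` such that under the joint law
`p(s1,s2)·p(u0,u1,u2,x|s1,s2)·p(y1,y2|x)` the five inequalities hold, then the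
sources can be reliably transmitted over the DM-BC `W`. -/
theorem correlated_sources_over_BC
    {σ1 σ2 𝒳 𝒴1 𝒴2 : Type} [Fintype σ1] [Fintype σ2] [Fintype 𝒳]
    [Fintype 𝒴1] [Fintype 𝒴2]
    (q : σ1 × σ2 → ℝ) (hq : IsPMF q)
    (W : 𝒳 → 𝒴1 × 𝒴2 → ℝ) (hW : ∀ x, IsPMF (W x))
    (hyp : ∃ (𝒰0 𝒰1 𝒰2 : Type) (_ : Fintype 𝒰0) (_ : Fintype 𝒰1) (_ : Fintype 𝒰2)
      (r : σ1 × σ2 → 𝒰0 × 𝒰1 × 𝒰2 × 𝒳 → ℝ),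
      (∀ s, IsPMF (r s)) ∧
      MKfive (jointLaw q r W)
        (fun ω => ω.1) (fun ω => ω.2.1) (fun ω => ω.2.2.1) (fun ω => ω.2.2.2.1)
        (fun ω => ω.2.2.2.2.1) (fun ω => ω.2.2.2.2.2.2.1) (fun ω => ω.2.2.2.2.2.2.2)) :
    Reliable q W := by
  obtain ⟨𝒰0, 𝒰1, 𝒰2, _, _, _, r, hr, h5⟩ := hyp
  exact reliable_of_MKfive hq hr hW h5
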